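/- For every integer m ≥ 4 there exists a finite planar ({3,m};5)-graph on 6m+2 vertices, and every finite planar ({3,m};5)-graph has at least 3m+11 vertices; hence 3m+11 ≤ n_p({3,m};5) ≤ 6m+2. -/

import Mathlib

open SimpleGraph

/-- `H` is a minor of `G`: there is an assignment of pairwise disjoint connected
branch sets in `G` to the vertices of `H`, with an edge of `G` between the branch
sets of any two adjacent vertices of `H`. -/
def SimpleGraph.IsMinorOf {W V : Type*} (H : SimpleGraph W) (G : SimpleGraph V) : Prop :=
  ∃ f : W → Set V,
    (∀ w, (G.induce (f w)).Connected) ∧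
    (Pairwise fun w₁ w₂ => Disjoint (f w₁) (f w₂)) ∧
    ∀ ⦃w₁ w₂⦄, H.Adj w₁ w₂ → ∃ v₁ ∈ f w₁, ∃ v₂ ∈ f w₂, G.Adj v₁ v₂

/-- A graph is planar iff it has no `K₅` minor and no `K₃,₃` minor (Wagner's theorem). -/
def SimpleGraph.IsPlanar {V : Type*} (G : SimpleGraph V) : Prop :=
  ¬ (completeGraph (Fin 5)).IsMinorOf G ∧
    ¬ (completeBipartiteGraph (Fin 3) (Fin 3)).IsMinorOf G

/-- A graph is outerplanar iff it has no `K₄` minor and no `K₂,₃` minor. -/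
def SimpleGraph.IsOuterplanar {V : Type*} (G : SimpleGraph V) : Prop :=
  ¬ (completeGraph (Fin 4)).IsMinorOf G ∧
    ¬ (completeBipartiteGraph (Fin 2) (Fin 3)).IsMinorOf G

/-- The degree of a vertex, as the cardinality of its neighbour set. -/
noncomputable def SimpleGraph.degN {V : Type*} (G : SimpleGraph V) (v : V) : ℕ :=
  (G.neighborSet v).ncard

/-- An `({r,m};g)`-graph: girth `g`, every vertex has degree `r` or `m`, both occur. -/
def IsBigirthGraph {V : Type*} (G : SimpleGraph V) (r m g : ℕ) : Prop :=
  G.girth = g ∧ (∀ v, G.degN v = r ∨ G.degN v = m) ∧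
    (∃ v, G.degN v = r) ∧ (∃ v, G.degN v = m)

/-- The set of orders of finite planar `({r,m};g)`-graphs. -/
def bicageOrders (r m g : ℕ) : Set ℕ :=
  {n | ∃ (V : Type) (_ : Fintype V) (G : SimpleGraph V),
    G.IsPlanar ∧ IsBigirthGraph G r m g ∧ Fintype.card V = n}


set_option linter.unusedSectionVars false
set_option linter.unusedSimpArgs false
set_option linter.unusedVariables false
set_option linter.style.haveILetI false

namespace PB

/-! ### Connected vertex sets -/

/-- A nonempty vertex set that cannot be cut. -/
def Conn {V : Type} (G : SimpleGraph V) (A : Set V) : Prop :=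
  A.Nonempty ∧ ∀ X ⊆ A, X.Nonempty → (A \ X).Nonempty → ∃ u ∈ X, ∃ v ∈ A \ X, G.Adj u v

/-- Some edge joins the two sets. -/
def Tch {V : Type} (G : SimpleGraph V) (A B : Set V) : Prop := ∃ u ∈ A, ∃ v ∈ B, G.Adj u v

lemma Tch.symm {V : Type} {G : SimpleGraph V} {A B : Set V} (h : Tch G A B) : Tch G B A := by
  obtain ⟨u, hu, v, hv, h⟩ := h
  exact ⟨v, hv, u, hu, h.symm⟩

lemma Tch.mono {V : Type} {G : SimpleGraph V} {A B A' B' : Set V} (h : Tch G A B) (hA : A ⊆ A')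
    (hB : B ⊆ B') : Tch G A' B' := by
  obtain ⟨u, hu, v, hv, h⟩ := h
  exact ⟨u, hA hu, v, hB hv, h⟩

lemma conn_singleton {V : Type} (G : SimpleGraph V) (a : V) : Conn G {a} := by
  refine ⟨⟨a, rfl⟩, ?_⟩
  rintro X hX ⟨x, hx⟩ ⟨y, hy, hy'⟩
  have h1 : x = a := hX hx
  have h2 : y = a := hy
  exact absurd (h2 ▸ h1 ▸ hx) hy'

lemma Conn.union {V : Type} {G : SimpleGraph V} {A B : Set V} (hA : Conn G A) (hB : Conn G B)
    (h : Tch G A B) : Conn G (A ∪ B) := by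
  refine ⟨hA.1.mono Set.subset_union_left, ?_⟩
  intro X hX hX1 hX2
  by_cases h1 : (X ∩ A).Nonempty ∧ (A \ X).Nonempty
  · obtain ⟨u, hu, v, hv, huv⟩ := hA.2 (X ∩ A) Set.inter_subset_right h1.1
      (by obtain ⟨a, ha, ha'⟩ := h1.2; exact ⟨a, ha, fun h => ha' h.1⟩)
    exact ⟨u, hu.1, v, ⟨Or.inl hv.1, fun h => hv.2 ⟨h, hv.1⟩⟩, huv⟩
  by_cases h2 : (X ∩ B).Nonempty ∧ (B \ X).Nonempty
  · obtain ⟨u, hu, v, hv, huv⟩ := hB.2 (X ∩ B) Set.inter_subset_right h2.1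
      (by obtain ⟨a, ha, ha'⟩ := h2.2; exact ⟨a, ha, fun h => ha' h.1⟩)
    exact ⟨u, hu.1, v, ⟨Or.inr hv.1, fun h => hv.2 ⟨h, hv.1⟩⟩, huv⟩
  obtain ⟨a, ha, b, hb, hab⟩ := h
  have e1 : ∀ x ∈ A, x ∈ X ↔ a ∈ X := by
    intro x hx
    constructor
    · intro hxX
      by_contra hc
      exact h1 ⟨⟨x, hxX, hx⟩, ⟨a, ha, hc⟩⟩
    · intro haX
      by_contra hc
      exact h1 ⟨⟨a, haX, ha⟩, ⟨x, hx, hc⟩⟩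
  have e2 : ∀ x ∈ B, x ∈ X ↔ b ∈ X := by
    intro x hx
    constructor
    · intro hxX
      by_contra hc
      exact h2 ⟨⟨x, hxX, hx⟩, ⟨b, hb, hc⟩⟩
    · intro haX
      by_contra hc
      exact h2 ⟨⟨b, haX, hb⟩, ⟨x, hx, hc⟩⟩
  obtain ⟨x, hx⟩ := hX1
  obtain ⟨y, hy, hyX⟩ := hX2
  by_cases hax : a ∈ X <;> by_cases hbx : b ∈ X
  · rcases hy with hy | hy
    · exact absurd ((e1 y hy).2 hax) hyX
    · exact absurd ((e2 y hy).2 hbx) hyX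
  · exact ⟨a, hax, b, ⟨Or.inr hb, hbx⟩, hab⟩
  · exact ⟨b, hbx, a, ⟨Or.inl ha, hax⟩, hab.symm⟩
  · rcases hX hx with hx' | hx'
    · exact absurd ((e1 x hx').1 hx) hax
    · exact absurd ((e2 x hx').1 hx) hbx

lemma Conn.insert {V : Type} {G : SimpleGraph V} {A : Set V} (hA : Conn G A) {a : V}
    (h : Tch G {a} A) : Conn G (insert a A) := by
  rw [Set.insert_eq]
  exact (conn_singleton G a).union hA h

lemma conn_list {V : Type} {G : SimpleGraph V} : ∀ (l : List V), l ≠ [] → l.IsChain G.Adj →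
    Conn G {v | v ∈ l}
  | [], h, _ => absurd rfl h
  | [a], _, _ => by
    have : {v | v ∈ [a]} = ({a} : Set V) := by ext; simp
    rw [this]; exact conn_singleton G a
  | a :: b :: l, _, h => by
    have h2 := List.isChain_cons_cons.1 h
    have : {v | v ∈ a :: b :: l} = insert a {v | v ∈ b :: l} := by ext; simp
    rw [this]
    exact (conn_list (b :: l) (by simp) h2.2).insert ⟨a, rfl, b, by simp, h2.1⟩

lemma exists_comp {V : Type} (G : SimpleGraph V) {O : Set V} {o : V} (ho : o ∈ O) :
    ∃ D ⊆ O, o ∈ D ∧ Conn G D ∧ ∀ u ∈ D, ∀ v ∈ O, G.Adj u v → v ∈ D := by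
  let R : V → V → Prop := fun u v => G.Adj u v ∧ v ∈ O
  refine ⟨{v | Relation.ReflTransGen R o v}, ?_, Relation.ReflTransGen.refl, ⟨⟨o, Relation.ReflTransGen.refl⟩, ?_⟩, ?_⟩
  · intro v hv
    induction hv with
    | refl => exact ho
    | tail _ h _ => exact h.2
  · intro X hX hX1 hX2
    by_contra hc
    push Not at hc
    have cl : ∀ u v, Relation.ReflTransGen R o u → Relation.ReflTransGen R o v → G.Adj u v →
        (u ∈ X ↔ v ∈ X) := by
      intro u v hu hv huv
      constructor
      · intro h
        by_contra h'
        exact hc u h v ⟨hv, h'⟩ huv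
      · intro h
        by_contra h'
        exact hc v h u ⟨hu, h'⟩ huv.symm
    have key : ∀ v, Relation.ReflTransGen R o v → (o ∈ X ↔ v ∈ X) := by
      intro v hv
      induction hv with
      | refl => rfl
      | tail h1 h2 ih => exact ih.trans (cl _ _ h1 (h1.tail h2) h2.1)
    obtain ⟨x, hx⟩ := hX1
    obtain ⟨y, hy, hy'⟩ := hX2
    exact hy' ((key y hy).1 ((key x (hX hx)).2 hx))
  · intro u hu v hv huv
    exact Relation.ReflTransGen.tail hu ⟨huv, hv⟩

lemma link {V : Type} (G : SimpleGraph V) {K X Y O : Set V} (hK : Conn G K)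
    (hX : (K ∩ X).Nonempty) (hY : (K ∩ Y).Nonempty) (hsub : K ⊆ X ∪ Y ∪ O)
    (hXY : Disjoint X Y) (hYO : Disjoint Y O) :
    Tch G X Y ∨ ∃ D ⊆ O, Conn G D ∧ (∀ u ∈ D, ∀ v ∈ O, G.Adj u v → v ∈ D) ∧
      Tch G D X ∧ Tch G D Y := by
  by_contra hc
  push Not at hc
  obtain ⟨hc1, hc2⟩ := hc
  let T : Set V := {v | v ∈ K ∧ (v ∈ X ∨ ∃ D ⊆ O, Conn G D ∧
    (∀ u ∈ D, ∀ v ∈ O, G.Adj u v → v ∈ D) ∧ Tch G D X ∧ v ∈ D)}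
  obtain ⟨x, hxK, hxX⟩ := hX
  obtain ⟨y, hyK, hyY⟩ := hY
  obtain ⟨u, hu, v, hv, huv⟩ := hK.2 T (fun v h => h.1) ⟨x, hxK, Or.inl hxX⟩ ⟨y, hyK, by
    rintro ⟨_, h | ⟨D, hD, _, _, _, h⟩⟩
    · exact Set.disjoint_left.1 hXY h hyY
    · exact Set.disjoint_left.1 hYO hyY (hD h)⟩
  have hvT : ¬ (v ∈ X ∨ ∃ D ⊆ O, Conn G D ∧
    (∀ u ∈ D, ∀ v ∈ O, G.Adj u v → v ∈ D) ∧ Tch G D X ∧ v ∈ D) := fun h => hv.2 ⟨hv.1, h⟩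
  push Not at hvT
  rcases hu.2 with huX | ⟨D, hDO, hD, hDc, hDX, huD⟩
  · rcases hsub hv.1 with (h | h) | h
    · exact hvT.1 h
    · exact hc1 ⟨u, huX, v, h, huv⟩
    · obtain ⟨D, hDO, hvD, hD, hDc⟩ := exists_comp G h
      exact hvT.2 D hDO hD hDc ⟨v, hvD, u, huX, huv.symm⟩ hvD
  · rcases hsub hv.1 with (h | h) | h
    · exact hvT.1 h
    · exact hc2 D hDO hD hDc hDX ⟨u, huD, v, h, huv⟩
    · exact hvT.2 D hDO hD hDc hDX (hDc u huD v h huv)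

lemma Conn.connected {V : Type} {G : SimpleGraph V} {A : Set V} (hA : Conn G A) :
    (G.induce A).Connected := by
  obtain ⟨a, ha⟩ := hA.1
  haveI : Nonempty A := ⟨⟨a, ha⟩⟩
  have key : ∀ v : A, (G.induce A).Reachable ⟨a, ha⟩ v := by
    by_contra hc
    push Not at hc
    obtain ⟨v, hv⟩ := hc
    obtain ⟨u, ⟨hu, hu'⟩, w, hw, huw⟩ := hA.2 {x | ∃ h : x ∈ A, (G.induce A).Reachable ⟨a, ha⟩ ⟨x, h⟩}
      (fun x h => h.1) ⟨a, ha, SimpleGraph.Reachable.refl _⟩ ⟨v, v.2, fun h => hv h.2⟩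
    exact hw.2 ⟨hw.1, hu'.trans (SimpleGraph.Adj.reachable (G := G.induce A) (u := ⟨u, hu⟩) (v := ⟨w, hw.1⟩) huw)⟩
  exact SimpleGraph.Connected.mk (fun u v => (key u).symm.trans (key v))

lemma conn_of_connected {V : Type} {G : SimpleGraph V} {A : Set V}
    (hA : (G.induce A).Connected) : Conn G A := by
  obtain ⟨⟨a, ha⟩⟩ := hA.nonempty
  refine ⟨⟨a, ha⟩, ?_⟩
  rintro X hX ⟨x, hx⟩ ⟨y, hy, hyX⟩
  by_contra hc
  push Not at hc
  have key : ∀ (u v : A) (_ : (G.induce A).Walk u v), u.1 ∈ X → v.1 ∈ X := by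
    intro u v p
    induction p with
    | nil => exact id
    | cons h p ih =>
      intro hu
      apply ih
      by_contra h'
      exact hc _ hu _ ⟨Subtype.coe_prop _, h'⟩ h
  obtain ⟨p⟩ := hA.preconnected ⟨x, hX hx⟩ ⟨y, hy⟩
  exact hyX (key _ _ p hx)

/-- A path inside a connected set, as a list without repetitions. -/
lemma exists_path {V : Type} {G : SimpleGraph V} {A : Set V} (hA : Conn G A) {a b : V}
    (ha : a ∈ A) (hb : b ∈ A) : ∃ l : List V, (∀ v ∈ l, v ∈ A) ∧ l.Nodup ∧ l.IsChain G.Adj ∧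
      l.head? = some a ∧ l.getLast? = some b := by
  classical
  obtain ⟨p, hp⟩ := hA.connected.exists_isPath ⟨a, ha⟩ ⟨b, hb⟩
  refine ⟨p.support.map Subtype.val, ?_, ?_, ?_, ?_, ?_⟩
  · intro v hv
    simp only [List.mem_map] at hv
    obtain ⟨x, _, rfl⟩ := hv
    exact x.2
  · exact hp.support_nodup.map Subtype.val_injective
  · rw [List.isChain_map]
    exact p.isChain_adj_support
  · rw [List.head?_map, List.head?_eq_some_head p.support_ne_nil, SimpleGraph.Walk.head_support]
    rfl
  · rw [List.getLast?_map, List.getLast?_eq_some_getLast p.support_ne_nil, SimpleGraph.Walk.getLast_support]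
    rfl

/-- A path through a connected set joining two outside vertices with neighbours in it. -/
lemma path_between {V : Type} {G : SimpleGraph V} {D : Set V} (hD : Conn G D) {a b : V}
    (ha : Tch G {a} D) (hb : Tch G {b} D) : ∃ p : List V, p ≠ [] ∧ (∀ v ∈ p, v ∈ D) ∧ p.Nodup ∧
      (a :: (p ++ [b])).IsChain G.Adj := by
  obtain ⟨a', rfl, u, hu, hau⟩ := ha
  obtain ⟨b', rfl, v, hv, hbv⟩ := hb
  obtain ⟨l, h1, h2, h3, h4, h5⟩ := exists_path hD hu hv
  have hl : l ≠ [] := by rintro rfl; simp at h4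
  refine ⟨l, hl, h1, h2, ?_⟩
  rw [List.isChain_cons]
  refine ⟨?_, ?_⟩
  · intro y hy
    rw [List.head?_append, h4] at hy
    simp at hy
    exact hy ▸ hau
  · rw [List.isChain_append]
    refine ⟨h3, List.isChain_singleton _, ?_⟩
    intro x hx y hy
    rw [h5] at hx
    simp at hx hy
    subst hx hy
    exact hbv.symm

end PB

namespace PB

/-! ### Edge chains over `ZMod 2` and cycles given as lists -/

/-- Edge chains. -/
abbrev Ch (V : Type) := Sym2 V → ZMod 2

/-- Single edge chain. -/
def sg {V : Type} [DecidableEq V] (a b : V) : Ch V := fun e => if e = s(a, b) then 1 else 0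

/-- Single vertex chain. -/
def pt {V : Type} [DecidableEq V] (a : V) : V → ZMod 2 := fun v => if v = a then 1 else 0

/-- Sum of the consecutive edges of a list. -/
def pch {V : Type} [DecidableEq V] : List V → Ch V
  | [] => 0
  | [_] => 0
  | a :: b :: l => sg a b + pch (b :: l)

/-- The boundary. -/
def bd {V : Type} [Fintype V] (z : Ch V) (v : V) : ZMod 2 := ∑ u, z s(v, u)

/-- The cycle space. -/
def Zc {V : Type} [Fintype V] (G : SimpleGraph V) : Submodule (ZMod 2) (Ch V) where
  carrier := {z | (∀ e, z e ≠ 0 → e ∈ G.edgeSet) ∧ ∀ v, bd z v = 0}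
  add_mem' := by
    rintro a b ⟨ha, ha'⟩ ⟨hb, hb'⟩
    refine ⟨fun e he => ?_, fun v => ?_⟩
    · by_cases h : a e = 0
      · apply hb; intro h'; apply he; simp [h, h']
      · exact ha e h
    · have h1 := ha' v
      have h2 := hb' v
      simp only [bd, Pi.add_apply, Finset.sum_add_distrib] at *
      rw [h1, h2, add_zero]
  zero_mem' := by
    refine ⟨fun e he => absurd rfl he, fun v => ?_⟩
    simp [bd]
  smul_mem' := by
    rintro c a ⟨ha, ha'⟩
    refine ⟨fun e he => ha e ?_, fun v => ?_⟩
    · intro h; apply he; simp [h]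
    · have h1 := ha' v
      simp only [bd, Pi.smul_apply, smul_eq_mul, ← Finset.mul_sum] at *
      rw [h1, mul_zero]

lemma z2_self (x : ZMod 2) : x + x = 0 := CharTwo.add_self_eq_zero x

lemma ch_self {ι : Type} (x : ι → ZMod 2) : x + x = 0 := by
  funext i; exact z2_self _

lemma z2_ne {x : ZMod 2} (h : x ≠ 0) : x = 1 := by
  revert h; revert x; decide

section
variable {V : Type} [Fintype V] [DecidableEq V] {G : SimpleGraph V}

lemma bd_add (a b : Ch V) : bd (a + b) = bd a + bd b := by
  funext v; simp [bd, Finset.sum_add_distrib]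

lemma bd_zero : bd (0 : Ch V) = 0 := by
  funext v; simp [bd]

lemma bd_sg {a b : V} (h : a ≠ b) : bd (sg a b) = pt a + pt b := by
  funext v
  simp only [bd, sg, pt, Pi.add_apply, Sym2.eq_iff]
  by_cases h1 : v = a
  · subst h1
    simp [h]
  · by_cases h2 : v = b
    · subst h2
      simp [h1]
    · simp [h1, h2]

lemma sg_comm (a b : V) : sg a b = sg b a := by
  funext e
  simp only [sg]
  rw [Sym2.eq_swap]

lemma pch_cons_cons (a b : V) (l : List V) : pch (a :: b :: l) = sg a b + pch (b :: l) := rfl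

lemma pch_split (l l' : List V) (b : V) : pch (l ++ b :: l') = pch (l ++ [b]) + pch (b :: l') := by
  induction l with
  | nil => simp [pch]
  | cons a l ih =>
    cases l with
    | nil => simp [pch]
    | cons c l =>
      simp only [List.cons_append, pch_cons_cons] at *
      rw [ih, add_assoc]

lemma pch_reverse (l : List V) : pch l.reverse = pch l := by
  induction l with
  | nil => rfl
  | cons a l ih =>
    cases l with
    | nil => rfl
    | cons c l =>
      rw [pch_cons_cons, List.reverse_cons, List.reverse_cons, List.append_assoc, List.singleton_append,
        pch_split, ← List.reverse_cons, ih, pch_cons_cons, add_comm]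
      congr 1
      simp [pch]
      exact sg_comm c a

lemma pch_mem {l : List V} {u v : V} (h : pch l s(u, v) ≠ 0) : u ∈ l ∧ v ∈ l := by
  induction l with
  | nil => simp [pch] at h
  | cons a l ih =>
    cases l with
    | nil => simp [pch] at h
    | cons c l =>
      rw [pch_cons_cons] at h
      by_cases h1 : pch (c :: l) s(u, v) = 0
      · rw [Pi.add_apply, h1, add_zero] at h
        simp only [sg, Sym2.eq_iff] at h
        have : u = a ∧ v = c ∨ u = c ∧ v = a := by
          by_contra h'; simp [h'] at h
        rcases this with ⟨rfl, rfl⟩ | ⟨rfl, rfl⟩ <;> simp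
      · have := ih h1
        exact ⟨List.mem_cons_of_mem _ this.1, List.mem_cons_of_mem _ this.2⟩

lemma pch_edge {l : List V} (hl : l.IsChain G.Adj) {e : Sym2 V} (h : pch l e ≠ 0) :
    e ∈ G.edgeSet := by
  induction l with
  | nil => simp [pch] at h
  | cons a l ih =>
    cases l with
    | nil => simp [pch] at h
    | cons c l =>
      rw [pch_cons_cons] at h
      have h2 := List.isChain_cons_cons.1 hl
      by_cases h1 : pch (c :: l) e = 0
      · rw [Pi.add_apply, h1, add_zero] at h
        simp only [sg] at h
        have : e = s(a, c) := by
          by_contra h'; simp [h'] at h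
        rw [this]
        exact h2.1
      · exact ih h2.2 h1

lemma bd_pch (l : List V) (a b : V) (h : (a :: (l ++ [b])).IsChain G.Adj) :
    bd (pch (a :: (l ++ [b]))) = pt a + pt b := by
  induction l generalizing a with
  | nil =>
    have h2 := List.isChain_cons_cons.1 h
    simp [pch, bd_sg h2.1.ne]
  | cons c l ih =>
    have h2 := List.isChain_cons_cons.1 h
    simp only [List.cons_append, pch_cons_cons]
    rw [bd_add, bd_sg h2.1.ne, ← List.cons_append, List.cons_append, ih c h2.2, add_assoc,
      ← add_assoc (pt c), ch_self, zero_add]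

/-- A cycle of `G`, as a list of its vertices. -/
def IsCyc (G : SimpleGraph V) (l : List V) : Prop :=
  l.Nodup ∧ 3 ≤ l.length ∧ (l ++ l.take 1).IsChain G.Adj

/-- The edge chain of a cycle. -/
def cch (l : List V) : Ch V := pch (l ++ l.take 1)

lemma isCyc_iff {a b : V} {l1 l2 : List V} : IsCyc G (a :: (l1 ++ b :: l2)) ↔
    (a :: (l1 ++ b :: l2)).Nodup ∧ 3 ≤ (a :: (l1 ++ b :: l2)).length ∧
    (a :: (l1 ++ [b])).IsChain G.Adj ∧ (b :: (l2 ++ [a])).IsChain G.Adj := by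
  unfold IsCyc
  have : a :: (l1 ++ b :: l2) ++ (a :: (l1 ++ b :: l2)).take 1 = (a :: l1) ++ b :: (l2 ++ [a]) := by
    simp
  rw [this, List.isChain_split]
  simp only [List.cons_append]

lemma cch_eq (a b : V) (l1 l2 : List V) : cch (a :: (l1 ++ b :: l2)) =
    pch (a :: (l1 ++ [b])) + pch (b :: (l2 ++ [a])) := by
  unfold cch
  have : a :: (l1 ++ b :: l2) ++ (a :: (l1 ++ b :: l2)).take 1 = (a :: l1) ++ b :: (l2 ++ [a]) := by
    simp
  rw [this, pch_split]
  simp only [List.cons_append]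

lemma swap_aux {a b : V} {l1 l2 : List V} (h : IsCyc G (a :: (l1 ++ b :: l2))) :
    IsCyc G (b :: (l2 ++ a :: l1)) := by
  rw [isCyc_iff] at h ⊢
  refine ⟨?_, ?_, h.2.2.2, h.2.2.1⟩
  · have : (b :: (l2 ++ a :: l1)).Perm (a :: (l1 ++ b :: l2)) := by
      have := @List.perm_append_comm _ (b :: l2) (a :: l1)
      simpa using this
    exact this.nodup_iff.2 h.1
  · have := h.2.1
    simp at this ⊢
    omega

lemma IsCyc.swap {l1 l2 : List V} (h : IsCyc G (l1 ++ l2)) : IsCyc G (l2 ++ l1) := by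
  cases l1 with
  | nil => simpa using h
  | cons a l1 =>
    cases l2 with
    | nil => simpa using h
    | cons b l2 => exact swap_aux h

lemma cch_swap (l1 l2 : List V) : cch (l1 ++ l2) = cch (l2 ++ l1) := by
  cases l1 with
  | nil => simp
  | cons a l1 =>
    cases l2 with
    | nil => simp
    | cons b l2 =>
      rw [List.cons_append, cch_eq, List.cons_append, cch_eq, add_comm]

lemma IsCyc.reverse {l : List V} (h : IsCyc G l) : IsCyc G l.reverse := by
  obtain ⟨h1, h2, h3⟩ := h
  match l, h1, h2, h3 with
  | a :: b :: l, h1, h2, h3 =>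
    have e : (a :: b :: l).reverse = (b :: l).reverse ++ [a] := by simp
    rw [e]
    apply IsCyc.swap
    refine ⟨?_, ?_, ?_⟩
    · rw [List.singleton_append, List.nodup_cons, List.mem_reverse, List.nodup_reverse]
      exact List.nodup_cons.1 h1
    · simpa using h2
    · have : [a] ++ (b :: l).reverse ++ ([a] ++ (b :: l).reverse).take 1 =
          (a :: b :: l ++ (a :: b :: l).take 1).reverse := by simp
      rw [this, List.isChain_reverse]
      exact h3.imp (fun _ _ h => h.symm)

lemma cch_reverse {l : List V} : cch l.reverse = cch l := by
  cases l with
  | nil => rfl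
  | cons a l =>
    have e : (a :: l).reverse = l.reverse ++ [a] := by simp
    rw [e, cch_swap]
    unfold cch
    have : [a] ++ l.reverse ++ ([a] ++ l.reverse).take 1 =
          (a :: l ++ (a :: l).take 1).reverse := by simp
    rw [this, pch_reverse]

lemma IsCyc.cons {l : List V} (h : IsCyc G l) : ∃ a b l', l = a :: b :: l' := by
  obtain ⟨h1, h2, h3⟩ := h
  match l, h2 with
  | a :: b :: l, _ => exact ⟨a, b, l, rfl⟩

lemma IsCyc.cch_mem {l : List V} (h : IsCyc G l) : cch l ∈ Zc G := by
  obtain ⟨a, b, l', rfl⟩ := h.cons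
  have h' := (isCyc_iff (l1 := [])).1 h
  refine ⟨fun e he => pch_edge h.2.2 he, fun v => ?_⟩
  have := cch_eq a b [] l'
  simp only [List.nil_append] at this
  rw [this, bd_add, ← List.nil_append [b], bd_pch _ _ _ h'.2.2.1, bd_pch _ _ _ h'.2.2.2,
    add_comm (pt a), ch_self]
  rfl

/-- Rotate a cycle so that it starts at a given vertex. -/
lemma IsCyc.rot {l : List V} (h : IsCyc G l) {a : V} (ha : a ∈ l) :
    ∃ l', IsCyc G (a :: l') ∧ cch (a :: l') = cch l ∧ ∀ v, v ∈ a :: l' ↔ v ∈ l := by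
  obtain ⟨l1, l2, rfl⟩ := List.append_of_mem ha
  refine ⟨l2 ++ l1, ?_, ?_, ?_⟩
  · exact h.swap
  · rw [cch_swap]; rfl
  · intro v; simp; tauto

/-- Rotate a cycle and split it at two given vertices. -/
lemma IsCyc.rot2 {l : List V} (h : IsCyc G l) {a b : V} (ha : a ∈ l) (hb : b ∈ l) (hab : a ≠ b) :
    ∃ l1 l2, IsCyc G (a :: (l1 ++ b :: l2)) ∧ cch (a :: (l1 ++ b :: l2)) = cch l ∧
      ∀ v, v ∈ a :: (l1 ++ b :: l2) ↔ v ∈ l := by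
  obtain ⟨l', h1, h2, h3⟩ := h.rot ha
  have : b ∈ l' := by
    have := (h3 b).2 hb
    simp [hab.symm] at this
    exact this
  obtain ⟨l1, l2, rfl⟩ := List.append_of_mem this
  exact ⟨l1, l2, h1, h2, h3⟩

lemma pch_end {a b : V} {l : List V} (hl : l ≠ []) (hnd : (a :: (l ++ [b])).Nodup) :
    pch (a :: (l ++ [b])) s(a, b) = 0 := by
  cases l with
  | nil => exact absurd rfl hl
  | cons c l =>
    rw [List.cons_append, pch_cons_cons, Pi.add_apply]
    have h1 : sg a c s(a, b) = 0 := by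
      have : b ≠ c := by
        rintro rfl
        simp at hnd
      have hab : b ≠ a := by
        rintro rfl
        simp at hnd
      simp [sg, this, hab]
    have h2 : pch (c :: (l ++ [b])) s(a, b) = 0 := by
      by_contra h
      have := (pch_mem h).1
      exact (List.nodup_cons.1 hnd).1 this
    rw [h1, h2, add_zero]

lemma IsCyc.chord_zero {a b : V} {l1 l2 : List V} (h : IsCyc G (a :: (l1 ++ b :: l2)))
    (h1 : l1 ≠ []) (h2 : l2 ≠ []) : cch (a :: (l1 ++ b :: l2)) s(a, b) = 0 := by
  have hn := h.1
  rw [cch_eq, Pi.add_apply, pch_end h1, zero_add, Sym2.eq_swap, pch_end h2]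
  · have : (b :: (l2 ++ [a])).Sublist (b :: (l2 ++ a :: l1)) := by simp
    exact (swap_aux h).1.sublist this
  · have : (a :: (l1 ++ [b])).Sublist (a :: (l1 ++ b :: l2)) := by simp
    exact hn.sublist this

lemma IsCyc.edge_one {a b : V} {l : List V} (h : IsCyc G (a :: b :: l)) :
    cch (a :: b :: l) s(a, b) ≠ 0 := by
  have hl : l ≠ [] := by
    rintro rfl
    have := h.2.1
    simp at this
  have := cch_eq a b [] l
  simp only [List.nil_append] at this
  rw [this, Pi.add_apply, Sym2.eq_swap, pch_end hl, add_zero]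
  · simp [pch, sg, Sym2.eq_swap]
  · have h' := (swap_aux (l1 := []) h).1
    simpa using h'

lemma IsCyc.edge_split {a b : V} {l1 l2 : List V} (h : IsCyc G (a :: (l1 ++ b :: l2)))
    (h0 : cch (a :: (l1 ++ b :: l2)) s(a, b) = 0) : l1 ≠ [] ∧ l2 ≠ [] := by
  constructor
  · rintro rfl
    exact h.edge_one h0
  · rintro rfl
    have h' := swap_aux h
    have := h'.edge_one
    apply this
    rw [Sym2.eq_swap, ← h0]
    exact congrFun (cch_swap ([b]) (a :: l1)) _

lemma arc_chain {a b : V} {l1 l2 : List V} (h : IsCyc G (a :: (l1 ++ b :: l2))) :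
    l1.IsChain G.Adj ∧ l2.IsChain G.Adj := by
  have h' := isCyc_iff.1 h
  have h1 := h'.2.2.1
  have h2 := h'.2.2.2
  exact ⟨(List.isChain_append.1 (List.isChain_cons.1 h1).2).1,
    (List.isChain_append.1 (List.isChain_cons.1 h2).2).1⟩

lemma arc_ends {a b : V} {l : List V} (h : (a :: (l ++ [b])).IsChain G.Adj) (hl : l ≠ []) :
    Tch G {a} {v | v ∈ l} ∧ Tch G {b} {v | v ∈ l} := by
  have h1 := List.isChain_cons.1 h
  have h2 := List.isChain_append.1 h1.2
  constructor
  · cases l with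
    | nil => exact absurd rfl hl
    | cons c l => exact ⟨a, rfl, c, by simp, h1.1 c (by simp)⟩
  · refine ⟨b, rfl, l.getLast hl, List.getLast_mem hl, ?_⟩
    exact (h2.2.2 (l.getLast hl) (by rw [List.getLast?_eq_some_getLast hl]; simp) b (by simp)).symm

lemma IsCyc.adj_mem {s : Set V} (hs : ∀ u v, G.Adj u v → u ∈ s) {l : List V} (h : IsCyc G l) :
    ∀ v ∈ l, v ∈ s := by
  intro v hv
  obtain ⟨l', h1, _, _⟩ := h.rot hv
  obtain ⟨a, b, lrr, h3⟩ := h1.cons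
  simp at h3
  obtain ⟨rfl, rfl⟩ := h3
  have := (isCyc_iff (l1 := [])).1 h1
  exact hs v b (List.isChain_cons_cons.1 this.2.2.1).1

/-- Splitting a cycle by a path. -/
lemma theta {a b : V} {l1 l2 p : List V} (h : IsCyc G (a :: (l1 ++ b :: l2))) (hp : p.Nodup)
    (hc : (a :: (p ++ [b])).IsChain G.Adj) (hd : ∀ v ∈ p, v ∉ a :: (l1 ++ b :: l2)) :
    (l1 ≠ [] ∨ p ≠ [] → IsCyc G (a :: (l1 ++ b :: p.reverse))) ∧
    (l2 ≠ [] ∨ p ≠ [] → IsCyc G (a :: (p ++ b :: l2))) ∧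
    cch (a :: (l1 ++ b :: l2)) = cch (a :: (l1 ++ b :: p.reverse)) + cch (a :: (p ++ b :: l2)) := by
  have h' := isCyc_iff.1 h
  have hn := h'.1
  have hrev : (b :: (p.reverse ++ [a])) = (a :: (p ++ [b])).reverse := by simp
  simp only [List.nodup_cons, List.nodup_append, List.mem_append, List.mem_cons] at hn
  simp only [List.mem_append, List.mem_cons] at hd
  refine ⟨fun hl => isCyc_iff.2 ⟨?_, ?_, h'.2.2.1, ?_⟩, fun hl => isCyc_iff.2 ⟨?_, ?_, hc, h'.2.2.2⟩, ?_⟩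
  · simp only [List.nodup_cons, List.nodup_append, List.mem_append, List.mem_cons, List.mem_reverse,
      List.nodup_reverse]
    grind
  · have : 1 ≤ l1.length ∨ 1 ≤ p.length := by
      rcases hl with hl | hl
      · left; exact List.length_pos_iff.2 hl
      · right; exact List.length_pos_iff.2 hl
    simp
    omega
  · rw [hrev, List.isChain_reverse]
    exact hc.imp (fun _ _ h => h.symm)
  · simp only [List.nodup_cons, List.nodup_append, List.mem_append, List.mem_cons]
    grind
  · have : 1 ≤ l2.length ∨ 1 ≤ p.length := by
      rcases hl with hl | hl
      · left; exact List.length_pos_iff.2 hl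
      · right; exact List.length_pos_iff.2 hl
    simp
    omega
  · rw [cch_eq, cch_eq, cch_eq, hrev, pch_reverse, add_assoc, ← add_assoc (pch (a :: (p ++ [b]))),
      ch_self, zero_add]

end
end PB

namespace PB
section
variable {V : Type} [Fintype V] [DecidableEq V] {G : SimpleGraph V}

/-! ### The cycle space is generated by cycles; its dimension -/

/-- The graph on the support of a chain. -/
def spt (z : Ch V) : SimpleGraph V := SimpleGraph.fromEdgeSet {e | z e ≠ 0}

lemma spt_adj {z : Ch V} {u v : V} : (spt z).Adj u v ↔ z s(u, v) ≠ 0 ∧ u ≠ v := by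
  simp [spt]

lemma exists_cyc {z : Ch V} (hz : z ∈ Zc G) (h0 : z ≠ 0) : ∃ l, IsCyc (spt z) l := by
  classical
  have hadj : ∀ u v, z s(u, v) ≠ 0 → (spt z).Adj u v := by
    intro u v h
    exact spt_adj.2 ⟨h, (show G.Adj u v from hz.1 _ h).ne⟩
  have hex : ∃ l : List V, l.Nodup ∧ l.IsChain (spt z).Adj ∧ 2 ≤ l.length := by
    obtain ⟨e, he⟩ : ∃ e, z e ≠ 0 := by
      by_contra h
      push Not at h
      exact h0 (funext h)
    induction e with
    | h u v =>
      have := hadj u v he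
      exact ⟨[u, v], by simp [this.ne], by simp [this], by simp⟩
  let P : ℕ → Prop := fun n => ∃ l : List V, l.Nodup ∧ l.IsChain (spt z).Adj ∧ 2 ≤ l.length ∧ l.length = n
  obtain ⟨l0, a1, a2, a3⟩ := hex
  have hP : P (Nat.findGreatest P (Fintype.card V)) :=
    Nat.findGreatest_spec (m := l0.length) a1.length_le_card ⟨l0, a1, a2, a3, rfl⟩
  obtain ⟨l, h1, h2, h3, h4⟩ := hP
  match l, h1, h2, h3, h4 with
  | a :: b :: t, h1, h2, h3, h4 =>
    have hab := (List.isChain_cons_cons.1 h2).1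
    have hb := hz.2 a
    obtain ⟨u, hu, hub⟩ : ∃ u, z s(a, u) ≠ 0 ∧ u ≠ b := by
      by_contra hc
      push Not at hc
      have : bd z a = z s(a, b) := by
        unfold bd
        apply Finset.sum_eq_single b
        · intro c _ hcb
          by_contra hh
          exact hcb (hc c hh)
        · simp
      rw [this] at hb
      exact (spt_adj.1 hab).1 hb
    have hau := hadj a u hu
    have hul : u ∈ t := by
      by_contra hut
      have hnd : (u :: a :: b :: t).Nodup := by
        rw [List.nodup_cons]
        refine ⟨?_, h1⟩
        simp [hut, hub, hau.ne.symm]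
      have : P (u :: a :: b :: t).length :=
        ⟨u :: a :: b :: t, hnd, List.isChain_cons_cons.2 ⟨hau.symm, h2⟩, by simp, rfl⟩
      have := Nat.le_findGreatest hnd.length_le_card this
      rw [← h4] at this
      simp at this
    obtain ⟨t1, t2, rfl⟩ := List.append_of_mem hul
    refine ⟨a :: (b :: t1 ++ u :: []), isCyc_iff.2 ⟨?_, ?_, ?_, ?_⟩⟩
    · refine h1.sublist ?_
      simp
    · simp
    · have : a :: b :: (t1 ++ u :: t2) = (a :: b :: t1) ++ u :: t2 := by simp
      rw [this, List.isChain_split] at h2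
      exact h2.1
    · simpa using hau.symm

lemma IsCyc.mono {G' : SimpleGraph V} (h : G ≤ G') {l : List V} (hl : IsCyc G l) : IsCyc G' l :=
  ⟨hl.1, hl.2.1, hl.2.2.imp (fun _ _ h' => h h')⟩

lemma spt_le {z : Ch V} (hz : ∀ e, z e ≠ 0 → e ∈ G.edgeSet) : spt z ≤ G := by
  intro u v h
  exact hz _ (spt_adj.1 h).1

lemma cch_ne_zero {l : List V} (h : IsCyc G l) : cch l ≠ 0 := by
  obtain ⟨a, b, l', rfl⟩ := h.cons
  intro h0
  exact h.edge_one (by rw [h0]; rfl)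

lemma cyc_span (U : Submodule (ZMod 2) (Ch V)) (hU : ∀ l, IsCyc G l → cch l ∈ U) :
    Zc G ≤ U := by
  have key : ∀ n, ∀ z ∈ Zc G, (Finset.univ.filter fun e => z e ≠ 0).card = n → z ∈ U := by
    intro n
    induction n using Nat.strong_induction_on with
    | _ n ih =>
      intro z hz hn
      by_cases h0 : z = 0
      · rw [h0]; exact U.zero_mem
      obtain ⟨l, hl⟩ := exists_cyc hz h0
      have hlG := hl.mono (spt_le hz.1)
      have hsub : ∀ e, cch l e ≠ 0 → z e ≠ 0 := by
        intro e he
        have := hl.cch_mem.1 e he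
        induction e with
        | h u v => exact (spt_adj.1 this).1
      have hm : z + cch l ∈ Zc G := (Zc G).add_mem hz hlG.cch_mem
      have := ih _ ?_ _ hm rfl
      · have h2 := U.add_mem this (hU l hlG)
        rwa [add_assoc, ch_self, add_zero] at h2
      · rw [← hn]
        apply Finset.card_lt_card
        rw [Finset.ssubset_iff_of_subset]
        · obtain ⟨a, b, l', rfl⟩ := hl.cons
          have h1 := hl.edge_one
          refine ⟨s(a, b), by simpa using hsub _ h1, ?_⟩
          simp only [Finset.mem_filter, Finset.mem_univ, true_and, Pi.add_apply, not_not]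
          rw [z2_ne h1, z2_ne (hsub _ h1)]
          rfl
        · intro e
          simp only [Finset.mem_filter, Finset.mem_univ, true_and, Pi.add_apply]
          intro he hz0
          apply he
          rw [hz0, zero_add]
          by_contra h'
          exact hsub e h' hz0
  intro z hz
  exact key _ z hz rfl

lemma exists_walk (l : List V) (a b : V) (h : (a :: (l ++ [b])).IsChain G.Adj) :
    ∃ p : G.Walk a b, p.support = a :: (l ++ [b]) := by
  induction l generalizing a with
  | nil =>
    have h2 := List.isChain_cons_cons.1 h
    exact ⟨SimpleGraph.Walk.cons h2.1 SimpleGraph.Walk.nil, by simp⟩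
  | cons c l ih =>
    have h2 := List.isChain_cons_cons.1 h
    obtain ⟨p, hp⟩ := ih c h2.2
    exact ⟨SimpleGraph.Walk.cons h2.1 p, by simp [hp]⟩

lemma IsCyc.walk {l : List V} (h : IsCyc G l) : ∃ (a : V) (p : G.Walk a a), p.IsCycle := by
  obtain ⟨a, b, l', rfl⟩ := h.cons
  have h' := (isCyc_iff (l1 := [])).1 h
  have hl : l' ≠ [] := by
    rintro rfl
    have := h.2.1
    simp at this
  have hab := (List.isChain_cons_cons.1 h'.2.2.1).1
  cases l' with
  | nil => exact absurd rfl hl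
  | cons c l' =>
    have h3 := List.isChain_cons_cons.1 h'.2.2.2
    obtain ⟨q, hq⟩ := exists_walk l' c a h3.2
    have hnd := h'.1
    simp only [List.nil_append, List.nodup_cons, List.mem_cons, not_or] at hnd
    refine ⟨a, SimpleGraph.Walk.cons hab (SimpleGraph.Walk.cons h3.1 q), ?_⟩
    rw [SimpleGraph.Walk.cons_isCycle_iff]
    constructor
    · apply SimpleGraph.Walk.IsPath.mk'
      rw [SimpleGraph.Walk.support_cons, hq]
      simp only [List.nodup_cons, List.mem_cons, List.mem_append, List.nodup_append]
      grind
    · rw [SimpleGraph.Walk.edges_cons]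
      intro hmem
      rw [List.mem_cons] at hmem
      rcases hmem with hm | hm
      · simp only [Sym2.eq_iff] at hm
        grind
      · have := q.snd_mem_support_of_mem_edges hm
        rw [hq] at this
        simp only [List.mem_cons, List.mem_append] at this
        grind

lemma girth_le_supp {z : Ch V} (hz : z ∈ Zc G) (h0 : z ≠ 0) :
    G.girth ≤ (Finset.univ.filter fun e => z e ≠ 0).card := by
  obtain ⟨l, hl⟩ := exists_cyc hz h0
  obtain ⟨a, p, hp⟩ := hl.walk
  have h1 := hp.mapLe (spt_le hz.1)
  have h2 := SimpleGraph.girth_le_length h1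
  rw [SimpleGraph.Walk.length_mapLe] at h2
  refine h2.trans ?_
  have h3 := hp.edges_nodup
  rw [← SimpleGraph.Walk.length_edges, ← List.toFinset_card_of_nodup h3]
  apply Finset.card_le_card
  intro e he
  simp only [List.mem_toFinset] at he
  have := p.edges_subset_edgeSet he
  induction e with
  | h u v => simpa using (spt_adj.1 this).1

lemma sum_bd {z : Ch V} (hz : ∀ e, z e ≠ 0 → e ∈ G.edgeSet) : ∑ v, bd z v = 0 := by
  unfold bd
  rw [← Fintype.sum_prod_type']
  refine Finset.sum_involution (fun p _ => (p.2, p.1)) ?_ ?_ ?_ ?_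
  · rintro ⟨a, b⟩ _
    simp only
    rw [Sym2.eq_swap]
    exact z2_self _
  · rintro ⟨a, b⟩ _ h h'
    simp only [Prod.mk.injEq] at h'
    exact (show G.Adj a b from hz _ h).ne h'.2
  · simp
  · simp

/-- Extension by zero. -/
noncomputable def extz (G : SimpleGraph V) : (G.edgeSet → ZMod 2) →ₗ[ZMod 2] Ch V :=
  LinearMap.funLeft (ZMod 2) (ZMod 2) (fun e : Sym2 V => e) ∘ₗ
  { toFun := fun z e => by
      classical exact if h : e ∈ G.edgeSet then z ⟨e, h⟩ else 0
    map_add' := by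
      intro x y
      funext e
      by_cases h : e ∈ G.edgeSet <;> simp [h]
    map_smul' := by
      intro c x
      funext e
      by_cases h : e ∈ G.edgeSet <;> simp [h] }

lemma extz_of_mem {z : G.edgeSet → ZMod 2} {e : Sym2 V} (h : e ∈ G.edgeSet) :
    extz G z e = z ⟨e, h⟩ := by
  simp [extz, LinearMap.funLeft, h]

lemma extz_of_not {z : G.edgeSet → ZMod 2} {e : Sym2 V} (h : e ∉ G.edgeSet) :
    extz G z e = 0 := by
  simp [extz, LinearMap.funLeft, h]

/-- The boundary as a linear map. -/
def bdl (V : Type) [Fintype V] : Ch V →ₗ[ZMod 2] (V → ZMod 2) where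
  toFun := bd
  map_add' := by
    intro a b
    funext v
    simp [bd, Finset.sum_add_distrib]
  map_smul' := by
    intro c a
    funext v
    simp [bd, Finset.mul_sum]

lemma dim_Zc (s : Finset V) (hs : ∀ u v, G.Adj u v → u ∈ s) (hne : s.Nonempty) :
    G.edgeSet.ncard + 1 ≤ Module.finrank (ZMod 2) (Zc G) + s.card := by
  classical
  obtain ⟨r, hr⟩ := hne
  let L : (G.edgeSet → ZMod 2) →ₗ[ZMod 2] ({v // v ∈ s.erase r} → ZMod 2) :=
    LinearMap.funLeft (ZMod 2) (ZMod 2) (fun v : {v // v ∈ s.erase r} => v.1) ∘ₗ bdl V ∘ₗ extz G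
  have h1 := L.finrank_range_add_finrank_ker
  have h2 : Module.finrank (ZMod 2) (LinearMap.range L) ≤ s.card - 1 := by
    refine (Submodule.finrank_le _).trans ?_
    rw [Module.finrank_fintype_fun_eq_card, Fintype.card_coe, Finset.card_erase_of_mem hr]
  rw [Module.finrank_fintype_fun_eq_card, ← Nat.card_eq_fintype_card, Nat.card_coe_set_eq] at h1
  have h3 : Module.finrank (ZMod 2) (LinearMap.ker L) ≤ Module.finrank (ZMod 2) (Zc G) := by
    have hmem : ∀ z : LinearMap.ker L, (extz G ∘ₗ (LinearMap.ker L).subtype) z ∈ Zc G := by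
      rintro ⟨z, hz⟩
      have hsup : ∀ e, extz G z e ≠ 0 → e ∈ G.edgeSet := by
        intro e he
        by_contra h
        exact he (extz_of_not h)
      refine ⟨hsup, ?_⟩
      have ha : ∀ v, v ≠ r → bd (extz G z) v = 0 := by
        intro v hv
        by_cases hvs : v ∈ s
        · have := congrFun (LinearMap.mem_ker.1 hz) ⟨v, Finset.mem_erase.2 ⟨hv, hvs⟩⟩
          exact this
        · unfold bd
          apply Finset.sum_eq_zero
          intro u _
          apply extz_of_not
          intro h
          exact hvs (hs v u h)
      intro v
      by_cases hv : v = r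
      · have := sum_bd hsup
        rw [Finset.sum_eq_single r (fun b _ hb => ha b hb) (by simp)] at this
        rw [hv]
        exact this
      · exact ha v hv
    refine LinearMap.finrank_le_finrank_of_injective
      (f := LinearMap.codRestrict (Zc G) (extz G ∘ₗ (LinearMap.ker L).subtype) hmem) ?_
    intro x y hxy
    have h4 := congrArg Subtype.val hxy
    simp only [LinearMap.codRestrict_apply, LinearMap.comp_apply, Submodule.subtype_apply] at h4
    apply Subtype.ext
    funext e
    have h5 := congrFun h4 e.1
    rwa [extz_of_mem e.2, extz_of_mem e.2] at h5
  have : 1 ≤ s.card := Finset.card_pos.2 ⟨r, hr⟩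
  omega

end
end PB


namespace PB
section
variable {V : Type} [Fintype V] [DecidableEq V] {G : SimpleGraph V}

/-- Peripheral (induced non-separating) cycles. -/
def Per (G : SimpleGraph V) (s : Set V) (l : List V) : Prop :=
  IsCyc G l ∧ (∀ u ∈ l, ∀ v ∈ l, G.Adj u v → cch l s(u, v) ≠ 0) ∧ Conn G (s \ {v | v ∈ l})

/-- Cycles with a large connected set off them are in `U`. -/
def Big (G : SimpleGraph V) (s : Set V) (U : Submodule (ZMod 2) (Ch V)) (n : ℕ) : Prop :=
  ∀ l B, IsCyc G l → Conn G B → B ⊆ s → (∀ v ∈ B, v ∉ l) → n < B.ncard → cch l ∈ U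

lemma ncard_lt_union {B C : Set V} {c : V} (hc : c ∈ C) (hB : c ∉ B) : B.ncard < (B ∪ C).ncard := by
  apply Set.ncard_lt_ncard _ (Set.toFinite _)
  rw [Set.ssubset_iff_of_subset Set.subset_union_left]
  exact ⟨c, Or.inr hc, hB⟩

lemma overlap {s : Set V} (hs : ∀ u v, G.Adj u v → u ∈ s) {U : Submodule (ZMod 2) (Ch V)}
    {a b : V} {l1 l2 p : List V} {B : Set V}
    (h : IsCyc G (a :: (l1 ++ b :: l2))) (hB : Conn G B) (hBs : B ⊆ s)
    (hBC : ∀ v ∈ B, v ∉ a :: (l1 ++ b :: l2))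
    (hp : p.Nodup) (hc : (a :: (p ++ [b])).IsChain G.Adj)
    (hd : ∀ v ∈ p, v ∉ a :: (l1 ++ b :: l2)) (hpB : ∀ v ∈ p, v ∉ B)
    (t1 : Tch G B {v | v ∈ l1}) (t2 : Tch G B {v | v ∈ l2}) (IH : Big G s U B.ncard) :
    cch (a :: (l1 ++ b :: l2)) ∈ U := by
  have hth := theta h hp hc hd
  have hne1 : l1 ≠ [] := by
    rintro rfl
    obtain ⟨_, _, v, hv, _⟩ := t1
    simp at hv
  have hne2 : l2 ≠ [] := by
    rintro rfl
    obtain ⟨_, _, v, hv, _⟩ := t2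
    simp at hv
  have hn := h.1
  have hch := arc_chain h
  have hls := h.adj_mem hs
  simp only [List.nodup_cons, List.nodup_append, List.mem_append, List.mem_cons] at hn
  simp only [List.mem_append, List.mem_cons] at hd hBC hls
  rw [hth.2.2]
  apply U.add_mem
  · obtain ⟨_, _, v, hv, _⟩ := id t2
    apply IH _ (B ∪ {v | v ∈ l2}) (hth.1 (Or.inl hne1))
      (hB.union (conn_list _ hne2 hch.2) t2)
    · intro x hx
      rcases hx with hx | hx
      · exact hBs hx
      · exact hls x (by simp at hx; tauto)
    · intro x hx
      simp only [List.mem_append, List.mem_cons, List.mem_reverse]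
      rcases hx with hx | hx
      · have := hBC x hx
        have := fun h => hpB x h hx
        tauto
      · simp at hx
        have h1 := fun h => hd x h
        have h2 : x ≠ a := by rintro rfl; tauto
        have h3 : x ≠ b := by rintro rfl; tauto
        have h4 : x ∉ l1 := fun h => hn.2.2.2 x h x (Or.inr hx) rfl
        tauto
    · apply ncard_lt_union hv
      intro hv'
      have := hBC v hv'
      simp at hv
      tauto
  · obtain ⟨_, _, v, hv, _⟩ := id t1
    apply IH _ (B ∪ {v | v ∈ l1}) (hth.2.1 (Or.inl hne2))
      (hB.union (conn_list _ hne1 hch.1) t1)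
    · intro x hx
      rcases hx with hx | hx
      · exact hBs hx
      · exact hls x (by simp at hx; tauto)
    · intro x hx
      simp only [List.mem_append, List.mem_cons, List.mem_reverse]
      rcases hx with hx | hx
      · have := hBC x hx
        have := fun h => hpB x h hx
        tauto
      · simp at hx
        have h1 := fun h => hd x h
        have h2 : x ≠ a := by rintro rfl; tauto
        have h3 : x ≠ b := fun h => hn.2.2.2 x hx b (Or.inl rfl) h
        have h4 : x ∉ l2 := fun h => hn.2.2.2 x hx x (Or.inr h) rfl
        tauto
    · apply ncard_lt_union hv
      intro hv'
      have := hBC v hv'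
      simp at hv
      tauto

lemma overlap' {s : Set V} (hs : ∀ u v, G.Adj u v → u ∈ s) {U : Submodule (ZMod 2) (Ch V)}
    {a b : V} {l1 l2 p : List V} {B : Set V}
    (h : IsCyc G (a :: (l1 ++ b :: l2))) (hB : Conn G B) (hBs : B ⊆ s)
    (hBC : ∀ v ∈ B, v ∉ a :: (l1 ++ b :: l2))
    (hp : p.Nodup) (hc : (a :: (p ++ [b])).IsChain G.Adj)
    (hd : ∀ v ∈ p, v ∉ a :: (l1 ++ b :: l2)) (hpB : ∀ v ∈ p, v ∉ B)
    (hN : ∀ v ∈ a :: (l1 ++ b :: l2), Tch G {v} B)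
    (t1 : l1 ≠ []) (t2 : l2 ≠ []) (IH : Big G s U B.ncard) :
    cch (a :: (l1 ++ b :: l2)) ∈ U := by
  obtain ⟨x, hx⟩ := List.exists_mem_of_ne_nil _ t1
  obtain ⟨y, hy⟩ := List.exists_mem_of_ne_nil _ t2
  apply overlap hs h hB hBs hBC hp hc hd hpB _ _ IH
  · exact (hN x (by simp [hx])).symm.mono le_rfl (by simpa using hx)
  · exact (hN y (by simp [hy])).symm.mono le_rfl (by simpa using hy)

lemma att {s : Set V} {l : List V} {D : Set V} (hl : IsCyc G l)
    (hs : ∀ u v, G.Adj u v → u ∈ s)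
    (K3 : ∀ a b, Conn G (s \ {a, b})) (hD : Conn G D) (hDs : D ⊆ s) (hDl : ∀ v ∈ D, v ∉ l)
    (hcl : ∀ u ∈ D, ∀ v, v ∉ l → G.Adj u v → v ∈ D) {a b : V} (ha : a ∈ l) (hb : b ∈ l) :
    ∃ c ∈ l, c ≠ a ∧ c ≠ b ∧ Tch G {c} D := by
  have hc : ∃ c ∈ l, c ≠ a ∧ c ≠ b := by
    by_contra hcon
    push Not at hcon
    have : l.toFinset ⊆ {a, b} := by
      intro x hx
      simp at hx ⊢
      have := hcon x hx
      tauto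
    have := Finset.card_le_card this
    rw [List.toFinset_card_of_nodup hl.1] at this
    have h2 : Finset.card {a, b} ≤ 2 := Finset.card_le_two
    have := hl.2.1
    omega
  obtain ⟨c, hc, hca, hcb⟩ := hc
  obtain ⟨u, hu, v, hv, huv⟩ := (K3 a b).2 D (by
      intro x hx
      refine ⟨hDs hx, ?_⟩
      have := hDl x hx
      rintro (rfl | rfl) <;> tauto) hD.1
    ⟨c, ⟨hl.adj_mem hs c hc, by simp [hca, hcb]⟩, fun h => hDl c h hc⟩
  have hvl : v ∈ l := by
    by_contra hvl
    exact hv.2 (hcl u hu v hvl huv)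
  refine ⟨v, hvl, ?_, ?_, v, rfl, u, hu, huv.symm⟩
  · rintro rfl; simp at hv
  · rintro rfl; simp at hv

lemma split_first (P : V → Prop) (l : List V) (h : ∃ x ∈ l, P x) :
    ∃ p u r, l = p ++ u :: r ∧ P u ∧ ∀ x ∈ p, ¬ P x := by
  induction l with
  | nil => simp at h
  | cons a l ih =>
    by_cases ha : P a
    · exact ⟨[], a, l, rfl, ha, by simp⟩
    · have : ∃ x ∈ l, P x := by
        obtain ⟨x, hx, hP⟩ := h
        simp at hx
        rcases hx with rfl | hx
        · exact absurd hP ha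
        · exact ⟨x, hx, hP⟩
      obtain ⟨p, u, r, rfl, h1, h2⟩ := ih this
      refine ⟨a :: p, u, r, rfl, h1, ?_⟩
      simpa using ⟨ha, h2⟩

lemma split_last (P : V → Prop) (l : List V) (h : ∃ x ∈ l, P x) :
    ∃ p u r, l = p ++ u :: r ∧ P u ∧ ∀ x ∈ r, ¬ P x := by
  obtain ⟨p, u, r, h1, h2, h3⟩ := split_first P l.reverse (by simpa using h)
  refine ⟨r.reverse, u, p.reverse, ?_, h2, by simpa using h3⟩
  have := congrArg List.reverse h1
  simpa using this

lemma split_two (P : V → Prop) (l : List V) {x y : V} (hx : x ∈ l) (hy : y ∈ l) (hxy : x ≠ y)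
    (hPx : P x) (hPy : P y) :
    ∃ p u m v r, l = p ++ u :: (m ++ v :: r) ∧ P u ∧ P v ∧ (∀ x ∈ p, ¬ P x) ∧ ∀ x ∈ r, ¬ P x := by
  obtain ⟨p, u, r, rfl, h1, h2⟩ := split_first P l ⟨x, hx, hPx⟩
  have : ∃ x ∈ r, P x := by
    simp at hx hy
    have a1 : x ∉ p := fun h => h2 x h hPx
    have a2 : y ∉ p := fun h => h2 y h hPy
    by_cases hxu : x = u
    · have hyu : y ≠ u := by rintro rfl; exact hxy hxu
      exact ⟨y, by tauto, hPy⟩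
    · exact ⟨x, by tauto, hPx⟩
  obtain ⟨p', u', r', rfl, h3, h4⟩ := split_last P r this
  exact ⟨p, u, p', u', r', rfl, h1, h3, h2, h4⟩

end
end PB


namespace PB
section
variable {V : Type} [Fintype V] [DecidableEq V] {G : SimpleGraph V}

/-- a path between two vertices, either an edge or through a connected set. -/
lemma link_path {K X Y O : Set V} (hK : Conn G K)
    (hX : (K ∩ X).Nonempty) (hY : (K ∩ Y).Nonempty) (hsub : K ⊆ X ∪ Y ∪ O)
    (hXY : Disjoint X Y) (hYO : Disjoint Y O) :
    ∃ x ∈ X, ∃ y ∈ Y, ∃ p : List V, p.Nodup ∧ (x :: (p ++ [y])).IsChain G.Adj ∧ ∀ v ∈ p, v ∈ O := by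
  rcases link G hK hX hY hsub hXY hYO with ⟨x, hx, y, hy, h⟩ | ⟨D, hDO, hD, _, h1, h2⟩
  · exact ⟨x, hx, y, hy, [], by simp, by simp [h], by simp⟩
  · obtain ⟨d, hd, x, hx, hdx⟩ := h1
    obtain ⟨d', hd', y, hy, hdy⟩ := h2
    obtain ⟨p, _, hp, hn, hc⟩ := path_between hD (a := x) (b := y) ⟨x, rfl, d, hd, hdx.symm⟩
      ⟨y, rfl, d', hd', hdy.symm⟩
    exact ⟨x, hx, y, hy, p, hn, hc, fun v hv => hDO (hp v hv)⟩

lemma step_missing {s : Set V} (hs : ∀ u v, G.Adj u v → u ∈ s)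
    (K3 : ∀ a b, Conn G (s \ {a, b})) {U : Submodule (ZMod 2) (Ch V)} {l : List V} {B : Set V}
    (h : IsCyc G l) (hB : Conn G B) (hBs : B ⊆ s) (hBC : ∀ v ∈ B, v ∉ l)
    (hcl : ∀ u ∈ B, ∀ v, v ∉ l → G.Adj u v → v ∈ B) (IH : Big G s U B.ncard)
    {i : V} (hi : i ∈ l) (hiN : ¬ Tch G {i} B) : cch l ∈ U := by
  obtain ⟨x, hx, hxi, _, hxN⟩ := att h hs K3 hB hBs hBC hcl hi hi
  obtain ⟨y, hy, hyx, _, hyN⟩ := att h hs K3 hB hBs hBC hcl hx hx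
  have hyi : y ≠ i := by rintro rfl; exact hiN hyN
  obtain ⟨r, h1, h2, h3⟩ := h.rot hi
  have hxr : x ∈ r := by have := (h3 x).2 hx; simpa [hxi] using this
  have hyr : y ∈ r := by have := (h3 y).2 hy; simpa [hyi] using this
  obtain ⟨p1, u, m, v, p2, rfl, hu, hv, hp1, hp2⟩ :=
    split_two (fun x => Tch G {x} B) r hxr hyr hyx.symm hxN hyN
  have e1 : cch ((u :: (m ++ v :: p2)) ++ (i :: p1)) = cch l := by
    rw [← h2, cch_swap]; simp
  have c1 : IsCyc G ((u :: (m ++ v :: p2)) ++ (i :: p1)) := by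
    apply IsCyc.swap; simpa using h1
  have hmem : ∀ w, w ∈ l ↔ (w = u ∨ w ∈ m ∨ w = v ∨ w ∈ p2 ++ i :: p1) := by
    intro w; rw [← h3]; simp; tauto
  have hJN : ∀ j ∈ p2 ++ i :: p1, ¬ Tch G {j} B := by
    intro j hj
    simp at hj
    rcases hj with hj | rfl | hj
    · exact hp2 j hj
    · exact hiN
    · exact hp1 j hj
  have hJs : ∀ j ∈ p2 ++ i :: p1, j ≠ u ∧ j ≠ v ∧ j ∉ m := by
    intro j hj
    refine ⟨?_, ?_, ?_⟩
    · rintro rfl; exact hJN _ hj hu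
    · rintro rfl; exact hJN _ hj hv
    · intro hjm
      have := c1.1
      simp only [List.cons_append, List.append_assoc, List.nodup_cons, List.nodup_append,
        List.mem_append, List.mem_cons] at this hj
      exact this.2.2.2 j hjm j (by tauto) rfl
  have hmuv : ∀ j ∈ m, j ≠ u ∧ j ≠ v := by
    intro j hj
    have := c1.1
    simp only [List.cons_append, List.append_assoc, List.nodup_cons, List.nodup_append,
        List.mem_append, List.mem_cons] at this
    refine ⟨?_, fun h => this.2.2.2 j hj v (by tauto) h⟩
    rintro rfl; tauto
  generalize hJ : p2 ++ i :: p1 = J at *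
  have hiJ : i ∈ J := by rw [← hJ]; simp
  have c2 : IsCyc G (u :: (m ++ v :: J)) := by rw [← hJ]; simpa using c1
  have e2 : cch (u :: (m ++ v :: J)) = cch l := by rw [← hJ, ← e1]; simp
  have huB : u ∉ B := fun h => hBC u h ((hmem u).2 (by simp))
  have hvB : v ∉ B := fun h => hBC v h ((hmem v).2 (by simp))
  obtain ⟨j, hj, t, ht, p, hpn, hpc, hpO⟩ := link_path (K := s \ {u, v}) (X := {w | w ∈ J})
    (Y := {w | w ∈ m} ∪ B) (O := {w | w ∈ s ∧ w ∉ l ∧ w ∉ B}) (K3 u v)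
    ⟨i, ⟨h.adj_mem hs i hi, by have := hJs i hiJ; simp; tauto⟩, hiJ⟩
    (by
      obtain ⟨b, hb⟩ := hB.1
      refine ⟨b, ⟨hBs hb, ?_⟩, Or.inr hb⟩
      rintro (rfl | rfl) <;> tauto)
    (by
      rintro w ⟨hw, hwuv⟩
      simp at hwuv
      have := hmem w
      by_cases hwl : w ∈ l
      · simp; tauto
      · simp; tauto)
    (by
      rw [Set.disjoint_left]
      rintro w hw (hw2 | hw2)
      · exact (hJs w hw).2.2 hw2
      · exact hBC w hw2 ((hmem w).2 (by simp at hw; tauto)))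
    (by
      rw [Set.disjoint_left]
      rintro w (hw2 | hw2) ⟨_, h4, h5⟩
      · exact h4 ((hmem w).2 (by simp at hw2; tauto))
      · exact h5 hw2)
  -- the vertex t is in m
  have htm : t ∈ m := by
    rcases ht with ht | ht
    · exact ht
    · exfalso
      have hrev : (t :: (p.reverse ++ [j])).IsChain G.Adj := by
        have : (t :: (p.reverse ++ [j])) = (j :: (p ++ [t])).reverse := by simp
        rw [this, List.isChain_reverse]
        exact hpc.imp fun _ _ h => h.symm
      cases hq : p.reverse with
      | nil =>
        rw [hq] at hrev
        simp at hrev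
        exact hJN j hj ⟨j, rfl, t, ht, hrev.symm⟩
      | cons q q' =>
        rw [hq] at hrev
        simp at hrev
        have hqp : q ∈ p := by rw [← List.mem_reverse, hq]; simp
        have := hpO q hqp
        exact this.2.2 (hcl t ht q this.2.1 hrev.1)
  simp only [Set.mem_ofPred_eq] at hj
  obtain ⟨m1, m2, rfl⟩ := List.append_of_mem htm
  obtain ⟨j1, j2, hJ2⟩ := List.append_of_mem hj
  rw [hJ2] at c2 e2
  have hperm : ∀ w, w ∈ t :: ((m2 ++ v :: j1) ++ j :: (j2 ++ u :: m1)) → w ∈ l := by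
    intro w hw
    rw [hmem, hJ2]
    simp at hw ⊢
    tauto
  have c3 : IsCyc G (t :: ((m2 ++ v :: j1) ++ j :: (j2 ++ u :: m1))) := by
    have := IsCyc.swap (l1 := u :: m1) (l2 := t :: (m2 ++ v :: (j1 ++ j :: j2))) (by simpa using c2)
    simpa using this
  have e3 : cch (t :: ((m2 ++ v :: j1) ++ j :: (j2 ++ u :: m1))) = cch l := by
    have := cch_swap (u :: m1) (t :: (m2 ++ v :: (j1 ++ j :: j2)))
    rw [← e2]
    simp at this ⊢
    exact this.symm
  rw [← e3]
  refine overlap hs c3 hB hBs (fun w hw hw2 => hBC w hw (hperm w hw2)) (p := p.reverse)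
    (by simpa using hpn) ?_ ?_ ?_ ?_ ?_ IH
  · have : (t :: (p.reverse ++ [j])) = (j :: (p ++ [t])).reverse := by simp
    rw [this, List.isChain_reverse]
    exact hpc.imp fun _ _ h => h.symm
  · intro w hw hw2
    exact (hpO w (by simpa using hw)).2.1 (hperm w hw2)
  · intro w hw
    exact (hpO w (by simpa using hw)).2.2
  · exact hv.symm.mono le_rfl (by simp)
  · exact hu.symm.mono le_rfl (by simp)

/-- case of a cycle with consecutive attachments. -/
lemma step_full {s : Set V} (hs : ∀ u v, G.Adj u v → u ∈ s)
    {U : Submodule (ZMod 2) (Ch V)} {a b c : V} {l : List V} {B D : Set V}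
    (h : IsCyc G (a :: (l ++ [b]))) (hB : Conn G B) (hBs : B ⊆ s)
    (hBC : ∀ v ∈ B, v ∉ a :: (l ++ [b]))
    (hN : ∀ v ∈ a :: (l ++ [b]), Tch G {v} B)
    (IH : Big G s U B.ncard) (hD : Conn G D) (hDB : ∀ v ∈ D, v ∉ B)
    (hDC : ∀ v ∈ D, v ∉ a :: (l ++ [b])) (ha : Tch G {a} D) (hb : Tch G {b} D)
    (hc : Tch G {c} D) (hcl : c ∈ l) : cch (a :: (l ++ [b])) ∈ U := by
  obtain ⟨m1, m2, rfl⟩ := List.append_of_mem hcl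
  by_cases hm1 : m1 = []
  · by_cases hm2 : m2 = []
    · subst hm1 hm2
      obtain ⟨p, hp0, hp, hpn, hpc⟩ := path_between hD ha hb
      simp only [List.nil_append, List.cons_append] at *
      have hth := theta (a := a) (b := b) (l1 := [c]) (l2 := []) h hpn hpc
        (fun v hv => hDC v (hp v hv))
      have hnd := h.1
      simp at hnd
      have e := hth.2.2
      simp only [List.nil_append, List.cons_append] at e
      rw [e]
      have cC1 := hth.1 (Or.inr hp0)
      have cC2 := hth.2.1 (Or.inr hp0)
      have hcB : c ∉ B := fun h => hBC c h (by simp)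
      have hcD : c ∉ D := fun h => hDC c h (by simp)
      have haD : a ∉ D := fun h => hDC a h (by simp)
      have hbD : b ∉ D := fun h => hDC b h (by simp)
      apply U.add_mem
      · obtain ⟨x, hx, p0, hp0, q, hqn, hqc, hqO⟩ := link_path (K := insert c D) (X := {c})
          (Y := {v | v ∈ p}) (O := {v | v ∈ D ∧ v ∉ p}) (hD.insert hc) ⟨c, by simp⟩ (by
            obtain ⟨w, hw⟩ := List.exists_mem_of_ne_nil _ hp0
            exact ⟨w, Or.inr (hp w hw), hw⟩)
          (by
            rintro w (rfl | hw)
            · simp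
            · by_cases hwp : w ∈ p
              · simp [hwp]
              · simp [hwp, hw])
          (by
            rw [Set.disjoint_left]
            rintro w rfl hw
            exact hcD (hp _ hw))
          (by
            rw [Set.disjoint_left]
            rintro w hw ⟨_, h2⟩
            exact h2 hw)
        have hx' : x = c := hx
        subst hx'
        obtain ⟨p1, p2, rfl⟩ := List.append_of_mem (show p0 ∈ p from hp0)
        have c3 : IsCyc G (x :: ((b :: p2.reverse) ++ p0 :: (p1.reverse ++ [a]))) := by
          have := IsCyc.swap (l1 := [a]) (l2 := x :: b :: (p2.reverse ++ p0 :: p1.reverse))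
            (by simpa using cC1)
          simpa using this
        have e3 : cch (x :: ((b :: p2.reverse) ++ p0 :: (p1.reverse ++ [a]))) =
            cch (a :: x :: b :: (p1 ++ p0 :: p2).reverse) := by
          have := cch_swap [a] (x :: b :: (p2.reverse ++ p0 :: p1.reverse))
          simp at this ⊢
          exact this.symm
        rw [← e3]
        refine overlap hs c3 hB hBs ?_ hqn hqc ?_ ?_ ?_ ?_ IH
        · intro w hw hw2
          have h3 := hBC w hw
          have h4 : w ∉ D := fun h => hDB w h hw
          have h5 := fun hh => h4 (hp w hh)
          simp at hw2 h3 h5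
          tauto
        · intro w hw hw2
          have h3 := hqO w hw
          have h4 := hDC w h3.1
          have h5 := h3.2
          simp at hw2 h4 h5
          tauto
        · intro w hw
          exact hDB w (hqO w hw).1
        · exact (hN b (by simp)).symm.mono le_rfl (by simp)
        · exact (hN a (by simp)).symm.mono le_rfl (by simp)
      · refine IH _ (B ∪ {c}) cC2 (hB.union (conn_singleton G c) (hN c (by simp)).symm) ?_ ?_
          (ncard_lt_union rfl hcB)
        · rintro w (hw | rfl)
          · exact hBs hw
          · exact h.adj_mem hs _ (by simp)
        · rintro w (hw | rfl) hw2
          · have h3 := hBC w hw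
            have h4 : w ∉ D := fun h => hDB w h hw
            have h5 := fun hh => h4 (hp w hh)
            simp at hw2 h3
            tauto
          · have h5 := fun hh => hcD (hp w hh)
            simp at hw2
            have h6 : w ≠ a := by rintro rfl; tauto
            have h7 : w ≠ b := by rintro rfl; tauto
            tauto
    · subst hm1
      obtain ⟨p, hp0, hp, hpn, hpc⟩ := path_between hD hc hb
      simp only [List.nil_append, List.cons_append] at *
      have c3 : IsCyc G (c :: (m2 ++ b :: [a])) := by
        have := IsCyc.swap (l1 := [a]) (l2 := c :: (m2 ++ [b])) (by simpa using h)
        simpa using this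
      have e3 : cch (c :: (m2 ++ b :: [a])) = cch (a :: c :: (m2 ++ [b])) := by
        have := cch_swap [a] (c :: (m2 ++ [b]))
        simp at this ⊢
        exact this.symm
      have hperm : ∀ w, w ∈ c :: (m2 ++ b :: [a]) → w ∈ a :: c :: (m2 ++ [b]) := by
        intro w hw; simp at hw ⊢; tauto
      rw [← e3]
      exact overlap' hs c3 hB hBs (fun v hv h => hBC v hv (hperm v h)) hpn hpc
        (fun v hv h => hDC v (hp v hv) (hperm v h)) (fun v hv => hDB v (hp v hv))
        (fun v hv => hN v (hperm v hv)) hm2 (by simp) IH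
  · obtain ⟨p, hp0, hp, hpn, hpc⟩ := path_between hD ha hc
    have e : a :: ((m1 ++ c :: m2) ++ [b]) = a :: (m1 ++ c :: (m2 ++ [b])) := by simp
    simp only [e] at h hBC hDC hN ⊢
    exact overlap' hs h hB hBs hBC hpn hpc (fun v hv => hDC v (hp v hv))
      (fun v hv => hDB v (hp v hv)) hN hm1 (by simp) IH

end
end PB


namespace PB
section
variable {V : Type} [Fintype V] [DecidableEq V] {G : SimpleGraph V}

lemma step_all {s : Set V} (hs : ∀ u v, G.Adj u v → u ∈ s)
    (K3 : ∀ a b, Conn G (s \ {a, b})) {U : Submodule (ZMod 2) (Ch V)}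
    (hU : ∀ l, Per G s l → cch l ∈ U) {l : List V} {B : Set V}
    (h : IsCyc G l) (hB : Conn G B) (hBs : B ⊆ s) (hBC : ∀ v ∈ B, v ∉ l)
    (IH : Big G s U B.ncard) : cch l ∈ U := by
  by_cases hcl : ∀ u ∈ B, ∀ v, v ∉ l → G.Adj u v → v ∈ B
  swap
  · push Not at hcl
    obtain ⟨u, hu, v, hv, huv, hvB⟩ := hcl
    refine IH l (B ∪ {v}) h (hB.union (conn_singleton G v) ⟨u, hu, v, rfl, huv⟩) ?_ ?_
      (ncard_lt_union rfl hvB)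
    · rintro w (hw | rfl)
      · exact hBs hw
      · exact hs _ _ huv.symm
    · rintro w (hw | rfl)
      · exact hBC w hw
      · exact hv
  by_cases hN : ∀ i ∈ l, Tch G {i} B
  swap
  · push Not at hN
    obtain ⟨i, hi, hiN⟩ := hN
    exact step_missing hs K3 h hB hBs hBC hcl IH hi hiN
  by_cases hind : ∀ u ∈ l, ∀ v ∈ l, G.Adj u v → cch l s(u, v) ≠ 0
  swap
  · push Not at hind
    obtain ⟨u, hu, v, hv, huv, h0⟩ := hind
    obtain ⟨l1, l2, h1, h2, h3⟩ := h.rot2 hu hv huv.ne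
    have hsp := h1.edge_split (by rw [h2]; exact h0)
    rw [← h2]
    exact overlap' hs h1 hB hBs (fun v hv h => hBC v hv ((h3 v).1 h)) (p := []) (by simp)
      (by simpa using huv) (by simp) (by simp) (fun v hv => hN v ((h3 v).1 hv)) hsp.1 hsp.2 IH
  by_cases hO : ∃ o, o ∈ {v | v ∈ s ∧ v ∉ l ∧ v ∉ B}
  swap
  · push Not at hO
    apply hU
    refine ⟨h, hind, ?_⟩
    have : s \ {v | v ∈ l} = B := by
      ext v
      have h1 := hO v
      have h2 := hBC v
      have h3 := @hBs v
      simp at h1 ⊢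
      tauto
    rw [this]
    exact hB
  obtain ⟨o, ho⟩ := hO
  obtain ⟨D, hDO, hoD, hD, hDcl⟩ := exists_comp G ho
  have hDcl' : ∀ u ∈ D, ∀ v, v ∉ l → G.Adj u v → v ∈ D := by
    intro u hu v hv huv
    refine hDcl u hu v ⟨hs _ _ huv.symm, hv, ?_⟩ huv
    intro hvB
    exact (hDO hu).2.2 (hcl v hvB u (hDO hu).2.1 huv.symm)
  have hDs : D ⊆ s := fun v hv => (hDO hv).1
  have hDl : ∀ v ∈ D, v ∉ l := fun v hv => (hDO hv).2.1
  have hDB : ∀ v ∈ D, v ∉ B := fun v hv => (hDO hv).2.2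
  have hxl : ∃ x, x ∈ l := by
    obtain ⟨x, y, l', rfl⟩ := h.cons
    exact ⟨x, by simp⟩
  obtain ⟨x, hx⟩ := hxl
  obtain ⟨a, ha, _, _, haD⟩ := att h hs K3 hD hDs hDl hDcl' hx hx
  obtain ⟨b, hb, hba, _, hbD⟩ := att h hs K3 hD hDs hDl hDcl' ha ha
  obtain ⟨c, hc, hca, hcb, hcD⟩ := att h hs K3 hD hDs hDl hDcl' ha hb
  obtain ⟨l1, l2, h1, h2, h3⟩ := h.rot2 ha hb hba.symm
  have hcl12 : c ∈ l1 ∨ c ∈ l2 := by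
    have := (h3 c).2 hc
    simp at this
    tauto
  rw [← h2]
  by_cases hl2 : l2 = []
  · subst hl2
    exact step_full hs h1 hB hBs (fun v hv h => hBC v hv ((h3 v).1 h))
      (fun v hv => hN v ((h3 v).1 hv)) IH hD hDB (fun v hv h => hDl v hv ((h3 v).1 h))
      haD hbD hcD (by simpa using hcl12)
  by_cases hl1 : l1 = []
  · subst hl1
    have e := cch_swap [a] (b :: l2)
    simp only [List.cons_append, List.nil_append] at e
    have h1' := swap_aux h1
    have h3' : ∀ v, v ∈ b :: (l2 ++ [a]) ↔ v ∈ l := by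
      intro v; rw [← h3]; simp; tauto
    rw [List.nil_append, e]
    exact step_full hs h1' hB hBs (fun v hv h => hBC v hv ((h3' v).1 h))
      (fun v hv => hN v ((h3' v).1 hv)) IH hD hDB (fun v hv h => hDl v hv ((h3' v).1 h))
      hbD haD hcD (by simpa using hcl12)
  obtain ⟨p, hp0, hp, hpn, hpc⟩ := path_between hD haD hbD
  exact overlap' hs h1 hB hBs (fun v hv h => hBC v hv ((h3 v).1 h)) hpn hpc
    (fun v hv h => hDl v (hp v hv) ((h3 v).1 h)) (fun v hv => hDB v (hp v hv))
    (fun v hv => hN v ((h3 v).1 hv)) hl1 hl2 IH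

lemma big_all {s : Set V} (hs : ∀ u v, G.Adj u v → u ∈ s)
    (K3 : ∀ a b, Conn G (s \ {a, b})) {U : Submodule (ZMod 2) (Ch V)}
    (hU : ∀ l, Per G s l → cch l ∈ U) (k : ℕ) : Big G s U (Fintype.card V - k) := by
  induction k with
  | zero =>
    intro l B _ _ _ _ h
    have : B.ncard ≤ Fintype.card V := by
      rw [← Nat.card_eq_fintype_card]; exact Set.ncard_le_card B
    omega
  | succ k ih =>
    intro l B h1 h2 h3 h4 h5
    by_cases h6 : Fintype.card V - k < B.ncard
    · exact ih l B h1 h2 h3 h4 h6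
    · apply step_all hs K3 hU h1 h2 h3 h4
      have : B.ncard = Fintype.card V - k := by omega
      rw [this]
      exact ih

/-- Tutte: the cycle space is generated by the peripheral cycles. -/
theorem tutte {s : Set V} (hs : ∀ u v, G.Adj u v → u ∈ s)
    (K3 : ∀ a b, Conn G (s \ {a, b})) (h4 : 4 ≤ s.ncard) (U : Submodule (ZMod 2) (Ch V))
    (hU : ∀ l, Per G s l → cch l ∈ U) : Zc G ≤ U := by
  have hbig : ∀ l B, IsCyc G l → Conn G B → B ⊆ s → (∀ v ∈ B, v ∉ l) → cch l ∈ U := by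
    intro l B h1 h2 h3 h4
    refine big_all hs K3 hU (Fintype.card V) l B h1 h2 h3 h4 ?_
    have := (Set.ncard_pos (Set.toFinite B)).2 h2.1
    omega
  apply cyc_span
  intro l hl
  by_cases hv : ∃ v ∈ s, v ∉ l
  · obtain ⟨v, hv, hvl⟩ := hv
    exact hbig l {v} hl (conn_singleton G v) (by simpa using hv) (by simpa using hvl)
  push Not at hv
  obtain ⟨a, b, l', rfl⟩ := hl.cons
  have hl' : l' ≠ [] := by
    rintro rfl
    have := hl.2.1
    simp at this
  obtain ⟨r, z, rfl⟩ := List.eq_nil_or_concat l' |>.resolve_left hl'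
  rw [List.concat_eq_append] at *
  have hnd := hl.1
  simp only [List.nodup_cons, List.mem_cons, List.mem_append, List.not_mem_nil, or_false] at hnd
  obtain ⟨d, hd, hdn⟩ : ∃ d ∈ s, d ∉ ({a, b, z} : Set V) := by
    by_contra hcon
    push Not at hcon
    have h5 : s.ncard ≤ ({a, b, z} : Set V).ncard := Set.ncard_le_ncard hcon (Set.toFinite _)
    have h6 : ({a, b, z} : Set V).ncard ≤ 3 := by
      have := Set.ncard_insert_le a {b, z}
      have := Set.ncard_insert_le b {z}
      have := Set.ncard_singleton z
      omega
    omega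
  simp at hdn
  obtain ⟨a', ha', c, hc, hac⟩ := (K3 b z).2 {a} (by
      have := hl.adj_mem hs a (by simp)
      simp only [Set.singleton_subset_iff]
      refine ⟨this, ?_⟩
      rintro (rfl | rfl)
      · simp at hnd
      · simp at hnd) ⟨a, rfl⟩ ⟨d, ⟨hd, by simp; tauto⟩, by simp; tauto⟩
  have : a' = a := ha'
  subst this
  have hcr : c ∈ r := by
    have h7 := hv c hc.1.1
    have h8 := hc.1.2
    have h9 := hc.2
    simp at h7 h8 h9
    tauto
  obtain ⟨r1, r2, rfl⟩ := List.append_of_mem hcr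
  have e : a' :: b :: (r1 ++ c :: r2 ++ [z]) = a' :: ((b :: r1) ++ c :: (r2 ++ [z])) := by simp
  rw [e] at hl ⊢
  have hth := theta hl (p := []) (by simp) (by simpa using hac) (by simp)
  rw [hth.2.2]
  have hch := arc_chain hl
  have hls := hl.adj_mem hs
  have hnd := hl.1
  simp only [List.nodup_cons, List.nodup_append, List.mem_append, List.mem_cons,
    List.cons_append] at hnd
  simp only [List.mem_append, List.mem_cons, List.cons_append] at hls
  apply U.add_mem
  · refine hbig _ {v | v ∈ r2 ++ [z]} (hth.1 (by simp)) (conn_list _ (by simp) hch.2) ?_ ?_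
    · intro v hv; simp at hv; apply hls; simp; tauto
    · have e2 := hl.1
      have : (a' :: ((b :: r1) ++ c :: (r2 ++ [z]))) = (a' :: ((b :: r1) ++ [c])) ++ (r2 ++ [z]) := by
        simp
      rw [this, List.nodup_append] at e2
      intro v hv hv2
      exact e2.2.2 v (by simpa using hv2) v hv rfl
  · refine hbig _ {v | v ∈ b :: r1} (hth.2.1 (by simp)) (conn_list _ (by simp) hch.1) ?_ ?_
    · intro v hv; simp at hv; apply hls; simp; tauto
    · have e2 := (swap_aux hl).1
      have : (c :: ((r2 ++ [z]) ++ a' :: (b :: r1))) = (c :: ((r2 ++ [z]) ++ [a'])) ++ (b :: r1) := by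
        simp
      rw [this, List.nodup_append] at e2
      intro v hv hv2
      exact e2.2.2 v (by simp at hv2 ⊢; tauto) v hv rfl

end
end PB


namespace PB
section
variable {V : Type} [Fintype V] [DecidableEq V] {G : SimpleGraph V}

lemma k33 {A1 A2 A3 B1 B2 B3 : Set V} (hA1 : Conn G A1) (hA2 : Conn G A2) (hA3 : Conn G A3)
    (hB1 : Conn G B1) (hB2 : Conn G B2) (hB3 : Conn G B3)
    (d1 : ∀ v ∈ A1, v ∉ A2 ∧ v ∉ A3 ∧ v ∉ B1 ∧ v ∉ B2 ∧ v ∉ B3)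
    (d2 : ∀ v ∈ A2, v ∉ A3 ∧ v ∉ B1 ∧ v ∉ B2 ∧ v ∉ B3)
    (d3 : ∀ v ∈ A3, v ∉ B1 ∧ v ∉ B2 ∧ v ∉ B3)
    (d4 : ∀ v ∈ B1, v ∉ B2 ∧ v ∉ B3) (d5 : ∀ v ∈ B2, v ∉ B3)
    (t11 : Tch G A1 B1) (t12 : Tch G A1 B2) (t13 : Tch G A1 B3)
    (t21 : Tch G A2 B1) (t22 : Tch G A2 B2) (t23 : Tch G A2 B3)
    (t31 : Tch G A3 B1) (t32 : Tch G A3 B2) (t33 : Tch G A3 B3) :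
    (completeBipartiteGraph (Fin 3) (Fin 3)).IsMinorOf G := by
  refine ⟨Sum.elim ![A1, A2, A3] ![B1, B2, B3], ?_, ?_, ?_⟩
  · rintro (i | i) <;> fin_cases i
    · exact hA1.connected
    · exact hA2.connected
    · exact hA3.connected
    · exact hB1.connected
    · exact hB2.connected
    · exact hB3.connected
  · intro i j hij
    rw [Set.disjoint_left]
    intro v
    have e1 := d1 v
    have e2 := d2 v
    have e3 := d3 v
    have e4 := d4 v
    have e5 := d5 v
    clear d1 d2 d3 d4 d5 t11 t12 t13 t21 t22 t23 t31 t32 t33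
    rcases i with i | i <;> rcases j with j | j <;> fin_cases i <;> fin_cases j <;>
      first | (exact absurd rfl hij) | (simp; grind)
  · have key : ∀ i j : Fin 3, Tch G (![A1, A2, A3] i) (![B1, B2, B3] j) := by
      intro i j
      fin_cases i <;> fin_cases j <;> assumption
    rintro (i | i) (j | j) h
    · simp at h
    · exact key i j
    · exact (key j i).symm
    · simp at h

lemma k5 {A1 A2 A3 A4 A5 : Set V} (hA1 : Conn G A1) (hA2 : Conn G A2) (hA3 : Conn G A3)
    (hA4 : Conn G A4) (hA5 : Conn G A5)
    (d1 : ∀ v ∈ A1, v ∉ A2 ∧ v ∉ A3 ∧ v ∉ A4 ∧ v ∉ A5)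
    (d2 : ∀ v ∈ A2, v ∉ A3 ∧ v ∉ A4 ∧ v ∉ A5)
    (d3 : ∀ v ∈ A3, v ∉ A4 ∧ v ∉ A5)
    (d4 : ∀ v ∈ A4, v ∉ A5)
    (t12 : Tch G A1 A2) (t13 : Tch G A1 A3) (t14 : Tch G A1 A4) (t15 : Tch G A1 A5)
    (t23 : Tch G A2 A3) (t24 : Tch G A2 A4) (t25 : Tch G A2 A5)
    (t34 : Tch G A3 A4) (t35 : Tch G A3 A5) (t45 : Tch G A4 A5) :
    (completeGraph (Fin 5)).IsMinorOf G := by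
  refine ⟨![A1, A2, A3, A4, A5], ?_, ?_, ?_⟩
  · intro i
    fin_cases i
    · exact hA1.connected
    · exact hA2.connected
    · exact hA3.connected
    · exact hA4.connected
    · exact hA5.connected
  · intro i j hij
    rw [Set.disjoint_left]
    intro v
    have e1 := d1 v
    have e2 := d2 v
    have e3 := d3 v
    have e4 := d4 v
    fin_cases i <;> fin_cases j <;>
      first | (exact absurd rfl hij) | (simp; tauto)
  · intro i j h
    have h' : i ≠ j := by simpa using h
    have t21 := t12.symm
    have t31 := t13.symm
    have t41 := t14.symm
    have t51 := t15.symm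
    have t32 := t23.symm
    have t42 := t24.symm
    have t52 := t25.symm
    have t43 := t34.symm
    have t53 := t35.symm
    have t54 := t45.symm
    fin_cases i <;> fin_cases j <;>
      first | (exact absurd rfl h') | assumption

lemma pch_zero {l : List V} (hl : l.Nodup) {z : Ch V} (hz : ∀ e, z e ≠ 0 → pch l e ≠ 0)
    (hb : ∀ v, bd z v = 0) : z = 0 := by
  induction l with
  | nil =>
    funext e
    by_contra h
    exact hz e h rfl
  | cons a l ih =>
    cases l with
    | nil =>
      funext e
      by_contra h
      exact hz e h rfl
    | cons b l =>
      have hl' := List.nodup_cons.1 hl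
      have hab : z s(a, b) = 0 := by
        rw [← hb a, bd]
        symm
        apply Finset.sum_eq_single b
        · intro u _ hu
          by_contra h
          have h1 := hz _ h
          rw [pch_cons_cons, Pi.add_apply] at h1
          have h2 : sg a b s(a, u) = 0 := by
            simp only [sg]
            rw [if_neg]
            simp only [Sym2.eq_iff]
            rintro (⟨_, h⟩ | ⟨h, h'⟩)
            · exact hu h
            · exact hu (h'.trans h)
          rw [h2, zero_add] at h1
          exact hl'.1 (pch_mem h1).1
        · simp
      apply ih hl'.2
      intro e he h0
      have := hz e he
      rw [pch_cons_cons, Pi.add_apply, h0, add_zero] at this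
      simp only [sg] at this
      by_cases h : e = s(a, b)
      · rw [h] at he; exact he hab
      · simp [h] at this

lemma Per.congr {s : Set V} {l l' : List V} (h : Per G s l) (h1 : IsCyc G l')
    (h2 : cch l' = cch l) (h3 : ∀ v, v ∈ l' ↔ v ∈ l) : Per G s l' := by
  have : {v | v ∈ l'} = {v | v ∈ l} := by ext v; exact h3 v
  refine ⟨h1, fun u hu v hv huv => ?_, ?_⟩
  · rw [h2]
    exact h.2.1 u ((h3 u).1 hu) v ((h3 v).1 hv) huv
  · rw [this]; exact h.2.2

lemma IsCyc.norm {l : List V} (h : IsCyc G l) {x y : V} (hxy : cch l s(x, y) ≠ 0) :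
    ∃ P, P ≠ [] ∧ IsCyc G (x :: (P ++ [y])) ∧ cch (x :: (P ++ [y])) = cch l ∧
      ∀ v, v ∈ x :: (P ++ [y]) ↔ v ∈ l := by
  have hadj : G.Adj x y := h.cch_mem.1 _ hxy
  have hm := pch_mem hxy
  have hm' : x ∈ l ∧ y ∈ l := by
    have := fun v (hv : v ∈ l.take 1) => List.mem_of_mem_take hv
    simp only [List.mem_append] at hm
    have h1 := this x
    have h2 := this y
    tauto
  obtain ⟨l1, l2, h1, h2, h3⟩ := h.rot2 hm'.1 hm'.2 hadj.ne
  by_cases e2 : l2 = []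
  · subst e2
    refine ⟨l1, ?_, h1, h2, h3⟩
    rintro rfl
    have := h1.2.1
    simp at this
  · by_cases e1 : l1 = []
    · subst e1
      refine ⟨l2.reverse, by simpa using e2, ?_, ?_, ?_⟩
      · have := h1.reverse
        have := IsCyc.swap (l1 := l2.reverse ++ [y]) (l2 := [x]) (by simpa using this)
        simpa using this
      · rw [← h2, ← cch_reverse]
        have := cch_swap (l2.reverse ++ [y]) [x]
        simp at this
        have e := @cch_reverse _ _ _ (x :: (l2.reverse ++ [y]))
        rw [e]
        have e' := @cch_reverse _ _ _ (x :: y :: l2)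
        simp at e'
        rw [← this, e']
        simp
      · intro v
        rw [← h3]; simp; tauto
    · exfalso
      apply hxy
      rw [← h2]
      exact h1.chord_zero e1 e2

lemma third_nbr {s : Set V} (hs : ∀ u v, G.Adj u v → u ∈ s)
    (K3 : ∀ a b, Conn G (s \ {a, b})) (h4 : 4 ≤ s.ncard) {l : List V} (hl : IsCyc G l)
    (hind : ∀ u ∈ l, ∀ v ∈ l, G.Adj u v → cch l s(u, v) ≠ 0) {a : V} (ha : a ∈ l) :
    ∃ c, c ∉ l ∧ G.Adj a c := by
  obtain ⟨r, h1, h2, h3⟩ := hl.rot ha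
  obtain ⟨a', b, l', h5⟩ := h1.cons
  simp at h5
  obtain ⟨rfl, rfl⟩ := h5
  have hl' : l' ≠ [] := by
    rintro rfl
    have := h1.2.1
    simp at this
  obtain ⟨r, z, rfl⟩ := List.eq_nil_or_concat l' |>.resolve_left hl'
  rw [List.concat_eq_append] at *
  have hnd := h1.1
  simp only [List.nodup_cons, List.mem_cons, List.mem_append, List.not_mem_nil, or_false] at hnd
  obtain ⟨d, hd, hdn⟩ : ∃ d ∈ s, d ∉ ({a, b, z} : Set V) := by
    by_contra hcon
    push Not at hcon
    have h5 : s.ncard ≤ ({a, b, z} : Set V).ncard := Set.ncard_le_ncard hcon (Set.toFinite _)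
    have h6 : ({a, b, z} : Set V).ncard ≤ 3 := by
      have := Set.ncard_insert_le a {b, z}
      have := Set.ncard_insert_le b {z}
      have := Set.ncard_singleton z
      omega
    omega
  simp at hdn
  obtain ⟨a', ha', c, hc, hac⟩ := (K3 b z).2 {a} (by
      have := h1.adj_mem hs a (by simp)
      simp only [Set.singleton_subset_iff]
      refine ⟨this, ?_⟩
      rintro (rfl | rfl)
      · simp at hnd
      · simp at hnd) ⟨a, rfl⟩ ⟨d, ⟨hd, by simp; tauto⟩, by simp; tauto⟩
  have : a' = a := ha'
  subst this
  refine ⟨c, fun hcl => ?_, hac⟩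
  have hcr : c ∈ r := by
    have h7 := (h3 c).2 hcl
    have h8 := hc.1.2
    have h9 := hc.2
    simp at h7 h8 h9
    tauto
  obtain ⟨r1, r2, rfl⟩ := List.append_of_mem hcr
  have e : a' :: b :: (r1 ++ c :: r2 ++ [z]) = a' :: ((b :: r1) ++ c :: (r2 ++ [z])) := by simp
  rw [e] at h1 h2
  apply hind a' ha c hcl hac
  rw [← h2]
  exact h1.chord_zero (by simp) (by simp)

lemma per_aux {s : Set V} (hs : ∀ u v, G.Adj u v → u ∈ s)
    (K3 : ∀ a b, Conn G (s \ {a, b})) (h4 : 4 ≤ s.ncard)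
    (hP : ¬ (completeBipartiteGraph (Fin 3) (Fin 3)).IsMinorOf G)
    {a b x : V} {A A' Q R : List V}
    (p1 : Per G s (a :: (A ++ b :: A'))) (p2 : Per G s (a :: (Q ++ b :: R)))
    (hQ0 : Q ≠ []) (hQ : ∀ v ∈ Q, v ∉ a :: (A ++ b :: A')) (hxA : x ∈ A) (hxR : x ∈ R) : False := by
  obtain ⟨c1, i1, n1⟩ := p1
  obtain ⟨c2, i2, n2⟩ := p2
  have hA0 : A ≠ [] := by rintro rfl; simp at hxA
  have hR0 : R ≠ [] := by rintro rfl; simp at hxR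
  have q1 := isCyc_iff.1 c1
  have q2 := isCyc_iff.1 c2
  have hA0' : A' ≠ [] := by
    rintro rfl
    have hab : G.Adj a b := by
      have := q1.2.2.2
      simp at this
      exact this.symm
    exact i2 a (by simp) b (by simp) hab (c2.chord_zero hQ0 hR0)
  have hch1 := arc_chain c1
  have hch2 := arc_chain c2
  have m1 := c1.adj_mem hs
  have m2 := c2.adj_mem hs
  have nd1 := c1.1
  have nd2 := c2.1
  simp only [List.nodup_cons, List.nodup_append, List.mem_append, List.mem_cons] at nd1 nd2 m1 m2 hQ
  have f1 : ∀ v ∈ A, v ≠ a ∧ v ≠ b ∧ v ∉ A' ∧ v ∉ Q := by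
    intro v hv
    have h1 : v ≠ a := by rintro rfl; tauto
    have h2 : v ≠ b := fun h => nd1.2.2.2 v hv b (Or.inl rfl) h
    have h3 : v ∉ A' := fun h => nd1.2.2.2 v hv v (Or.inr h) rfl
    have := hQ v
    tauto
  have f2 : ∀ v ∈ A', v ≠ a ∧ v ≠ b ∧ v ∉ Q := by
    intro v hv
    have h1 : v ≠ a := by rintro rfl; tauto
    have h2 : v ≠ b := by rintro rfl; tauto
    have := hQ v
    tauto
  have f3 : ∀ v ∈ R, v ≠ a ∧ v ≠ b ∧ v ∉ Q := by
    intro v hv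
    have h1 : v ≠ a := by rintro rfl; tauto
    have h2 : v ≠ b := by rintro rfl; tauto
    have h3 : v ∉ Q := fun h => nd2.2.2.2 v h v (Or.inr hv) rfl
    tauto
  have hab : a ≠ b := by rintro rfl; tauto
  set O : Set V := {v | v ∈ s ∧ v ∉ a :: (A ++ b :: A') ∧ v ∉ Q} with hO
  have hK : ∃ K : Set V, Conn G K ∧ x ∈ K ∧ (∃ y ∈ K, y ∈ A') ∧ ∀ v ∈ K, v ∈ s ∧ v ≠ a ∧ v ≠ b ∧ v ∉ Q := by
    by_cases hm : ∃ y ∈ R, y ∈ A'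
    · refine ⟨{v | v ∈ R}, conn_list _ hR0 hch2.2, hxR, hm, fun v hv => ?_⟩
      simp at hv
      have := f3 v hv
      have := m2 v
      tauto
    · push Not at hm
      obtain ⟨c, hc, hxc⟩ := third_nbr hs K3 h4 c2 i2 (a := x) (by simp [hxR])
      refine ⟨insert x (s \ {v | v ∈ a :: (Q ++ b :: R)}), n2.insert ⟨x, rfl, c, ⟨hs _ _ hxc.symm, hc⟩, hxc⟩,
        by simp, ?_, ?_⟩
      · obtain ⟨y, hy⟩ := List.exists_mem_of_ne_nil _ hA0'
        refine ⟨y, Or.inr ⟨m1 y (by tauto), ?_⟩, hy⟩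
        have := f2 y hy
        have := fun h => hm y h hy
        simp; tauto
      · rintro v (rfl | hv)
        · have := f1 v hxA
          have := m1 v
          tauto
        · have h1 := hv.1
          have h2 := hv.2
          simp at h2
          tauto
  obtain ⟨K, hK, hxK, ⟨y, hyK, hyA'⟩, hKs⟩ := hK
  rcases link G (X := {v | v ∈ A}) (Y := {v | v ∈ A'}) (O := O) hK ⟨x, hxK, hxA⟩ ⟨y, hyK, hyA'⟩
    (by
      intro v hv
      have := hKs v hv
      simp [O]
      tauto)
    (by
      rw [Set.disjoint_left]
      intro v hv
      exact (f1 v hv).2.2.1)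
    (by
      rw [Set.disjoint_left]
      intro v hv hv2
      apply hv2.2.1
      simp at hv
      simp; tauto) with ⟨p, hp, q, hq, hpq⟩ | ⟨D, hDO, hD, hDcl, t1, t2⟩
  · simp at hp hq
    obtain ⟨A1, A2, rfl⟩ := List.append_of_mem hp
    obtain ⟨B1, B2, rfl⟩ := List.append_of_mem hq
    have e := cch_swap (a :: A1) (p :: (A2 ++ b :: (B1 ++ q :: B2)))
    have c3 : IsCyc G (p :: ((A2 ++ b :: B1) ++ q :: (B2 ++ a :: A1))) := by
      have := IsCyc.swap (l1 := (a :: A1)) (l2 := (p :: (A2 ++ b :: (B1 ++ q :: B2)))) (by simpa using c1)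
      simpa using this
    apply i1 p (by simp) q (by simp) hpq
    have := c3.chord_zero (by simp) (by simp)
    simp at e this ⊢
    rw [e]
    exact this
  · have t3 : Tch G D {v | v ∈ Q} := by
      obtain ⟨q, hq⟩ := List.exists_mem_of_ne_nil _ hQ0
      obtain ⟨u, hu, v, hv, huv⟩ := n1.2 D (fun v hv => ⟨(hDO hv).1, (hDO hv).2.1⟩) hD.1
        ⟨q, ⟨m2 q (by tauto), by have := hQ q hq; simp; tauto⟩, fun h => (hDO h).2.2 hq⟩
      refine ⟨u, hu, v, ?_, huv⟩
      by_contra hvQ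
      exact hv.2 (hDcl u hu v ⟨hv.1.1, hv.1.2, hvQ⟩ huv)
    apply hP
    have r1 := arc_ends q1.2.2.1 hA0
    have r2 := arc_ends q1.2.2.2 hA0'
    have r3 := arc_ends q2.2.2.1 hQ0
    refine k33 (conn_singleton G a) (conn_singleton G b) hD (conn_list _ hA0 hch1.1)
      (conn_list _ hA0' hch1.2) (conn_list _ hQ0 hch2.1) ?_ ?_ ?_ ?_ ?_ r1.1 r2.2 r3.1 r1.2 r2.1 r3.2
      t1 t2 t3
    · rintro v rfl
      refine ⟨hab, fun h => (hDO h).2.1 (by simp), fun h => (f1 v h).1 rfl, fun h => (f2 v h).1 rfl,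
        fun h => hQ v h (Or.inl rfl)⟩
    · rintro v rfl
      refine ⟨fun h => (hDO h).2.1 (by simp), fun h => (f1 v h).2.1 rfl, fun h => (f2 v h).2.1 rfl,
        fun h => hQ v h (Or.inr (Or.inr (Or.inl rfl)))⟩
    · intro v hv
      have := hDO hv
      simp [O] at this
      simp; tauto
    · intro v hv
      have := f1 v hv
      simp; tauto
    · intro v hv
      have := f2 v hv
      simp; tauto

end
end PB


namespace PB
section
variable {V : Type} [Fintype V] [DecidableEq V] {G : SimpleGraph V}

lemma per_aux2 {s : Set V} (hs : ∀ u v, G.Adj u v → u ∈ s)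
    (K3 : ∀ a b, Conn G (s \ {a, b})) (h4 : 4 ≤ s.ncard)
    (hP : ¬ (completeBipartiteGraph (Fin 3) (Fin 3)).IsMinorOf G)
    {a b x : V} {l Q R : List V}
    (p1 : Per G s l) (p2 : Per G s (a :: (Q ++ b :: R)))
    (hQ0 : Q ≠ []) (hQ : ∀ v ∈ Q, v ∉ l) (ha : a ∈ l) (hb : b ∈ l) (hxl : x ∈ l) (hxR : x ∈ R) :
    False := by
  have nd2 := p2.1.1
  simp only [List.nodup_cons, List.nodup_append, List.mem_append, List.mem_cons] at nd2
  have hab : a ≠ b := by rintro rfl; tauto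
  have hxa : x ≠ a := by rintro rfl; tauto
  have hxb : x ≠ b := by rintro rfl; tauto
  obtain ⟨A, A', h1, h2, h3⟩ := p1.1.rot2 ha hb hab
  have hx := (h3 x).2 hxl
  simp only [List.mem_append, List.mem_cons] at hx
  have hx' : x ∈ A ∨ x ∈ A' := by tauto
  rcases hx' with hx' | hx'
  · exact per_aux hs K3 h4 hP (p1.congr h1 h2 h3) p2 hQ0 (fun v hv h => hQ v hv ((h3 v).1 h)) hx' hxR
  · have c : IsCyc G (a :: (A'.reverse ++ b :: A.reverse)) := by
      have := h1.reverse
      have := IsCyc.swap (l1 := A'.reverse ++ b :: A.reverse) (l2 := [a]) (by simpa using this)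
      simpa using this
    have e : cch (a :: (A'.reverse ++ b :: A.reverse)) = cch l := by
      rw [← h2, ← @cch_reverse _ _ _ (a :: (A ++ b :: A'))]
      have := cch_swap (A'.reverse ++ b :: A.reverse) [a]
      simp at this ⊢
      exact this.symm
    have m : ∀ v, v ∈ a :: (A'.reverse ++ b :: A.reverse) ↔ v ∈ l := by
      intro v; rw [← h3]; simp; tauto
    exact per_aux hs K3 h4 hP (p1.congr c e m) p2 hQ0 (fun v hv h => hQ v hv ((m v).1 h))
      (by simpa using hx') hxR

lemma cch_mem' {l : List V} {x y : V} (hxy : cch l s(x, y) ≠ 0) : x ∈ l ∧ y ∈ l := by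
  have hm := pch_mem hxy
  have := fun v (hv : v ∈ l.take 1) => List.mem_of_mem_take hv
  simp only [List.mem_append] at hm
  have h1 := this x
  have h2 := this y
  tauto

lemma per_inter {s : Set V} (hs : ∀ u v, G.Adj u v → u ∈ s)
    (K3 : ∀ a b, Conn G (s \ {a, b})) (h4 : 4 ≤ s.ncard)
    (hP : ¬ (completeBipartiteGraph (Fin 3) (Fin 3)).IsMinorOf G)
    {x y w : V} {P1 P2 : List V}
    (p1 : Per G s (x :: (P1 ++ [y]))) (p2 : Per G s (x :: (P2 ++ [y])))
    (hne : cch (x :: (P1 ++ [y])) ≠ cch (x :: (P2 ++ [y]))) (hw1 : w ∈ P1) (hw2 : w ∈ P2) : False := by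
  have c1 := cch_eq x y P1 []
  have c2 := cch_eq x y P2 []
  have nd1 := p1.1.1
  have nd2 := p2.1.1
  have hoff : ∃ v ∈ P2, v ∉ x :: (P1 ++ [y]) := by
    by_contra hcon
    push Not at hcon
    have hsub : ∀ v ∈ x :: (P2 ++ [y]), v ∈ x :: (P1 ++ [y]) := by
      intro v hv
      simp at hv
      rcases hv with rfl | hv | rfl
      · simp
      · exact hcon v hv
      · simp
    have hyx1 : cch (x :: (P1 ++ [y])) s(x, y) ≠ 0 := by
      have e := cch_swap (x :: P1) [y]
      have := (swap_aux p1.1).edge_one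
      rw [Sym2.eq_swap]
      simp only [List.cons_append, List.nil_append] at e
      rw [e]
      exact this
    have hyx2 : cch (x :: (P2 ++ [y])) s(x, y) ≠ 0 := by
      have e := cch_swap (x :: P2) [y]
      have := (swap_aux p2.1).edge_one
      rw [Sym2.eq_swap]
      simp only [List.cons_append, List.nil_append] at e
      rw [e]
      exact this
    have hle : ∀ e, cch (x :: (P2 ++ [y])) e ≠ 0 → cch (x :: (P1 ++ [y])) e ≠ 0 := by
      intro e
      induction e with | _ u v =>
      intro he
      have := cch_mem' he
      exact p1.2.1 u (hsub u this.1) v (hsub v this.2) (p2.1.cch_mem.1 _ he)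
    have hz : cch (x :: (P1 ++ [y])) + cch (x :: (P2 ++ [y])) = 0 := by
      apply pch_zero nd1
      · intro e he
        have h1 : cch (x :: (P1 ++ [y])) e ≠ 0 := by
          intro h0
          apply he
          have : cch (x :: (P2 ++ [y])) e = 0 := by
            by_contra h
            exact hle e h h0
          simp [h0, this]
        rw [c1, Pi.add_apply] at h1
        have h2 : e ≠ s(x, y) := by
          rintro rfl
          apply he
          rw [Pi.add_apply, z2_ne hyx1, z2_ne hyx2, z2_self]
        have h3 : pch (y :: ([] ++ [x])) e = 0 := by
          simp [pch, sg]
          rw [Sym2.eq_swap]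
          exact h2
        rw [h3, add_zero] at h1
        exact h1
      · intro v
        have h1 := p1.1.cch_mem.2 v
        have h2 := p2.1.cch_mem.2 v
        rw [bd_add, Pi.add_apply, h1, h2, add_zero]
    apply hne
    have := congrArg (· + cch (x :: (P2 ++ [y]))) hz
    simpa [add_assoc, ch_self] using this
  obtain ⟨p, q0, r, e1, hq0, hp⟩ := split_first (fun v => v ∉ x :: (P1 ++ [y])) P2 hoff
  obtain ⟨q, b, r', e2, hb, hq⟩ := split_first (fun v => v ∈ x :: (P1 ++ [y])) (r ++ [y])
    ⟨y, by simp, by simp⟩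
  obtain ⟨p', a, e3⟩ := (List.eq_nil_or_concat (x :: p)).resolve_left (by simp)
  rw [List.concat_eq_append] at e3
  have ha : a ∈ x :: (P1 ++ [y]) := by
    have : a ∈ x :: p := by rw [e3]; simp
    simp only [List.mem_cons] at this
    rcases this with rfl | h
    · simp
    · exact not_not.1 (hp a h)
  have e4 : x :: (P2 ++ [y]) = p' ++ (a :: ((q0 :: q) ++ b :: r')) := by
    have : x :: (P2 ++ [y]) = (x :: p) ++ q0 :: (r ++ [y]) := by rw [e1]; simp
    rw [this, e2, e3]; simp
  have hQ : ∀ v ∈ q0 :: q, v ∉ x :: (P1 ++ [y]) := by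
    intro v hv
    simp only [List.mem_cons] at hv
    rcases hv with rfl | hv
    · exact hq0
    · exact hq v hv
  have p3 : Per G s (a :: ((q0 :: q) ++ b :: (r' ++ p'))) := by
    have e5 : a :: ((q0 :: q) ++ b :: (r' ++ p')) = (a :: ((q0 :: q) ++ b :: r')) ++ p' := by simp
    rw [e5]
    refine p2.congr ?_ ?_ ?_
    · apply IsCyc.swap; rw [← e4]; exact p2.1
    · rw [cch_swap, ← e4]
    · intro v; rw [e4]; simp only [List.mem_append]; tauto
  have hmem : ∀ v, v ∈ x :: (P2 ++ [y]) → v ∈ x :: (P1 ++ [y]) → v ≠ a → v ≠ b → v ∈ r' ++ p' := by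
    intro v hv hv1 hva hvb
    rw [e4] at hv
    have := fun h => hQ v h hv1
    simp only [List.mem_append, List.mem_cons] at hv this ⊢
    tauto
  have hex : ∃ v, v ∈ x :: (P2 ++ [y]) ∧ v ∈ x :: (P1 ++ [y]) ∧ v ≠ a ∧ v ≠ b := by
    simp only [List.nodup_cons, List.nodup_append, List.mem_append, List.mem_cons,
      List.not_mem_nil, or_false] at nd1
    have h1 : w ≠ x := by rintro rfl; tauto
    have h2 : w ≠ y := fun h => nd1.2.2.2 w hw1 y rfl h
    have h3 : x ≠ y := by rintro rfl; tauto
    by_cases k1 : w ≠ a ∧ w ≠ b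
    · exact ⟨w, by simp [hw2], by simp [hw1], k1⟩
    by_cases k2 : x ≠ a ∧ x ≠ b
    · exact ⟨x, by simp, by simp, k2⟩
    by_cases k3 : y ≠ a ∧ y ≠ b
    · exact ⟨y, by simp, by simp, k3⟩
    exfalso
    grind
  obtain ⟨v, v1, v2, v3, v4⟩ := hex
  exact per_aux2 hs K3 h4 hP p1 p3 (by simp) hQ ha hb v2 (hmem v v1 v2 v3 v4)

lemma comp_sub {O D D' : Set V} (hD : Conn G D) (hDO : D ⊆ O)
    (hcl : ∀ u ∈ D', ∀ v ∈ O, G.Adj u v → v ∈ D') {v : V} (hv : v ∈ D) (hv' : v ∈ D') : D ⊆ D' := by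
  intro w hw
  by_contra hw'
  obtain ⟨p, hp, q, hq, hpq⟩ := hD.2 (D ∩ D') Set.inter_subset_left ⟨v, hv, hv'⟩
    ⟨w, hw, fun h => hw' h.2⟩
  exact hq.2 ⟨hq.1, hcl p hp.2 q (hDO hq.1) hpq⟩

lemma three_aux {O P1 P2 K : Set V} (h1 : Conn G P1) (h2 : Conn G P2) (hK : Conn G K)
    (h1K : P1 ⊆ K) (h2K : P2 ⊆ K) (hKs : K ⊆ P1 ∪ P2 ∪ O) (d : Disjoint P1 P2) (d2 : Disjoint P2 O) :
    ∃ X ⊆ O, Conn G (P1 ∪ X) ∧ Tch G (P1 ∪ X) P2 ∧ (X = ∅ ∨ (Conn G X ∧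
      (∀ u ∈ X, ∀ v ∈ O, G.Adj u v → v ∈ X) ∧ Tch G X P1 ∧ Tch G X P2)) := by
  rcases link G hK (h1.1.mono fun v hv => ⟨h1K hv, hv⟩) (h2.1.mono fun v hv => ⟨h2K hv, hv⟩) hKs d d2
    with h | ⟨D, hDO, hD, hcl, t1, t2⟩
  · exact ⟨∅, by simp, by simpa using h1, by simpa using h, Or.inl rfl⟩
  · exact ⟨D, hDO, h1.union hD t1.symm, t2.mono (by simp) le_rfl, Or.inr ⟨hD, hcl, t1, t2⟩⟩

lemma three_per {s : Set V} (hs : ∀ u v, G.Adj u v → u ∈ s)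
    (K3 : ∀ a b, Conn G (s \ {a, b})) (h4 : 4 ≤ s.ncard) (hP : G.IsPlanar)
    {x y : V} {P1 P2 P3 : List V} (e1 : P1 ≠ []) (e2 : P2 ≠ []) (e3 : P3 ≠ [])
    (p1 : Per G s (x :: (P1 ++ [y]))) (p2 : Per G s (x :: (P2 ++ [y])))
    (p3 : Per G s (x :: (P3 ++ [y])))
    (n12 : cch (x :: (P1 ++ [y])) ≠ cch (x :: (P2 ++ [y])))
    (n13 : cch (x :: (P1 ++ [y])) ≠ cch (x :: (P3 ++ [y])))
    (n23 : cch (x :: (P2 ++ [y])) ≠ cch (x :: (P3 ++ [y]))) : False := by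
  have d12 : ∀ v ∈ P1, v ∉ P2 := fun v h h' => per_inter hs K3 h4 hP.2 p1 p2 n12 h h'
  have d13 : ∀ v ∈ P1, v ∉ P3 := fun v h h' => per_inter hs K3 h4 hP.2 p1 p3 n13 h h'
  have d23 : ∀ v ∈ P2, v ∉ P3 := fun v h h' => per_inter hs K3 h4 hP.2 p2 p3 n23 h h'
  have q : ∀ P, Per G s (x :: (P ++ [y])) → P ≠ [] → Conn G {v | v ∈ P} ∧ Tch G {x} {v | v ∈ P} ∧
      Tch G {y} {v | v ∈ P} ∧ (∀ v ∈ P, v ∈ s ∧ v ≠ x ∧ v ≠ y) ∧ G.Adj x y := by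
    intro P hP hP0
    have h1 := arc_chain hP.1
    have h2 := isCyc_iff.1 hP.1
    have h3 := arc_ends h2.2.2.1 hP0
    have nd := hP.1.1
    simp only [List.nodup_cons, List.nodup_append, List.mem_append, List.mem_cons,
      List.not_mem_nil, or_false] at nd
    refine ⟨conn_list _ hP0 h1.1, h3.1, h3.2, fun v hv => ⟨hP.1.adj_mem hs v (by simp [hv]), ?_, ?_⟩, ?_⟩
    · rintro rfl; tauto
    · exact fun h => nd.2.2.2 v hv y rfl h
    · have := h2.2.2.2
      simp at this
      exact this.symm
  obtain ⟨a1, a2, a3, a4, hxy⟩ := q P1 p1 e1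
  obtain ⟨b1, b2, b3, b4, -⟩ := q P2 p2 e2
  obtain ⟨c1, c2, c3, c4, -⟩ := q P3 p3 e3
  set O : Set V := {v | v ∈ s ∧ v ≠ x ∧ v ≠ y ∧ v ∉ P1 ∧ v ∉ P2 ∧ v ∉ P3} with hO
  have noD : ∀ D ⊆ O, Conn G D → Tch G D {v | v ∈ P1} → Tch G D {v | v ∈ P2} →
      Tch G D {v | v ∈ P3} → False := by
    intro D hDO hD t1 t2 t3
    apply hP.2
    refine k33 (conn_singleton G x) (conn_singleton G y) hD a1 b1 c1 ?_ ?_ ?_ ?_ ?_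
      a2 b2 c2 a3 b3 c3 t1 t2 t3
    · rintro v rfl
      exact ⟨hxy.ne, fun h => (hDO h).2.1 rfl, fun h => (a4 v h).2.1 rfl, fun h => (b4 v h).2.1 rfl,
        fun h => (c4 v h).2.1 rfl⟩
    · rintro v rfl
      exact ⟨fun h => (hDO h).2.2.1 rfl, fun h => (a4 v h).2.2 rfl, fun h => (b4 v h).2.2 rfl,
        fun h => (c4 v h).2.2 rfl⟩
    · intro v hv
      exact (hDO hv).2.2.2
    · intro v hv
      exact ⟨d12 v hv, d13 v hv⟩
    · exact d23
  have dO : ∀ P, (P = P1 ∨ P = P2 ∨ P = P3) → Disjoint {v | v ∈ P} O := by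
    intro P hP
    rw [Set.disjoint_left]
    intro v hv hv'
    simp [O] at hv'
    rcases hP with rfl | rfl | rfl <;> tauto
  have sub : ∀ P Q R : List V, Per G s (x :: (R ++ [y])) → (∀ v ∈ P, v ∈ s ∧ v ≠ x ∧ v ≠ y) →
      (∀ v ∈ P, v ∉ R) → {v | v ∈ P} ⊆ s \ {v | v ∈ x :: (R ++ [y])} := by
    intro P Q R hR h1 h2 v hv
    have := h1 v hv
    have := h2 v hv
    simp
    tauto
  obtain ⟨X1, hX1O, x1, t1, o1⟩ := three_aux (O := O) a1 b1 p3.2.2 (sub P1 P2 P3 p3 a4 d13)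
    (sub P2 P1 P3 p3 b4 d23) (by
      rintro v ⟨h1, h2⟩
      simp at h2
      simp [O]; tauto) (Set.disjoint_left.2 d12) (dO P2 (by simp))
  obtain ⟨X2, hX2O, x2, t2, o2⟩ := three_aux (O := O) b1 c1 p1.2.2
    (sub P2 P1 P1 p1 b4 fun v h h' => d12 v h' h)
    (sub P3 P1 P1 p1 c4 fun v h h' => d13 v h' h) (by
      rintro v ⟨h1, h2⟩
      simp at h2
      simp [O]; tauto) (Set.disjoint_left.2 d23) (dO P3 (by simp))
  obtain ⟨X3, hX3O, x3, t3, o3⟩ := three_aux (O := O) c1 a1 p2.2.2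
    (sub P3 P1 P2 p2 c4 fun v h h' => d23 v h' h)
    (sub P1 P1 P2 p2 a4 d12) (by
      rintro v ⟨h1, h2⟩
      simp at h2
      simp [O]; tauto) (Set.disjoint_left.2 fun v h h' => d13 v h' h) (dO P1 (by simp))
  have key : ∀ X Y : Set V, ∀ P Q R : List V, X ⊆ O → Y ⊆ O → (X = ∅ ∨ (Conn G X ∧
      (∀ u ∈ X, ∀ v ∈ O, G.Adj u v → v ∈ X) ∧ Tch G X {v | v ∈ P} ∧ Tch G X {v | v ∈ Q})) →
      (Y = ∅ ∨ (Conn G Y ∧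
      (∀ u ∈ Y, ∀ v ∈ O, G.Adj u v → v ∈ Y) ∧ Tch G Y {v | v ∈ Q} ∧ Tch G Y {v | v ∈ R})) →
      (∀ D ⊆ O, Conn G D → Tch G D {v | v ∈ P} → Tch G D {v | v ∈ Q} →
      Tch G D {v | v ∈ R} → False) → ∀ v ∈ X, v ∉ Y := by
    intro X Y P Q R hX hY oX oY nD v hv hv'
    rcases oX with rfl | ⟨f1, f2, f3, f4⟩
    · exact hv
    rcases oY with rfl | ⟨g1, g2, g3, g4⟩
    · exact hv'
    have := comp_sub f1 hX g2 hv hv'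
    exact nD Y hY g1 (f3.mono this le_rfl) g3 g4
  have k12 := key X1 X2 P1 P2 P3 hX1O hX2O o1 o2 noD
  have k23 := key X2 X3 P2 P3 P1 hX2O hX3O o2 o3 fun D a b c d e => noD D a b e c d
  have k31 := key X3 X1 P3 P1 P2 hX3O hX1O o3 o1 fun D a b c d e => noD D a b d e c
  apply hP.1
  refine k5 (conn_singleton G x) (conn_singleton G y) x1 x2 x3 ?_ ?_ ?_ ?_
    ⟨x, rfl, y, rfl, hxy⟩ (a2.mono le_rfl Set.subset_union_left) (b2.mono le_rfl Set.subset_union_left)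
    (c2.mono le_rfl Set.subset_union_left) (a3.mono le_rfl Set.subset_union_left)
    (b3.mono le_rfl Set.subset_union_left) (c3.mono le_rfl Set.subset_union_left)
    (t1.mono le_rfl Set.subset_union_left) (t3.symm.mono Set.subset_union_left le_rfl)
    (t2.mono le_rfl Set.subset_union_left)
  · rintro v rfl
    refine ⟨hxy.ne, ?_, ?_, ?_⟩
    · rintro (h | h)
      · exact (a4 v h).2.1 rfl
      · exact (hX1O h).2.1 rfl
    · rintro (h | h)
      · exact (b4 v h).2.1 rfl
      · exact (hX2O h).2.1 rfl
    · rintro (h | h)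
      · exact (c4 v h).2.1 rfl
      · exact (hX3O h).2.1 rfl
  · rintro v rfl
    refine ⟨?_, ?_, ?_⟩
    · rintro (h | h)
      · exact (a4 v h).2.2 rfl
      · exact (hX1O h).2.2.1 rfl
    · rintro (h | h)
      · exact (b4 v h).2.2 rfl
      · exact (hX2O h).2.2.1 rfl
    · rintro (h | h)
      · exact (c4 v h).2.2 rfl
      · exact (hX3O h).2.2.1 rfl
  · rintro v (h | h)
    · refine ⟨?_, ?_⟩
      · rintro (h' | h')
        · exact d12 v h h'
        · exact (hX2O h').2.2.2.1 h
      · rintro (h' | h')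
        · exact d13 v h h'
        · exact (hX3O h').2.2.2.1 h
    · refine ⟨?_, ?_⟩
      · rintro (h' | h')
        · exact (hX1O h).2.2.2.2.1 h'
        · exact k12 v h h'
      · rintro (h' | h')
        · exact (hX1O h).2.2.2.2.2 h'
        · exact k31 v h' h
  · rintro v (h | h)
    · rintro (h' | h')
      · exact d23 v h h'
      · exact (hX3O h').2.2.2.2.1 h
    · rintro (h' | h')
      · exact (hX2O h).2.2.2.2.2 h'
      · have hfin := k23 v h h'
        exact hfin

/-- each edge lies in at most two peripheral cycles. -/
theorem per_two {s : Set V} (hs : ∀ u v, G.Adj u v → u ∈ s)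
    (K3 : ∀ a b, Conn G (s \ {a, b})) (h4 : 4 ≤ s.ncard) (hP : G.IsPlanar)
    {l1 l2 l3 : List V} (p1 : Per G s l1) (p2 : Per G s l2) (p3 : Per G s l3) {e : Sym2 V}
    (h1 : cch l1 e ≠ 0) (h2 : cch l2 e ≠ 0) (h3 : cch l3 e ≠ 0)
    (n12 : cch l1 ≠ cch l2) (n13 : cch l1 ≠ cch l3) (n23 : cch l2 ≠ cch l3) : False := by
  induction e with | _ x y =>
  obtain ⟨P1, a1, a2, a3, a4⟩ := p1.1.norm h1
  obtain ⟨P2, b1, b2, b3, b4⟩ := p2.1.norm h2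
  obtain ⟨P3, c1, c2, c3, c4⟩ := p3.1.norm h3
  refine three_per hs K3 h4 hP a1 b1 c1 (p1.congr a2 a3 a4) (p2.congr b2 b3 b4) (p3.congr c2 c3 c4)
    ?_ ?_ ?_
  · rw [a3, b3]; exact n12
  · rw [a3, c3]; exact n13
  · rw [b3, c3]; exact n23

end
end PB


namespace PB
section
variable {V : Type} {G : SimpleGraph V}

lemma conn_iff_const {A : Set V} : Conn G A ↔ A.Nonempty ∧ ∀ P : V → Prop,
    (∀ u ∈ A, ∀ v ∈ A, G.Adj u v → P u → P v) → ∀ u ∈ A, ∀ v ∈ A, P u → P v := by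
  constructor
  · intro h
    refine ⟨h.1, fun P hP u hu v hv hPu => ?_⟩
    by_contra hPv
    obtain ⟨p, hp, q, hq, hpq⟩ := h.2 {x | x ∈ A ∧ P x} (fun x hx => hx.1) ⟨u, hu, hPu⟩
      ⟨v, hv, fun h => hPv h.2⟩
    exact hq.2 ⟨hq.1, hP p hp.1 q hq.1 hpq hp.2⟩
  · rintro ⟨h1, h2⟩
    refine ⟨h1, fun X hX hX1 hX2 => ?_⟩
    by_contra hcon
    push Not at hcon
    obtain ⟨x, hx⟩ := hX1
    obtain ⟨y, hy, hy'⟩ := hX2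
    refine hy' (h2 (· ∈ X) (fun u hu v hv huv hu' => ?_) x (hX hx) y hy hx)
    by_contra hv'
    exact hcon u hu' v ⟨hv, hv'⟩ huv

lemma minor_mono {W : Type} {H : SimpleGraph W} {G' : SimpleGraph V} (hle : G' ≤ G)
    (h : H.IsMinorOf G') : H.IsMinorOf G := by
  obtain ⟨f, h1, h2, h3⟩ := h
  refine ⟨f, fun w => (h1 w).mono ?_, h2, fun w1 w2 hw => ?_⟩
  · intro u v huv
    exact hle huv
  · obtain ⟨a, ha, b, hb, hab⟩ := h3 hw
    exact ⟨a, ha, b, hb, hle hab⟩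

lemma planar_mono {G' : SimpleGraph V} (hle : G' ≤ G) (h : G.IsPlanar) : G'.IsPlanar :=
  ⟨fun h' => h.1 (minor_mono hle h'), fun h' => h.2 (minor_mono hle h')⟩

lemma minor_contract {W : Type} {H : SimpleGraph W} (hH : ∀ w, ∃ w', H.Adj w w')
    {G' : SimpleGraph V} {x y : V} {D : Set V}
    (hG : ∀ u v, G'.Adj u v → G.Adj u v ∨ (u = x ∧ v = y) ∨ (u = y ∧ v = x))
    (hD : Conn G D) (hDn : ∀ u ∈ D, ∀ v, ¬ G'.Adj u v) (tx : Tch G {x} D) (ty : Tch G {y} D)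
    (h : H.IsMinorOf G') : H.IsMinorOf G := by
  obtain ⟨f, h1, h2, h3⟩ := h
  have c1 : ∀ w, Conn G' (f w) := fun w => conn_of_connected (h1 w)
  obtain ⟨x', hx', dx, hdx, hxd⟩ := tx
  have : x' = x := hx'
  subst this
  obtain ⟨y', hy', dy, hdy, hyd⟩ := ty
  have : y' = y := hy'
  subst this
  have hfD : ∀ w, ∀ v ∈ f w, v ∉ D := by
    intro w v hv hvD
    by_cases hs : ∃ v' ∈ f w, v' ≠ v
    · obtain ⟨v', hv', hne⟩ := hs
      obtain ⟨p, hp, q, hq, hpq⟩ := (c1 w).2 {v} (by simpa using hv) ⟨v, rfl⟩ ⟨v', hv', hne⟩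
      have : p = v := hp
      subst this
      exact hDn p hvD q hpq
    · push Not at hs
      obtain ⟨w', hw'⟩ := hH w
      obtain ⟨a, ha, b, hb, hab⟩ := h3 hw'
      have := hs a ha
      subst this
      exact hDn _ hvD _ hab
  have hxw : ∀ w w', x' ∈ f w → x' ∈ f w' → w = w' := by
    intro w w' hw hw'
    by_contra hne
    exact Set.disjoint_left.1 (h2 hne) hw hw'
  refine ⟨fun w => f w ∪ {v | x' ∈ f w ∧ v ∈ D}, fun w => ?_, ?_, ?_⟩
  · apply Conn.connected
    show Conn G (f w ∪ {v | x' ∈ f w ∧ v ∈ D})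
    by_cases hxf : x' ∈ f w
    · have e : f w ∪ {v | x' ∈ f w ∧ v ∈ D} = f w ∪ D := by
        ext v; simp [hxf]
      rw [e, conn_iff_const]
      refine ⟨⟨x', Or.inl hxf⟩, fun P hP => ?_⟩
      have hPD := (conn_iff_const.1 hD).2 P fun u hu v hv => hP u (Or.inr hu) v (Or.inr hv)
      have e1 : P x' ↔ P dx := ⟨hP _ (Or.inl hxf) _ (Or.inr hdx) hxd,
        hP _ (Or.inr hdx) _ (Or.inl hxf) hxd.symm⟩
      have e2 : y' ∈ f w → (P y' ↔ P dy) := fun hyf => ⟨hP _ (Or.inl hyf) _ (Or.inr hdy) hyd,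
        hP _ (Or.inr hdy) _ (Or.inl hyf) hyd.symm⟩
      have e3 : P dx ↔ P dy := ⟨hPD _ hdx _ hdy, hPD _ hdy _ hdx⟩
      have hPf := (conn_iff_const.1 (c1 w)).2 P (by
        intro u hu v hv huv
        rcases hG u v huv with h | ⟨rfl, rfl⟩ | ⟨rfl, rfl⟩
        · exact hP u (Or.inl hu) v (Or.inl hv) h
        · have := e2 hv; tauto
        · have := e2 hu; tauto)
      have key : ∀ u ∈ f w ∪ D, (P u ↔ P x') := by
        rintro u (hu | hu)
        · exact ⟨hPf u hu x' hxf, hPf x' hxf u hu⟩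
        · rw [e1]; exact ⟨hPD u hu dx hdx, hPD dx hdx u hu⟩
      intro u hu v hv h
      exact (key v hv).2 ((key u hu).1 h)
    · have e : f w ∪ {v | x' ∈ f w ∧ v ∈ D} = f w := by
        ext v; simp [hxf]
      rw [e, conn_iff_const]
      refine ⟨(c1 w).1, fun P hP => (conn_iff_const.1 (c1 w)).2 P fun u hu v hv huv => ?_⟩
      rcases hG u v huv with h | ⟨rfl, rfl⟩ | ⟨rfl, rfl⟩
      · exact hP u hu v hv h
      · exact absurd hu hxf
      · exact absurd hv hxf
  · intro w w' hne
    rw [Set.disjoint_left]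
    rintro v (hv | ⟨hv, hvD⟩) (hv' | ⟨hv', hvD'⟩)
    · exact Set.disjoint_left.1 (h2 hne) hv hv'
    · exact hfD w v hv hvD'
    · exact hfD w' v hv' hvD
    · exact hne (hxw _ _ hv hv')
  · intro w w' hw
    obtain ⟨a, ha, b, hb, hab⟩ := h3 hw
    rcases hG a b hab with h | ⟨rfl, rfl⟩ | ⟨rfl, rfl⟩
    · exact ⟨a, Or.inl ha, b, Or.inl hb, h⟩
    · exact ⟨dy, Or.inr ⟨ha, hdy⟩, b, Or.inl hb, hyd.symm⟩
    · exact ⟨a, Or.inl ha, dy, Or.inr ⟨hb, hdy⟩, hyd⟩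

lemma planar_contract {G' : SimpleGraph V} {x y : V} {D : Set V}
    (hG : ∀ u v, G'.Adj u v → G.Adj u v ∨ (u = x ∧ v = y) ∨ (u = y ∧ v = x))
    (hD : Conn G D) (hDn : ∀ u ∈ D, ∀ v, ¬ G'.Adj u v) (tx : Tch G {x} D) (ty : Tch G {y} D)
    (h : G.IsPlanar) : G'.IsPlanar := by
  refine ⟨fun h' => h.1 (minor_contract ?_ hG hD hDn tx ty h'),
    fun h' => h.2 (minor_contract ?_ hG hD hDn tx ty h')⟩
  · intro w
    exact ⟨w + 1, by simp⟩
  · rintro (i | i)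
    · exact ⟨Sum.inr 0, by simp⟩
    · exact ⟨Sum.inl 0, by simp⟩

end

section
variable {V : Type} [Fintype V] [DecidableEq V] {G : SimpleGraph V}

/-- weight of a chain -/
def wt (w : Sym2 V → ℕ) (z : Ch V) : ℕ := ∑ e, if z e ≠ 0 then w e else 0

open Classical in
/-- total weight of a graph -/
noncomputable def ew (G : SimpleGraph V) (w : Sym2 V → ℕ) : ℕ := ∑ e, if e ∈ G.edgeSet then w e else 0

lemma ew_one : ew G (fun _ => 1) = G.edgeSet.ncard := by
  classical
  unfold ew
  rw [Set.ncard_eq_toFinset_card', Finset.sum_boole]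
  simp

lemma wt_le_ew {w : Sym2 V → ℕ} {z : Ch V} (hz : ∀ e, z e ≠ 0 → e ∈ G.edgeSet) :
    wt w z ≤ ew G w := by
  unfold wt ew
  apply Finset.sum_le_sum
  intro e _
  by_cases h : z e ≠ 0
  · rw [if_pos h, if_pos (hz e h)]
  · rw [if_neg h]; exact Nat.zero_le _

lemma edge_choose {s : Finset V} (hs : ∀ u v, G.Adj u v → u ∈ s) :
    G.edgeSet.ncard ≤ s.card.choose 2 := by
  classical
  rw [← Sym2.card_image_offDiag, ← Set.ncard_coe_finset]
  apply Set.ncard_le_ncard _ (Set.toFinite _)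
  intro e he
  induction e with | _ u v =>
  have h : G.Adj u v := he
  simp only [Finset.coe_image, Set.mem_image, Finset.mem_coe, Finset.mem_offDiag]
  exact ⟨(u, v), ⟨hs _ _ h, hs _ _ h.symm, h.ne⟩, rfl⟩

/-- The Euler inequality from a spanning family covering every edge at most twice. -/
lemma euler_span {g : ℕ} {s : Finset V} (hs : ∀ u v, G.Adj u v → u ∈ s) {w : Sym2 V → ℕ}
    (hw : ∀ z ∈ Zc G, z ≠ 0 → g ≤ wt w z) (hn : s.card ≤ G.edgeSet.ncard)
    (h4 : 1 ≤ s.card) {T : Set (Ch V)} (hTZ : T ⊆ Zc G) (hsp : Zc G ≤ Submodule.span (ZMod 2) T)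
    (htwo : ∀ e, ∀ z1 ∈ T, ∀ z2 ∈ T, ∀ z3 ∈ T, z1 e ≠ 0 → z2 e ≠ 0 → z3 e ≠ 0 → z1 ≠ z2 → z1 ≠ z3 →
      z2 ≠ z3 → False) :
    g * (G.edgeSet.ncard + 2) ≤ 2 * ew G w + g * s.card := by
  classical
  obtain ⟨b, hbT, hbs, hbl⟩ := exists_linearIndependent (ZMod 2) T
  have hspan : Submodule.span (ZMod 2) b = Zc G := by
    rw [hbs]
    apply le_antisymm
    · exact Submodule.span_le.2 hTZ
    · exact hsp
  have hbfin : b.Finite := Set.toFinite b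
  set B := hbfin.toFinset with hB
  have hcard : B.card = Module.finrank (ZMod 2) (Zc G) := by
    rw [← hspan, finrank_span_set_eq_card hbl]
    congr 1
    ext; simp [B]
  have hd := dim_Zc s hs (Finset.card_pos.1 (by omega))
  have hB1 : 1 ≤ B.card := by omega
  have hBT : ∀ z ∈ B, z ∈ T := fun z hz => hbT (by simpa [B] using hz)
  have hne : ∑ z ∈ B, z ≠ 0 := by
    intro h0
    have h1 := (linearIndependent_subtype_iff.1 hbl)
    have h1' : LinearIndepOn (ZMod 2) id (B : Set (Ch V)) := by
      simpa [B] using h1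
    have h2 := linearIndepOn_finset_iff.1 h1' (fun _ => 1) (by simpa using h0)
    obtain ⟨z, hz⟩ := Finset.card_pos.1 hB1
    have := h2 z hz
    simp at this
  have hmem : ∑ z ∈ B, z ∈ Zc G := Submodule.sum_mem _ fun z hz => hTZ (hBT z hz)
  have hz0 : ∀ z ∈ B, z ≠ 0 := by
    intro z hz h0
    have := hbl.ne_zero ⟨z, by simpa [B] using hz⟩
    exact this h0
  have main : ∑ z ∈ B, wt w z + wt w (∑ z ∈ B, z) ≤ 2 * ew G w := by
    unfold wt ew
    rw [Finset.sum_comm, ← Finset.sum_add_distrib, Finset.mul_sum]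
    apply Finset.sum_le_sum
    intro e _
    have e1 : ∑ z ∈ B, (if z e ≠ 0 then w e else 0) = (B.filter (fun z => z e ≠ 0)).card * w e := by
      rw [← Finset.sum_filter, Finset.sum_const, smul_eq_mul]
    have e2 : (∑ z ∈ B, z) e = ((B.filter (fun z => z e ≠ 0)).card : ZMod 2) := by
      rw [Finset.sum_apply, ← Finset.sum_boole]
      apply Finset.sum_congr rfl
      intro z _
      by_cases h : z e ≠ 0
      · rw [if_pos h, z2_ne h]
      · rw [if_neg h]; simpa using h
    have hle : (B.filter (fun z => z e ≠ 0)).card ≤ 2 := by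
      by_contra hcon
      push Not at hcon
      obtain ⟨z1, z2, z3, h1, h2, h3, n1, n2, n3⟩ := Finset.two_lt_card_iff.1 hcon
      simp only [Finset.mem_filter] at h1 h2 h3
      exact htwo e z1 (hBT _ h1.1) z2 (hBT _ h2.1) z3 (hBT _ h3.1) h1.2 h2.2 h3.2 n1 n2 n3
    rw [e1, e2]
    by_cases he : e ∈ G.edgeSet
    · rw [if_pos he]
      interval_cases hk : (B.filter (fun z => z e ≠ 0)).card
      · simp
      · simp; omega
      · have : ((2 : ℕ) : ZMod 2) = 0 := by decide
        rw [if_neg (by rw [this]; simp)]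
        omega
    · have : (B.filter (fun z => z e ≠ 0)) = ∅ := by
        apply Finset.filter_eq_empty_iff.2
        intro z hz h
        exact he ((hTZ (hBT z hz)).1 e h)
      rw [this]; simp
  have low : B.card * g ≤ ∑ z ∈ B, wt w z := by
    rw [← smul_eq_mul]
    exact Finset.card_nsmul_le_sum _ _ _ fun z hz => hw z (hTZ (hBT z hz)) (hz0 z hz)
  have low2 := hw _ hmem hne
  have : G.edgeSet.ncard + 2 ≤ (B.card + 1) + s.card := by omega
  have := Nat.mul_le_mul_left g this
  nlinarith

/-- The 3-connected case. -/
lemma case3 {g : ℕ} {s : Finset V} (hs : ∀ u v, G.Adj u v → u ∈ s) {w : Sym2 V → ℕ}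
    (hP : G.IsPlanar) (hw : ∀ z ∈ Zc G, z ≠ 0 → g ≤ wt w z) (hn : s.card ≤ G.edgeSet.ncard)
    (h4 : 4 ≤ s.card) (K3 : ∀ a b, Conn G ((s : Set V) \ {a, b})) :
    g * (G.edgeSet.ncard + 2) ≤ 2 * ew G w + g * s.card := by
  have hs' : ∀ u v, G.Adj u v → u ∈ (s : Set V) := hs
  have h4' : 4 ≤ (s : Set V).ncard := by rw [Set.ncard_coe_finset]; exact h4
  refine euler_span hs hw hn (by omega) (T := {z | ∃ l, Per G (s : Set V) l ∧ cch l = z}) ?_ ?_ ?_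
  · rintro z ⟨l, hl, rfl⟩
    exact hl.1.cch_mem
  · exact tutte hs' K3 h4' _ fun l hl => Submodule.subset_span ⟨l, hl, rfl⟩
  · rintro e z1 ⟨l1, p1, rfl⟩ z2 ⟨l2, p2, rfl⟩ z3 ⟨l3, p3, rfl⟩ h1 h2 h3 n1 n2 n3
    exact per_two hs' K3 h4' hP p1 p2 p3 h1 h2 h3 n1 n2 n3

end
end PB


namespace PB
section
variable {V : Type} [Fintype V] [DecidableEq V] {G : SimpleGraph V}

/-- restriction of a graph to a vertex set -/
def res (G : SimpleGraph V) (A : Finset V) : SimpleGraph V where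
  Adj u v := G.Adj u v ∧ u ∈ A ∧ v ∈ A
  symm := ⟨fun u v h => ⟨h.1.symm, h.2.2, h.2.1⟩⟩
  loopless := ⟨fun u h => h.1.ne rfl⟩

/-- restriction of a graph to a vertex set, without a given edge -/
def rsx (G : SimpleGraph V) (A : Finset V) (x y : V) : SimpleGraph V where
  Adj u v := G.Adj u v ∧ u ∈ A ∧ v ∈ A ∧ s(u, v) ≠ s(x, y)
  symm := ⟨fun u v h => ⟨h.1.symm, h.2.2.1, h.2.1, by rw [Sym2.eq_swap]; exact h.2.2.2⟩⟩
  loopless := ⟨fun u h => h.1.ne rfl⟩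

/-- a single edge -/
def sge (x y : V) (h : x ≠ y) : SimpleGraph V where
  Adj u v := s(u, v) = s(x, y)
  symm := ⟨fun u v h => by rw [Sym2.eq_swap]; exact h⟩
  loopless := ⟨fun u h' => by
    rcases Sym2.eq_iff.1 h' with ⟨a, b⟩ | ⟨a, b⟩
    · exact h (a.symm.trans b)
    · exact h (b.symm.trans a)⟩

lemma ew_add {G1 G2 : SimpleGraph V} (w : Sym2 V → ℕ)
    (h1 : ∀ u v, G.Adj u v ↔ G1.Adj u v ∨ G2.Adj u v)
    (h2 : ∀ u v, G1.Adj u v → ¬ G2.Adj u v) : ew G w = ew G1 w + ew G2 w := by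
  unfold ew
  rw [← Finset.sum_add_distrib]
  apply Finset.sum_congr rfl
  intro e _
  induction e with | _ u v =>
  have a1 : s(u, v) ∈ G.edgeSet ↔ s(u, v) ∈ G1.edgeSet ∨ s(u, v) ∈ G2.edgeSet := h1 u v
  have a2 : s(u, v) ∈ G1.edgeSet → s(u, v) ∉ G2.edgeSet := h2 u v
  by_cases b1 : s(u, v) ∈ G1.edgeSet
  · have b2 := a2 b1
    rw [if_pos (a1.2 (Or.inl b1)), if_pos b1, if_neg b2, add_zero]
  · by_cases b2 : s(u, v) ∈ G2.edgeSet
    · rw [if_pos (a1.2 (Or.inr b2)), if_pos b2, if_neg b1, zero_add]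
    · rw [if_neg (by tauto), if_neg b1, if_neg b2]

lemma ew_sge {x y : V} (h : x ≠ y) (w : Sym2 V → ℕ) : ew (sge x y h) w = w s(x, y) := by
  unfold ew
  rw [Finset.sum_eq_single s(x, y)]
  · rw [if_pos]; rfl
  · intro e _ he
    induction e with | _ u v =>
    rw [if_neg]
    exact he
  · simp

lemma wt_split {w w1 : Sym2 V → ℕ} {z z' : Ch V} (e0 : Sym2 V) (h0 : z e0 ≠ 0) (h0' : z' e0 = 0)
    (hz : ∀ e, e ≠ e0 → z' e = z e) (hw : ∀ e, e ≠ e0 → w1 e = w e) :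
    wt w1 z = w1 e0 + wt w z' := by
  unfold wt
  rw [← Finset.add_sum_erase _ _ (Finset.mem_univ e0), ← Finset.add_sum_erase Finset.univ _ (Finset.mem_univ e0),
    if_pos h0, if_neg (by simpa using h0'), zero_add]
  congr 1
  apply Finset.sum_congr rfl
  intro e he
  have := Finset.ne_of_mem_erase he
  rw [hz e this, hw e this]

lemma wt_add_le (w : Sym2 V → ℕ) (z z' : Ch V) : wt w (z + z') ≤ wt w z + wt w z' := by
  unfold wt
  rw [← Finset.sum_add_distrib]
  apply Finset.sum_le_sum
  intro e _
  by_cases h1 : z e ≠ 0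
  · rw [if_pos h1]
    by_cases h2 : (z + z') e ≠ 0
    · rw [if_pos h2]; omega
    · rw [if_neg h2]; omega
  · rw [if_neg h1]
    have : (z + z') e = z' e := by
      have : z e = 0 := by simpa using h1
      simp [this]
    rw [this]; omega

lemma wt_sg (w : Sym2 V → ℕ) (x y : V) : wt w (sg x y) = w s(x, y) := by
  rw [wt_split (w := w) (z' := 0) s(x, y)]
  · simp [wt]
  · simp [sg]
  · rfl
  · intro e he; simp [sg, he]
  · intro e he; rfl

/-- the girth-type statement -/
def Stm (V : Type) [Fintype V] [DecidableEq V] (g n : ℕ) : Prop :=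
  ∀ (s : Finset V) (G : SimpleGraph V) (w : Sym2 V → ℕ), s.card = n → s.Nonempty → (∀ u v, G.Adj u v → u ∈ s) →
    G.IsPlanar → (∀ z ∈ Zc G, z ≠ 0 → g ≤ wt w z) → s.card ≤ G.edgeSet.ncard →
    g * (G.edgeSet.ncard + 2) ≤ 2 * ew G w + g * s.card

lemma Zc_mono {G1 : SimpleGraph V} (h : G1 ≤ G) {z : Ch V} (hz : z ∈ Zc G1) : z ∈ Zc G := by
  refine ⟨fun e he => ?_, hz.2⟩
  have := hz.1 e he
  exact edgeSet_mono h this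

lemma sep1 {g n : ℕ} (IH : ∀ k < n, Stm V g k) {s : Finset V} (hsn : s.card = n) {w : Sym2 V → ℕ}
    (hP : G.IsPlanar) (hw : ∀ z ∈ Zc G, z ≠ 0 → g ≤ wt w z) (hn : s.card ≤ G.edgeSet.ncard)
    {V1 V2 : Finset V} (hV : V1 ∪ V2 = s) (hi : (V1 ∩ V2).card ≤ 1) (h1 : V1.card < n)
    (h2 : V2.card < n) (hE : ∀ u v, G.Adj u v → (u ∈ V1 ∧ v ∈ V1) ∨ (u ∈ V2 ∧ v ∈ V2)) :
    g * (G.edgeSet.ncard + 2) ≤ 2 * ew G w + g * s.card := by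
  have hle : ∀ A, res G A ≤ G := fun A u v h => h.1
  have key : ∀ A : Finset V, A.Nonempty → A.card < n → A.card ≤ (res G A).edgeSet.ncard →
      g * ((res G A).edgeSet.ncard + 2) ≤ 2 * ew (res G A) w + g * A.card := by
    intro A hA0 hA hA2
    exact IH _ hA A (res G A) w rfl hA0 (fun u v h => h.2.1) (planar_mono (hle A) hP)
      (fun z hz => hw z (Zc_mono (hle A) hz)) hA2
  have hadd : ∀ w, ew G w = ew (res G V1) w + ew (res G V2) w := by
    intro w
    apply ew_add
    · intro u v
      constructor
      · intro h
        rcases hE u v h with h' | h'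
        · exact Or.inl ⟨h, h'⟩
        · exact Or.inr ⟨h, h'⟩
      · rintro (h | h)
        · exact h.1
        · exact h.1
    · rintro u v ⟨h, a, b⟩ ⟨_, c, d⟩
      exact h.ne (Finset.card_le_one.1 hi u (by simp [a, c]) v (by simp [b, d]))
  have hc := hadd (fun _ => 1)
  rw [ew_one, ew_one, ew_one] at hc
  have hww := hadd w
  have hcard := Finset.card_union_add_card_inter V1 V2
  rw [hV] at hcard
  have k1 := key V1 (by
    rw [Finset.nonempty_iff_ne_empty]
    rintro rfl
    rw [Finset.empty_union] at hV
    rw [hV] at h2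
    omega) h1
  have k2 := key V2 (by
    rw [Finset.nonempty_iff_ne_empty]
    rintro rfl
    rw [Finset.union_empty] at hV
    rw [hV] at h1
    omega) h2
  generalize G.edgeSet.ncard = e at *
  generalize (res G V1).edgeSet.ncard = e1 at *
  generalize (res G V2).edgeSet.ncard = e2 at *
  rw [hww]
  by_cases c1 : V1.card ≤ e1
  · by_cases c2 : V2.card ≤ e2
    · have := k1 c1
      have := k2 c2
      have h5 : V1.card + V2.card ≤ s.card + 1 := by omega
      have := Nat.mul_le_mul_left g h5
      nlinarith
    · have := k1 c1
      have h5 : e2 + V1.card ≤ s.card := by omega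
      have := Nat.mul_le_mul_left g h5
      nlinarith
  · by_cases c2 : V2.card ≤ e2
    · have := k2 c2
      have h5 : e1 + V2.card ≤ s.card := by omega
      have := Nat.mul_le_mul_left g h5
      nlinarith
    · omega

lemma side {g n : ℕ} (IH : Stm V g n) {w : Sym2 V → ℕ}
    (hP : G.IsPlanar) (hw : ∀ z ∈ Zc G, z ≠ 0 → g ≤ wt w z) {A : Finset V} (hA : A.card = n)
    {x y : V} (hxy : x ≠ y) (hx : x ∈ A) (hy : y ∈ A) {D D' : Set V} (hD : Conn G D)
    (hDA : ∀ v ∈ D, v ∉ A) (tx : Tch G {x} D) (ty : Tch G {y} D)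
    (hD' : Conn G D') (hDA' : ∀ v ∈ D', v ∈ A ∧ v ≠ x ∧ v ≠ y) (tx' : Tch G {x} D')
    (ty' : Tch G {y} D') :
    ∃ z : Ch V, (∀ e, z e ≠ 0 → e ∈ (rsx G A x y).edgeSet) ∧ bd z = pt x + pt y ∧
      (A.card ≤ (rsx G A x y).edgeSet.ncard + 1 → g * ((rsx G A x y).edgeSet.ncard + 3) ≤
        2 * (ew (rsx G A x y) w + (g - wt w z)) + g * A.card) := by
  set S : Set (Ch V) := {z | (∀ e, z e ≠ 0 → e ∈ (rsx G A x y).edgeSet) ∧ bd z = pt x + pt y} with hS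
  have hne : S.Nonempty := by
    obtain ⟨p, hp0, hp, hpn, hpc⟩ := path_between hD' tx' ty'
    refine ⟨pch (x :: (p ++ [y])), ?_, bd_pch _ _ _ hpc⟩
    intro e
    induction e with | _ u v =>
    intro he
    have hl : ∀ t ∈ x :: (p ++ [y]), t ∈ A := by
      intro t ht
      simp at ht
      rcases ht with rfl | ht | rfl
      · exact hx
      · exact (hDA' t (hp t ht)).1
      · exact hy
    have hm := pch_mem he
    refine ⟨pch_edge hpc he, hl u hm.1, hl v hm.2, ?_⟩
    intro h
    rw [h] at he
    apply he
    apply pch_end hp0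
    have h1 : x ∉ p := fun h => (hDA' x (hp x h)).2.1 rfl
    have h2 : y ∉ p := fun h => (hDA' y (hp y h)).2.2 rfl
    simp only [List.nodup_cons, List.nodup_append, List.mem_append, List.mem_cons,
      List.not_mem_nil, or_false]
    refine ⟨by tauto, hpn, by simp, ?_⟩
    rintro a ha b rfl rfl
    exact h2 ha
  obtain ⟨z, hz, hmin⟩ := Set.exists_min_image S (wt w) (Set.toFinite S) hne
  refine ⟨z, hz.1, hz.2, fun hcard => ?_⟩
  set G' : SimpleGraph V := rsx G A x y ⊔ sge x y hxy with hG'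
  set w1 : Sym2 V → ℕ := fun e => if e = s(x, y) then g - wt w z else w e with hw1
  have hadj : ∀ u v, G'.Adj u v ↔ (rsx G A x y).Adj u v ∨ (sge x y hxy).Adj u v := fun u v => Iff.rfl
  have hdis : ∀ u v, (rsx G A x y).Adj u v → ¬ (sge x y hxy).Adj u v := fun u v h h' => h.2.2.2 h'
  have hE := ew_add (fun _ => 1) hadj hdis
  rw [ew_one, ew_one, ew_sge] at hE
  have hW := ew_add w1 hadj hdis
  rw [ew_sge] at hW
  have hww : ew (rsx G A x y) w1 = ew (rsx G A x y) w := by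
    unfold ew
    apply Finset.sum_congr rfl
    intro e _
    induction e with | _ u v =>
    by_cases h : s(u, v) ∈ (rsx G A x y).edgeSet
    · rw [if_pos h, if_pos h]
      have h' : (rsx G A x y).Adj u v := h
      simp only [w1]
      rw [if_neg h'.2.2.2]
    · rw [if_neg h, if_neg h]
  have hw1xy : w1 s(x, y) = g - wt w z := by simp [w1]
  have hpl : G'.IsPlanar := by
    refine planar_contract (x := x) (y := y) ?_ hD ?_ tx ty hP
    · rintro u v (h | h)
      · exact Or.inl h.1
      · right
        have h' : s(u, v) = s(x, y) := h
        simpa [Sym2.eq_iff] using h'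
    · rintro u hu v (h | h)
      · exact hDA u hu h.2.1
      · have h' : s(u, v) = s(x, y) := h
        rw [Sym2.eq_iff] at h'
        rcases h' with ⟨rfl, rfl⟩ | ⟨rfl, rfl⟩
        · exact hDA _ hu hx
        · exact hDA _ hu hy
  have := IH A G' w1 hA ⟨x, hx⟩ (by
      rintro u v (h | h)
      · exact h.2.1
      · have h' : s(u, v) = s(x, y) := h
        rw [Sym2.eq_iff] at h'
        rcases h' with ⟨rfl, rfl⟩ | ⟨rfl, rfl⟩
        · exact hx
        · exact hy) hpl (by
      intro t ht ht0
      by_cases h0 : t s(x, y) = 0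
      · have h1 : wt w1 t = wt w t := by
          unfold wt
          apply Finset.sum_congr rfl
          intro e _
          by_cases he : t e ≠ 0
          · rw [if_pos he, if_pos he]
            simp only [w1]
            rw [if_neg]
            rintro rfl
            exact he h0
          · rw [if_neg he, if_neg he]
        rw [h1]
        refine hw t ⟨fun e => ?_, ht.2⟩ ht0
        induction e with | _ u v =>
        intro he
        rcases ht.1 _ he with h | h
        · exact h.1
        · exfalso
          apply he
          have h' : s(u, v) = s(x, y) := h
          rw [h', h0]
      · have hz' : t + sg x y ∈ S := by
          refine ⟨fun e => ?_, ?_⟩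
          · induction e with | _ u v =>
            intro he
            have hne : s(u, v) ≠ s(x, y) := by
              intro h
              apply he
              rw [h, Pi.add_apply, z2_ne h0]
              simp only [sg, if_true]
              exact z2_self 1
            have : t s(u, v) ≠ 0 := by
              simpa [sg, hne] using he
            rcases ht.1 _ this with h | h
            · exact h
            · exact absurd h hne
          · have : bd t = 0 := by funext v; exact ht.2 v
            rw [bd_add, this, zero_add, bd_sg hxy]
        have h2 := hmin _ hz'
        rw [wt_split (w := w) (z' := t + sg x y) s(x, y) h0]
        · rw [hw1xy]; omega
        · rw [Pi.add_apply, z2_ne h0]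
          simp only [sg, if_true]
          exact z2_self 1
        · intro e he; simp [sg, he]
        · intro e he; simp [w1, he]) (by omega)
  rw [hE, hW, hww, hw1xy] at this
  exact this

end
end PB


namespace PB
section
variable {V : Type} [Fintype V] [DecidableEq V] {G : SimpleGraph V}

/-- no separation of order at most one -/
def NoSep (G : SimpleGraph V) (s : Finset V) : Prop :=
  ∀ V1 V2 : Finset V, V1 ∪ V2 = s → (V1 ∩ V2).card ≤ 1 → V1.card < s.card → V2.card < s.card →
    ¬ ∀ u v, G.Adj u v → (u ∈ V1 ∧ v ∈ V1) ∨ (u ∈ V2 ∧ v ∈ V2)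

lemma touch {s D : Finset V} (hs : ∀ u v, G.Adj u v → u ∈ s) (NS : NoSep G s) (hD : D ⊆ s)
    (hD0 : D.Nonempty) {a b : V} (ha : a ∈ s) (hb : b ∈ s) (haD : a ∉ D) (hbD : b ∉ D) (hab : a ≠ b)
    (hcl : ∀ u ∈ D, ∀ v, G.Adj u v → v ∈ D ∨ v = a ∨ v = b) : Tch G {a} (D : Set V) := by
  by_contra hT
  have hna : ∀ u ∈ D, ¬ G.Adj u a := fun u hu h => hT ⟨a, rfl, u, hu, h.symm⟩
  refine NS (insert b D) (s \ D) ?_ ?_ ?_ ?_ ?_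
  · ext t
    simp only [Finset.mem_union, Finset.mem_insert, Finset.mem_sdiff]
    constructor
    · rintro ((rfl | h) | h)
      · exact hb
      · exact hD h
      · exact h.1
    · intro h
      by_cases h' : t ∈ D
      · exact Or.inl (Or.inr h')
      · exact Or.inr ⟨h, h'⟩
  · rw [Finset.card_le_one]
    intro p hp q hq
    simp only [Finset.mem_inter, Finset.mem_insert, Finset.mem_sdiff] at hp hq
    have h1 : p = b := by tauto
    have h2 : q = b := by tauto
    rw [h1, h2]
  · apply Finset.card_lt_card
    refine ⟨Finset.insert_subset hb hD, fun h => ?_⟩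
    have := h ha
    simp only [Finset.mem_insert] at this
    tauto
  · apply Finset.card_lt_card
    obtain ⟨d, hd⟩ := hD0
    refine ⟨Finset.sdiff_subset, fun h => ?_⟩
    have := h (hD hd)
    simp only [Finset.mem_sdiff] at this
    tauto
  · have half : ∀ u v, G.Adj u v → u ∈ D → v ∈ insert b D := by
      intro u v h hu
      rcases hcl u hu v h with h' | rfl | rfl
      · simp [h']
      · exact absurd h (hna u hu)
      · simp
    intro u v h
    by_cases hu : u ∈ D
    · exact Or.inl ⟨by simp [hu], half u v h hu⟩
    · by_cases hv : v ∈ D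
      · exact Or.inl ⟨half v u h.symm hv, by simp [hv]⟩
      · exact Or.inr ⟨by simp [hs u v h, hu], by simp [hs v u h.symm, hv]⟩

lemma arith2 {g n n1 n2 e e1 e2 W1 W2 d1 d2 : ℕ} (hn : n1 + n2 = n + 2)
    (k1 : n1 ≤ e1 + 1 → g * (e1 + 3) ≤ 2 * (W1 + (g - d1)) + g * n1)
    (k2 : n2 ≤ e2 + 1 → g * (e2 + 3) ≤ 2 * (W2 + (g - d2)) + g * n2)
    (hd : g ≤ d1 + d2) (h1 : d1 ≤ W1) (h2 : d2 ≤ W2) (hne : n ≤ e)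
    {W : ℕ} (hc : (e = e1 + e2 ∧ W = W1 + W2) ∨
      ∃ o, e = e1 + e2 + 1 ∧ W = W1 + W2 + o ∧ g ≤ o + d1 ∧ g ≤ o + d2) :
    g * (e + 2) ≤ 2 * W + g * n := by
  have hg : g * n1 + g * n2 = g * n + 2 * g := by rw [← mul_add, hn]; ring
  have b1 : e1 + 2 ≤ n1 → g * e1 + 2 * g ≤ g * n1 := fun h => by
    have := Nat.mul_le_mul_left g h; rw [mul_add] at this; omega
  have b2 : e2 + 2 ≤ n2 → g * e2 + 2 * g ≤ g * n2 := fun h => by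
    have := Nat.mul_le_mul_left g h; rw [mul_add] at this; omega
  have r1 : g * (e1 + 3) = g * e1 + 3 * g := by ring
  have r2 : g * (e2 + 3) = g * e2 + 3 * g := by ring
  rw [r1] at k1
  rw [r2] at k2
  have r3 : g * (e + 2) = g * e + 2 * g := by ring
  rw [r3]
  rcases hc with ⟨he, hW⟩ | ⟨o, he, hW, o1, o2⟩
  · have r4 : g * e = g * e1 + g * e2 := by rw [he]; ring
    by_cases c1 : n1 ≤ e1 + 1
    · have k1 := k1 c1
      by_cases c2 : n2 ≤ e2 + 1
      · have k2 := k2 c2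
        omega
      · have b2 := b2 (by omega)
        omega
    · have b1 := b1 (by omega)
      by_cases c2 : n2 ≤ e2 + 1
      · have k2 := k2 c2
        omega
      · omega
  · have r4 : g * e = g * e1 + g * e2 + g := by rw [he]; ring
    by_cases c1 : n1 ≤ e1 + 1
    · have k1 := k1 c1
      by_cases c2 : n2 ≤ e2 + 1
      · have k2 := k2 c2
        omega
      · have b2 := b2 (by omega)
        omega
    · have b1 := b1 (by omega)
      by_cases c2 : n2 ≤ e2 + 1
      · have k2 := k2 c2
        omega
      · omega

lemma bd_sum_zero {z1 z2 : Ch V} {x y : V} (h1 : bd z1 = pt x + pt y) (h2 : bd z2 = pt x + pt y) (v : V) :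
    bd (z1 + z2) v = 0 := by
  rw [bd_add, h1, h2, ch_self]; rfl

lemma ne_zero_of_bd {z1 : Ch V} {x y : V} (h : x ≠ y) (h1 : bd z1 = pt x + pt y) : z1 ≠ 0 := by
  rintro rfl
  have := congrFun h1 x
  simp [bd, pt, h] at this

lemma sep2 {g n : ℕ} (IH : ∀ k < n, Stm V g k) {s : Finset V} (hsn : s.card = n)
    (hs : ∀ u v, G.Adj u v → u ∈ s) (NS : NoSep G s) {w : Sym2 V → ℕ}
    (hP : G.IsPlanar) (hw : ∀ z ∈ Zc G, z ≠ 0 → g ≤ wt w z) (hn : s.card ≤ G.edgeSet.ncard)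
    {a b : V} (ha : a ∈ s) (hb : b ∈ s) (hab : a ≠ b) {X Y : Finset V} (hX : X.Nonempty) (hY : Y.Nonempty)
    (hXY : ∀ v, v ∈ s ↔ v ∈ X ∨ v ∈ Y ∨ v = a ∨ v = b) (hd : ∀ v ∈ X, v ∉ Y)
    (hXa : ∀ v ∈ X, v ≠ a ∧ v ≠ b) (hYa : ∀ v ∈ Y, v ≠ a ∧ v ≠ b)
    (hno : ∀ u ∈ X, ∀ v ∈ Y, ¬ G.Adj u v) :
    g * (G.edgeSet.ncard + 2) ≤ 2 * ew G w + g * s.card := by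
  classical
  have comp : ∀ X : Finset V, X.Nonempty → X ⊆ s → (∀ v ∈ X, v ≠ a ∧ v ≠ b) →
      (∀ u ∈ X, ∀ v, G.Adj u v → v ∈ X ∨ v = a ∨ v = b) →
      ∃ D : Set V, D ⊆ X ∧ Conn G D ∧ Tch G {a} D ∧ Tch G {b} D := by
    intro X hX hXs hXa hcl
    obtain ⟨o, ho⟩ := hX
    obtain ⟨D, hDX, hoD, hD, hDc⟩ := exists_comp G (O := (X : Set V)) ho
    have hcl' : ∀ u ∈ D.toFinset, ∀ v, G.Adj u v → v ∈ D.toFinset ∨ v = a ∨ v = b := by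
      intro u hu v h
      rw [Set.mem_toFinset] at hu ⊢
      rcases hcl u (hDX hu) v h with h' | h'
      · exact Or.inl (hDc u hu v h' h)
      · exact Or.inr h'
    have hsub : D.toFinset ⊆ s := fun u hu => hXs (hDX (by simpa using hu))
    have hne : D.toFinset.Nonempty := ⟨o, by simpa using hoD⟩
    have haD : a ∉ D.toFinset := fun h => (hXa a (hDX (by simpa using h))).1 rfl
    have hbD : b ∉ D.toFinset := fun h => (hXa b (hDX (by simpa using h))).2 rfl
    have t1 := touch hs NS hsub hne ha hb haD hbD hab hcl'
    have t2 := touch hs NS hsub hne hb ha hbD haD hab.symm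
      (fun u hu v h => by have := hcl' u hu v h; tauto)
    rw [Set.coe_toFinset] at t1 t2
    exact ⟨D, hDX, hD, t1, t2⟩
  have clX : ∀ u ∈ X, ∀ v, G.Adj u v → v ∈ X ∨ v = a ∨ v = b := by
    intro u hu v h
    have := (hXY v).1 (hs v u h.symm)
    have := fun hv => hno u hu v hv h
    tauto
  have clY : ∀ u ∈ Y, ∀ v, G.Adj u v → v ∈ Y ∨ v = a ∨ v = b := by
    intro u hu v h
    have := (hXY v).1 (hs v u h.symm)
    have := fun hv => hno v hv u hu h.symm
    tauto
  have hXs : X ⊆ s := fun v hv => (hXY v).2 (Or.inl hv)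
  have hYs : Y ⊆ s := fun v hv => (hXY v).2 (Or.inr (Or.inl hv))
  obtain ⟨D1, hD1, c1, ta1, tb1⟩ := comp X hX hXs hXa clX
  obtain ⟨D2, hD2, c2, ta2, tb2⟩ := comp Y hY hYs hYa clY
  set A1 : Finset V := insert a (insert b X) with hA1
  set A2 : Finset V := insert a (insert b Y) with hA2
  have aX : a ∉ X := fun h => (hXa a h).1 rfl
  have bX : b ∉ X := fun h => (hXa b h).2 rfl
  have aY : a ∉ Y := fun h => (hYa a h).1 rfl
  have bY : b ∉ Y := fun h => (hYa b h).2 rfl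
  have cA1 : A1.card = X.card + 2 := by
    rw [hA1, Finset.card_insert_of_notMem (by simp [hab, aX]), Finset.card_insert_of_notMem bX]
  have cA2 : A2.card = Y.card + 2 := by
    rw [hA2, Finset.card_insert_of_notMem (by simp [hab, aY]), Finset.card_insert_of_notMem bY]
  have cs : s.card = X.card + Y.card + 2 := by
    have : s = insert a (insert b (X ∪ Y)) := by
      ext v
      rw [hXY v]
      simp only [Finset.mem_insert, Finset.mem_union]
      tauto
    rw [this, Finset.card_insert_of_notMem (by simp [hab, aX, aY]),
      Finset.card_insert_of_notMem (by simp [bX, bY]), Finset.card_union_of_disjoint]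
    rw [Finset.disjoint_left]
    exact fun v => hd v
  have pX := hX.card_pos
  have pY := hY.card_pos
  have m1 : ∀ v, v ∈ A1 ↔ v = a ∨ v = b ∨ v ∈ X := fun v => by simp [hA1]
  have m2 : ∀ v, v ∈ A2 ↔ v = a ∨ v = b ∨ v ∈ Y := fun v => by simp [hA2]
  obtain ⟨z1, s1, b1, k1⟩ := side (IH A1.card (by omega)) hP hw rfl hab ((m1 a).2 (by tauto)) ((m1 b).2 (by tauto))
    c2 (fun v hv => by
      have h1 := hD2 hv
      have h2 := hYa v h1
      have h3 := hd v
      rw [m1]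
      simp only [Finset.mem_coe] at h1
      clear * - h1 h2 h3; tauto) ta2 tb2 c1 (fun v hv => ⟨(m1 v).2 (Or.inr (Or.inr (hD1 hv))), hXa v (hD1 hv)⟩) ta1 tb1
  obtain ⟨z2, s2, b2, k2⟩ := side (IH A2.card (by omega)) hP hw rfl hab ((m2 a).2 (by tauto)) ((m2 b).2 (by tauto))
    c1 (fun v hv => by
      have h1 := hD1 hv
      have h2 := hXa v h1
      have h3 := hd v
      rw [m2]
      simp only [Finset.mem_coe] at h1
      clear * - h1 h2 h3; tauto) ta1 tb1 c2 (fun v hv => ⟨(m2 v).2 (Or.inr (Or.inr (hD2 hv))), hYa v (hD2 hv)⟩) ta2 tb2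
  have hle : ∀ A, rsx G A a b ≤ G := fun A u v h => h.1
  have hdis : ∀ u v, (rsx G A1 a b).Adj u v → ¬ (rsx G A2 a b).Adj u v := by
    rintro u v ⟨h, u1, v1, he⟩ ⟨_, u2, v2, _⟩
    have hu : u = a ∨ u = b := by
      have := hd u
      rw [m1] at u1; rw [m2] at u2; clear * - this u1 u2; tauto
    have hv : v = a ∨ v = b := by
      have := hd v
      rw [m1] at v1; rw [m2] at v2; clear * - this v1 v2; tauto
    rcases hu with rfl | rfl <;> rcases hv with rfl | rfl
    · exact h.ne rfl
    · exact he rfl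
    · exact he Sym2.eq_swap
    · exact h.ne rfl
  have hcov : ∀ u v, G.Adj u v → s(u, v) ≠ s(a, b) → (rsx G A1 a b).Adj u v ∨ (rsx G A2 a b).Adj u v := by
    intro u v h he
    have hu := (hXY u).1 (hs u v h)
    have hv := (hXY v).1 (hs v u h.symm)
    have n1 := fun hu hv => hno u hu v hv h
    have n2 := fun hv hu => hno v hv u hu h.symm
    by_cases hc : u ∈ A1 ∧ v ∈ A1
    · exact Or.inl ⟨h, hc.1, hc.2, he⟩
    · refine Or.inr ⟨h, ?_, ?_, he⟩
      · rw [m1, m1] at hc; rw [m2]; clear * - hu hv n1 n2 hc; tauto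
      · rw [m1, m1] at hc; rw [m2]; clear * - hu hv n1 n2 hc; tauto
  have hGg : g ≤ wt w z1 + wt w z2 := by
    refine le_trans (hw (z1 + z2) ⟨fun e he => ?_, bd_sum_zero b1 b2⟩ ?_) (wt_add_le w z1 z2)
    · by_cases h : z1 e = 0
      · have : z2 e ≠ 0 := by simpa [h] using he
        exact edgeSet_mono (hle _) (s2 e this)
      · exact edgeSet_mono (hle _) (s1 e h)
    · intro h0
      apply ne_zero_of_bd hab b1
      funext e
      by_contra h1
      have e1 := s1 e h1
      have h2 : z2 e ≠ 0 := by
        intro h2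
        have := congrFun h0 e
        simp [h2] at this
        exact h1 this
      have e2 := s2 e h2
      induction e with | _ u v =>
      exact hdis u v e1 e2
  refine arith2 (n1 := A1.card) (n2 := A2.card) (by omega) k1 k2 hGg (wt_le_ew s1) (wt_le_ew s2) hn ?_
  set U : SimpleGraph V := rsx G A1 a b ⊔ rsx G A2 a b with hU
  have hUe : ∀ w, ew U w = ew (rsx G A1 a b) w + ew (rsx G A2 a b) w :=
    fun w => ew_add w (fun u v => Iff.rfl) hdis
  by_cases hadj : G.Adj a b
  · right
    have hG : ∀ w, ew G w = ew U w + w s(a, b) := by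
      intro w
      rw [← ew_sge hab w]
      apply ew_add
      · intro u v
        constructor
        · intro h
          by_cases he : s(u, v) = s(a, b)
          · exact Or.inr he
          · exact Or.inl (hcov u v h he)
        · rintro ((h | h) | h)
          · exact h.1
          · exact h.1
          · have h' : s(u, v) = s(a, b) := h
            have : s(u, v) ∈ G.edgeSet := by rw [h']; exact hadj
            exact this
      · rintro u v (h | h) h'
        · exact h.2.2.2 h'
        · exact h.2.2.2 h'
    have hO : ∀ A z, (∀ e, z e ≠ 0 → e ∈ (rsx G A a b).edgeSet) → bd z = pt a + pt b →
        g ≤ w s(a, b) + wt w z := by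
      intro A z hz hbz
      have hzab : z s(a, b) = 0 := by
        by_contra h
        have : (rsx G A a b).Adj a b := hz _ h
        exact this.2.2.2 rfl
      rw [← wt_sg w a b]
      refine le_trans (hw (sg a b + z) ⟨fun e he => ?_, bd_sum_zero (bd_sg hab) hbz⟩ ?_) (wt_add_le w _ _)
      · by_cases h : z e = 0
        · have : sg a b e ≠ 0 := by simpa [h] using he
          have : e = s(a, b) := by
            by_contra hne
            simp [sg, hne] at this
          rw [this]; exact hadj
        · exact edgeSet_mono (hle _) (hz e h)
      · intro h0
        have := congrFun h0 s(a, b)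
        simp [sg, hzab] at this
    refine ⟨w s(a, b), ?_, ?_, hO _ _ s1 b1, hO _ _ s2 b2⟩
    · have := hG (fun _ => 1)
      rw [hUe, ew_one, ew_one, ew_one] at this
      exact this
    · rw [hG, hUe]
  · left
    have hG : ∀ w, ew G w = ew U w := by
      intro w
      have : G = U := by
        ext u v
        constructor
        · intro h
          apply hcov u v h
          intro he
          apply hadj
          have : s(a, b) ∈ G.edgeSet := by rw [← he]; exact h
          exact this
        · rintro (h | h)
          · exact h.1
          · exact h.1
      rw [← this]
    constructor
    · have := hG (fun _ => 1)
      rw [hUe, ew_one, ew_one, ew_one] at this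
      exact this
    · rw [hG, hUe]

set_option maxHeartbeats 1000000 in
theorem stm_all (g n : ℕ) : Stm V g n := by
  classical
  induction n using Nat.strong_induction_on with | _ n IH =>
  intro s G w hsn hs0 hs hP hw hn
  rcases Nat.eq_or_lt_of_le hn with heq | hlt
  · · have hdim := dim_Zc s hs hs0
      have hpos : 0 < Module.finrank (ZMod 2) (Zc G) := by omega
      have : Nontrivial (Zc G) := Module.nontrivial_of_finrank_pos hpos
      obtain ⟨z, hz⟩ := exists_ne (0 : Zc G)
      have h1 := hw z.1 z.2 (fun h => hz (Subtype.ext h))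
      have h2 := wt_le_ew (w := w) z.2.1
      rw [← heq]
      nlinarith
  · have h4 : 4 ≤ s.card := by
      have hch := edge_choose hs
      by_contra h
      have : s.card = 0 ∨ s.card = 1 ∨ s.card = 2 ∨ s.card = 3 := by omega
      rcases this with h | h | h | h <;> rw [h] at hch hlt <;> simp only [Nat.choose] at hch <;> omega
    by_cases NS : NoSep G s
    · by_cases K3 : ∀ a b, Conn G ((s : Set V) \ {a, b})
      · exact case3 hs hP hw hn h4 K3
      · push Not at K3
        obtain ⟨a, b, hK⟩ := K3
        have hne : ((s : Set V) \ {a, b}).Nonempty := by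
          by_contra h
          rw [Set.not_nonempty_iff_eq_empty, Set.sdiff_eq_empty] at h
          have h2 : s ⊆ {a, b} := fun v hv => by
            have := h hv
            simpa using this
          have := Finset.card_le_card h2
          have := Finset.card_le_two (a := a) (b := b)
          omega
        unfold Conn at hK
        push Not at hK
        obtain ⟨X', hX's, hX', hY', hno⟩ := hK hne
        set X : Finset V := X'.toFinset with hXd
        set Y : Finset V := (((s : Set V) \ {a, b}) \ X').toFinset with hYd
        have mX : ∀ v, v ∈ X ↔ v ∈ X' := fun v => by simp [hXd]
        have mY : ∀ v, v ∈ Y ↔ (v ∈ s ∧ ¬ (v = a ∨ v = b)) ∧ v ∉ X' := fun v => by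
          rw [hYd, Set.mem_toFinset]; simp
        have fX : ∀ v ∈ X, v ∈ s ∧ v ≠ a ∧ v ≠ b := by
          intro v hv
          have := hX's ((mX v).1 hv)
          simpa using this
        have fXY : ∀ v ∈ X, v ∉ Y := by
          intro v hv hv'
          exact ((mY v).1 hv').2 ((mX v).1 hv)
        have fY : ∀ v ∈ Y, v ∈ s ∧ v ≠ a ∧ v ≠ b := by
          intro v hv
          have := (mY v).1 hv
          tauto
        have hno' : ∀ u ∈ X, ∀ v ∈ Y, ¬ G.Adj u v := by
          intro u hu v hv
          exact hno u ((mX u).1 hu) v (by rw [hYd, Set.mem_toFinset] at hv; exact hv)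
        have hXn : X.Nonempty := by
          obtain ⟨x, hx⟩ := hX'
          exact ⟨x, (mX x).2 hx⟩
        have hYn : Y.Nonempty := by
          obtain ⟨x, hx⟩ := hY'
          exact ⟨x, by rw [hYd, Set.mem_toFinset]; exact hx⟩
        have hall : ∀ v ∈ s, v ∈ X ∨ v ∈ Y ∨ v = a ∨ v = b := by
          intro v hv
          rw [mX, mY]; tauto
        by_cases hc : a ∈ s ∧ b ∈ s ∧ a ≠ b
        · refine sep2 IH hsn hs NS hP hw hn hc.1 hc.2.1 hc.2.2 hXn hYn ?_ fXY (fun v hv => (fX v hv).2)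
            (fun v hv => (fY v hv).2) hno'
          intro v
          refine ⟨hall v, ?_⟩
          rintro (h | h | rfl | rfl)
          · exact (fX v h).1
          · exact (fY v h).1
          · exact hc.1
          · exact hc.2.1
        · exfalso
          refine NS (s \ Y) (s \ X) ?_ ?_ ?_ ?_ ?_
          · ext v
            simp only [Finset.mem_union, Finset.mem_sdiff]
            have := fXY v
            clear * - this
            tauto
          · rw [Finset.card_le_one]
            intro p hp q hq
            simp only [Finset.mem_inter, Finset.mem_sdiff] at hp hq
            have h1 : p = a ∨ p = b := by have := hall p hp.1.1; clear * - this hp; tauto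
            have h2 : q = a ∨ q = b := by have := hall q hq.1.1; clear * - this hq; tauto
            have h3 := hp.1.1
            have h4 := hq.1.1
            clear * - h1 h2 h3 h4 hc
            by_contra hpq
            apply hc
            rcases h1 with h1 | h1 <;> rcases h2 with h2 | h2 <;> subst h1 <;> subst h2
            · exact absurd rfl hpq
            · exact ⟨h3, h4, hpq⟩
            · exact ⟨h4, h3, fun h => hpq h.symm⟩
            · exact absurd rfl hpq
          · apply Finset.card_lt_card
            obtain ⟨y, hy⟩ := hYn
            refine ⟨Finset.sdiff_subset, fun h => ?_⟩
            have := h (fY y hy).1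
            simp only [Finset.mem_sdiff] at this
            tauto
          · apply Finset.card_lt_card
            obtain ⟨y, hy⟩ := hXn
            refine ⟨Finset.sdiff_subset, fun h => ?_⟩
            have := h (fX y hy).1
            simp only [Finset.mem_sdiff] at this
            tauto
          · intro u v h
            have h1 := hs u v h
            have h2 := hs v u h.symm
            have h3 := fun hu hv => hno' u hu v hv h
            have h4 := fun hu hv => hno' v hu u hv h.symm
            have h5 := fXY u
            have h6 := fXY v
            simp only [Finset.mem_sdiff]
            by_cases hu : u ∈ Y
            · exact Or.inr ⟨⟨h1, fun h' => h5 h' hu⟩, ⟨h2, fun h' => h4 h' hu⟩⟩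
            · by_cases hv : v ∈ Y
              · exact Or.inr ⟨⟨h1, fun h' => h3 h' hv⟩, ⟨h2, fun h' => h6 h' hv⟩⟩
              · exact Or.inl ⟨⟨h1, hu⟩, ⟨h2, hv⟩⟩
    · unfold NoSep at NS
      push Not at NS
      obtain ⟨V1, V2, q1, q2, q3, q4, q5⟩ := NS
      exact sep1 IH hsn hP hw hn q1 q2 (by omega) (by omega) q5

end
end PB


namespace PB
section
variable {V : Type} [Fintype V] [DecidableEq V] {G : SimpleGraph V}

theorem euler5 (hP : G.IsPlanar) (hg : G.girth = 5) (hn : Fintype.card V ≤ G.edgeSet.ncard) [Nonempty V] :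
    3 * G.edgeSet.ncard + 10 ≤ 5 * Fintype.card V := by
  have := stm_all (V := V) 5 (Fintype.card V) Finset.univ G (fun _ => 1) rfl Finset.univ_nonempty
    (fun u v _ => Finset.mem_univ _) hP (by
      intro z hz hz0
      have := girth_le_supp hz hz0
      rw [hg] at this
      unfold wt
      rw [← Finset.sum_filter, Finset.sum_const, smul_eq_mul, mul_one]
      convert this) hn
  rw [ew_one, Finset.card_univ] at this
  omega

theorem lower {m : ℕ} (hm : 4 ≤ m) (hP : G.IsPlanar) (hB : IsBigirthGraph G 3 m 5) :
    3 * m + 11 ≤ Fintype.card V := by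
  classical
  obtain ⟨hg, hd, h3, v0, hv0⟩ := hB
  have : Nonempty V := ⟨v0⟩
  have hdeg : ∀ v, G.degN v = G.degree v := by
    intro v
    unfold SimpleGraph.degN
    rw [← SimpleGraph.card_neighborSet_eq_degree, ← Nat.card_eq_fintype_card]
    rfl
  have hsum := G.sum_degrees_eq_twice_card_edges
  have he : G.edgeSet.ncard = G.edgeFinset.card := by
    rw [← SimpleGraph.coe_edgeFinset, Set.ncard_coe_finset]
  rw [← he] at hsum
  have h1 : ∑ v, G.degree v = ∑ v, (G.degree v - 3) + 3 * Fintype.card V := by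
    have : ∑ v : V, (3 : ℕ) = 3 * Fintype.card V := by simp [mul_comm]
    rw [← this, ← Finset.sum_add_distrib]
    apply Finset.sum_congr rfl
    intro v _
    have := hd v
    rw [hdeg] at this
    omega
  have h2 : G.degree v0 - 3 ≤ ∑ v, (G.degree v - 3) :=
    Finset.single_le_sum (f := fun v => G.degree v - 3) (fun _ _ => Nat.zero_le _) (Finset.mem_univ v0)
  rw [hdeg] at hv0
  have := euler5 hP hg (by omega)
  omega

end
end PB


namespace PB
section
variable {V : Type} [Fintype V] [DecidableEq V] {G : SimpleGraph V}

lemma bd_inc (z : Ch V) (v : V) : bd z v = ∑ e : Sym2 V, if v ∈ e then z e else 0 := by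
  classical
  rw [← Finset.sum_filter]
  have : (Finset.univ.filter fun e : Sym2 V => v ∈ e) = Finset.univ.image (fun u => s(v, u)) := by
    ext e
    simp only [Finset.mem_filter, Finset.mem_univ, true_and, Finset.mem_image]
    constructor
    · intro h
      obtain ⟨u, hu⟩ := h
      exact ⟨u, hu.symm⟩
    · rintro ⟨u, rfl⟩
      simp
  rw [this, Finset.sum_image]
  · rfl
  · intro a _ b _ h
    exact Sym2.congr_right.1 h

lemma bd_smul (a : ZMod 2) (z : Ch V) : bd (a • z) = a • bd z := by
  funext v
  simp [bd, Finset.mul_sum]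

lemma bd_sum {ι : Type} (s : Finset ι) (z : ι → Ch V) : bd (∑ i ∈ s, z i) = ∑ i ∈ s, bd (z i) := by
  classical
  induction s using Finset.induction_on with
  | empty => simp [bd_zero]
  | insert a s ha ih => rw [Finset.sum_insert ha, Finset.sum_insert ha, bd_add, ih]

lemma tpath {A : Set V} (hA : Conn G A) {a b : V} (ha : a ∈ A) (hb : b ∈ A) :
    ∃ x : Ch V, (∀ e, x e ≠ 0 → e ∈ G.edgeSet ∧ ∀ v ∈ e, v ∈ A) ∧ bd x = pt a + pt b := by
  by_cases hab : a = b
  · subst hab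
    exact ⟨0, fun e he => absurd rfl he, by rw [bd_zero, ch_self]⟩
  obtain ⟨l, h1, h2, h3, h4, h5⟩ := exists_path hA ha hb
  cases l with
  | nil => simp at h4
  | cons a' l =>
    simp only [List.head?_cons, Option.some.injEq] at h4
    subst h4
    rcases List.eq_nil_or_concat l with rfl | ⟨l', b', hl'⟩
    · simp at h5
      exact absurd h5 hab
    · rw [List.concat_eq_append] at hl'
      subst hl'
      have hb' : b' = b := by
        rw [← List.cons_append, List.getLast?_concat] at h5
        exact Option.some.inj h5
      subst hb'
      refine ⟨pch (a' :: (l' ++ [b'])), fun e => ?_, bd_pch _ _ _ h3⟩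
      induction e with | _ u v =>
      intro he
      refine ⟨pch_edge h3 he, fun t ht => ?_⟩
      have := pch_mem he
      rw [Sym2.mem_iff] at ht
      rcases ht with rfl | rfl
      · exact h1 _ this.1
      · exact h1 _ this.2

open Classical in
lemma tjoin {A : Set V} (hA : Conn G A) (β : V → ZMod 2) (hβ : ∑ v, (if v ∈ A then β v else 0) = 0) :
    ∃ x : Ch V, (∀ e, x e ≠ 0 → e ∈ G.edgeSet ∧ ∀ v ∈ e, v ∈ A) ∧
      ∀ v, bd x v = if v ∈ A then β v else 0 := by
  obtain ⟨a, ha⟩ := hA.1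
  have : ∀ b : V, ∃ x : Ch V, (∀ e, x e ≠ 0 → e ∈ G.edgeSet ∧ ∀ v ∈ e, v ∈ A) ∧
      (b ∈ A → bd x = pt a + pt b) := by
    intro b
    by_cases hb : b ∈ A
    · obtain ⟨x, h1, h2⟩ := tpath hA ha hb
      exact ⟨x, h1, fun _ => h2⟩
    · exact ⟨0, fun e he => absurd rfl he, fun h => absurd h hb⟩
  choose x hx hx' using this
  refine ⟨∑ b, (if b ∈ A then β b else 0) • x b, ?_, ?_⟩
  · intro e he
    rw [Finset.sum_apply] at he
    obtain ⟨b, _, hb⟩ := Finset.exists_ne_zero_of_sum_ne_zero he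
    apply hx b e
    intro h
    apply hb
    simp [h]
  · intro v
    rw [bd_sum, Finset.sum_apply]
    have : ∀ b ∈ Finset.univ, bd ((if b ∈ A then β b else 0) • x b) v =
        (if b ∈ A then β b else 0) * pt a v + (if b ∈ A then β b else 0) * pt b v := by
      intro b _
      by_cases hb : b ∈ A
      · rw [bd_smul, hx' b hb, if_pos hb]
        simp [mul_add]
      · rw [if_neg hb, zero_smul, bd_zero]; simp
    rw [Finset.sum_congr rfl this, Finset.sum_add_distrib, ← Finset.sum_mul, hβ, zero_mul, zero_add]
    simp [pt]

end

section
variable {V W F : Type} [Fintype V] [DecidableEq V] [Fintype W] [DecidableEq W] [Fintype F]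
  {G : SimpleGraph V} {H : SimpleGraph W} {f : W → Set V} {ε : Sym2 W → Sym2 V}

/-- edges used by a minor model -/
def InT (H : SimpleGraph W) (f : W → Set V) (ε : Sym2 W → Sym2 V) (e : Sym2 V) : Prop :=
  (∃ h ∈ H.edgeSet, e = ε h) ∨ ∃ w, ∀ v ∈ e, v ∈ f w

/-- minor model -/
structure Mdl (G : SimpleGraph V) (H : SimpleGraph W) (f : W → Set V) (ε : Sym2 W → Sym2 V) : Prop where
  conn : ∀ w, Conn G (f w)
  dis : ∀ v w w', v ∈ f w → v ∈ f w' → w = w'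
  edge : ∀ w1 w2, H.Adj w1 w2 → ∃ v1 ∈ f w1, ∃ v2 ∈ f w2, ε s(w1, w2) = s(v1, v2) ∧ G.Adj v1 v2

lemma exists_mdl (h : H.IsMinorOf G) : ∃ f ε, Mdl G H f ε := by
  classical
  obtain ⟨f, h1, h2, h3⟩ := h
  have hc : ∀ w, Conn G (f w) := fun w => conn_of_connected (h1 w)
  have : ∀ h : Sym2 W, ∃ e : Sym2 V, ∀ w1 w2, h = s(w1, w2) → H.Adj w1 w2 →
      ∃ v1 ∈ f w1, ∃ v2 ∈ f w2, e = s(v1, v2) ∧ G.Adj v1 v2 := by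
    intro h
    induction h with | _ a b =>
    by_cases hab : H.Adj a b
    · obtain ⟨v1, m1, v2, m2, hv⟩ := h3 hab
      refine ⟨s(v1, v2), fun w1 w2 hw _ => ?_⟩
      rcases Sym2.eq_iff.1 hw with ⟨rfl, rfl⟩ | ⟨rfl, rfl⟩
      · exact ⟨v1, m1, v2, m2, rfl, hv⟩
      · exact ⟨v2, m2, v1, m1, Sym2.eq_swap, hv.symm⟩
    · obtain ⟨v, _⟩ := (hc a).1
      refine ⟨s(v, v), fun w1 w2 hw hadj => ?_⟩
      exfalso
      rcases Sym2.eq_iff.1 hw with ⟨rfl, rfl⟩ | ⟨rfl, rfl⟩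
      · exact hab hadj
      · exact hab hadj.symm
  choose ε hε using this
  refine ⟨f, ε, hc, ?_, fun w1 w2 h => hε _ w1 w2 rfl h⟩
  intro v w w' hv hv'
  by_contra hne
  exact Set.disjoint_left.1 (h2 hne) hv hv'

namespace Mdl

lemma inj (M : Mdl G H f ε) {h h' : Sym2 W} (hh : h ∈ H.edgeSet) (hh' : h' ∈ H.edgeSet) (he : ε h = ε h') : h = h' := by
  induction h with | _ a b =>
  induction h' with | _ a' b' =>
  obtain ⟨v1, m1, v2, m2, e1, -⟩ := M.edge a b hh
  obtain ⟨v1', m1', v2', m2', e2, -⟩ := M.edge a' b' hh'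
  rw [e1, e2] at he
  rcases Sym2.eq_iff.1 he with ⟨rfl, rfl⟩ | ⟨rfl, rfl⟩
  · rw [M.dis _ _ _ m1 m1', M.dis _ _ _ m2 m2']
  · rw [M.dis _ _ _ m1 m2', M.dis _ _ _ m2 m1', Sym2.eq_swap]

lemma not_in (M : Mdl G H f ε) {h : Sym2 W} (hh : h ∈ H.edgeSet) (w : W) : ¬ ∀ v ∈ ε h, v ∈ f w := by
  induction h with | _ a b =>
  obtain ⟨v1, m1, v2, m2, e1, -⟩ := M.edge a b hh
  intro hin
  rw [e1] at hin
  have h1 := M.dis _ _ _ m1 (hin v1 (by simp))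
  have h2 := M.dis _ _ _ m2 (hin v2 (by simp))
  have : H.Adj a b := hh
  exact this.ne (h1.trans h2.symm)

lemma mem_edge (M : Mdl G H f ε) {h : Sym2 W} (hh : h ∈ H.edgeSet) : ε h ∈ G.edgeSet := by
  induction h with | _ a b =>
  obtain ⟨v1, m1, v2, m2, e1, e2⟩ := M.edge a b hh
  rw [e1]; exact e2

end Mdl

open Classical in
/-- push a chain forward along a minor model -/
noncomputable def psh (H : SimpleGraph W) (ε : Sym2 W → Sym2 V) : Ch V →ₗ[ZMod 2] Ch W where
  toFun z h := if h ∈ H.edgeSet then z (ε h) else 0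
  map_add' := by
    intro a b
    funext h
    by_cases hh : h ∈ H.edgeSet
    · simp [hh]
    · simp [hh]
  map_smul' := by
    intro a b
    funext h
    by_cases hh : h ∈ H.edgeSet
    · simp [hh]
    · simp [hh]

lemma psh_of {h : Sym2 W} (hh : h ∈ H.edgeSet) (z : Ch V) : psh H ε z h = z (ε h) := by
  simp [psh, hh]

lemma psh_not {h : Sym2 W} (hh : h ∉ H.edgeSet) (z : Ch V) : psh H ε z h = 0 := by
  simp [psh, hh]

open Classical in
lemma psh_bd (M : Mdl G H f ε) {z : Ch V} (hz : ∀ e, z e ≠ 0 → e ∈ G.edgeSet ∧ InT H f ε e) (w : W) :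
    bd (psh H ε z) w = ∑ v, if v ∈ f w then bd z v else 0 := by
  set I : Sym2 V → ZMod 2 := fun e => ∑ v, if v ∈ f w ∧ v ∈ e then 1 else 0 with hI
  have hIe : ∀ a b, a ≠ b → I s(a, b) = (if a ∈ f w then 1 else 0) + (if b ∈ f w then 1 else 0) := by
    intro a b hab
    have : ∀ v ∈ (Finset.univ : Finset V), (if v ∈ f w ∧ v ∈ s(a, b) then (1 : ZMod 2) else 0) =
        (if v = a then (if a ∈ f w then 1 else 0) else 0) + (if v = b then (if b ∈ f w then 1 else 0) else 0) := by
      intro v _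
      by_cases h1 : v = a
      · subst h1
        simp [hab]
      · by_cases h2 : v = b
        · subst h2
          simp [h1]
        · simp [h1, h2]
    simp only [hI]
    rw [Finset.sum_congr rfl this, Finset.sum_add_distrib]
    simp
  have hR : (∑ v, if v ∈ f w then bd z v else 0) = ∑ e, z e * I e := by
    simp only [hI, Finset.mul_sum]
    rw [Finset.sum_comm]
    apply Finset.sum_congr rfl
    intro v _
    rw [bd_inc]
    by_cases hv : v ∈ f w
    · simp [hv]
    · simp [hv]
  rw [hR, bd_inc]
  have hL : ∑ h : Sym2 W, (if w ∈ h then psh H ε z h else 0) =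
      ∑ h ∈ Finset.univ.filter (fun h => h ∈ H.edgeSet), z (ε h) * I (ε h) := by
    rw [Finset.sum_filter]
    apply Finset.sum_congr rfl
    intro h _
    by_cases hh : h ∈ H.edgeSet
    · rw [psh_of hh, if_pos hh]
      induction h with | _ a b =>
      obtain ⟨v1, m1, v2, m2, e1, e2⟩ := M.edge a b hh
      rw [e1, hIe _ _ e2.ne]
      have hab : a ≠ b := fun h => by
        subst h
        exact (show H.Adj a a from hh).ne rfl
      have i1 : v1 ∈ f w ↔ w = a := ⟨fun h => M.dis _ _ _ h m1, fun h => h ▸ m1⟩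
      have i2 : v2 ∈ f w ↔ w = b := ⟨fun h => M.dis _ _ _ h m2, fun h => h ▸ m2⟩
      simp only [i1, i2, Sym2.mem_iff]
      by_cases c1 : w = a
      · subst c1
        simp [hab]
      · by_cases c2 : w = b
        · subst c2
          simp [c1]
        · simp [c1, c2]
    · rw [psh_not hh, if_neg hh]; simp
  rw [hL]
  have hinj : Set.InjOn ε ((Finset.univ.filter (fun h => h ∈ H.edgeSet) : Finset (Sym2 W)) : Set (Sym2 W)) := by
    intro a ha b hb hab
    simp only [Finset.coe_filter, Finset.mem_univ, true_and, Set.mem_ofPred_eq] at ha hb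
    exact M.inj ha hb hab
  rw [← Finset.sum_image (f := fun e => z e * I e) hinj]
  apply Finset.sum_subset (Finset.subset_univ _)
  intro e _ he
  by_cases hze : z e = 0
  · simp [hze]
  · obtain ⟨h1, h2⟩ := hz e hze
    rcases h2 with ⟨h, hh, rfl⟩ | ⟨w', hw'⟩
    · exact absurd (Finset.mem_image.2 ⟨h, by simpa using hh, rfl⟩) he
    · induction e with | _ a b =>
      have hadj : G.Adj a b := h1
      rw [hIe a b hadj.ne]
      have ha := hw' a (by simp)
      have hb := hw' b (by simp)
      have : a ∈ f w ↔ b ∈ f w := by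
        constructor
        · intro h; rw [M.dis _ _ _ h ha]; exact hb
        · intro h; rw [M.dis _ _ _ h hb]; exact ha
      by_cases hc : b ∈ f w
      · rw [if_pos hc, if_pos (this.2 hc), z2_self, mul_zero]
      · rw [if_neg hc, if_neg (fun h => hc (this.1 h)), z2_self, mul_zero]

lemma psh_mem (M : Mdl G H f ε) {z : Ch V} (hz : z ∈ Zc G) (hT : ∀ e, z e ≠ 0 → InT H f ε e) :
    psh H ε z ∈ Zc H := by
  refine ⟨fun h hh => ?_, fun w => ?_⟩
  · by_contra hne
    exact hh (psh_not hne z)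
  · rw [psh_bd M (fun e he => ⟨hz.1 e he, hT e he⟩)]
    apply Finset.sum_eq_zero
    intro v _
    rw [hz.2 v]; simp

lemma psh_lift (M : Mdl G H f ε) {y : Ch W} (hy : y ∈ Zc H) :
    ∃ z ∈ Zc G, (∀ e, z e ≠ 0 → InT H f ε e) ∧ psh H ε z = y := by
  classical
  set z0 : Ch V := fun e => if h : ∃ h ∈ H.edgeSet, e = ε h then y h.choose else 0 with hz0
  have hz0e : ∀ h ∈ H.edgeSet, z0 (ε h) = y h := by
    intro h hh
    have hex : ∃ h' ∈ H.edgeSet, ε h = ε h' := ⟨h, hh, rfl⟩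
    simp only [hz0]
    rw [dif_pos hex, M.inj hex.choose_spec.1 hh hex.choose_spec.2.symm]
  have hz0s : ∀ e, z0 e ≠ 0 → ∃ h ∈ H.edgeSet, e = ε h := by
    intro e he
    by_contra hne
    simp only [hz0] at he
    rw [dif_neg hne] at he
    exact he rfl
  have hp0 : psh H ε z0 = y := by
    funext h
    by_cases hh : h ∈ H.edgeSet
    · rw [psh_of hh, hz0e h hh]
    · rw [psh_not hh]
      by_contra hne
      exact hh (hy.1 h (Ne.symm hne))
  have hz0T : ∀ e, z0 e ≠ 0 → e ∈ G.edgeSet ∧ InT H f ε e := by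
    intro e he
    obtain ⟨h, hh, rfl⟩ := hz0s e he
    exact ⟨M.mem_edge hh, Or.inl ⟨h, hh, rfl⟩⟩
  have hb : ∀ w, ∑ v, (if v ∈ f w then bd z0 v else 0) = 0 := by
    intro w
    rw [← psh_bd M hz0T w, hp0, hy.2]
  choose x hx hx' using fun w => tjoin (M.conn w) (bd z0) (hb w)
  have hpx : ∀ w, psh H ε (x w) = 0 := by
    intro w
    funext h
    by_cases hh : h ∈ H.edgeSet
    · rw [psh_of hh]
      by_contra hne
      exact M.not_in hh w (hx w _ hne).2
    · rw [psh_not hh]; rfl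
  have hsup : ∀ e, (z0 + ∑ w, x w) e ≠ 0 → e ∈ G.edgeSet ∧ InT H f ε e := by
    intro e he
    by_cases h0 : z0 e = 0
    · rw [Pi.add_apply, h0, zero_add, Finset.sum_apply] at he
      obtain ⟨w, _, hw⟩ := Finset.exists_ne_zero_of_sum_ne_zero he
      exact ⟨(hx w e hw).1, Or.inr ⟨w, (hx w e hw).2⟩⟩
    · exact hz0T e h0
  refine ⟨z0 + ∑ w, x w, ⟨fun e he => (hsup e he).1, fun v => ?_⟩, fun e he => (hsup e he).2, ?_⟩
  · rw [bd_add, bd_sum, Pi.add_apply, Finset.sum_apply]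
    simp only [hx']
    by_cases hv : ∃ w, v ∈ f w
    · obtain ⟨w, hw⟩ := hv
      rw [Finset.sum_eq_single w, if_pos hw, z2_self]
      · intro w' _ hne
        rw [if_neg]
        intro h
        exact hne (M.dis v _ _ h hw)
      · simp
    · push Not at hv
      rw [Finset.sum_eq_zero (fun w _ => if_neg (hv w)), add_zero]
      apply Finset.sum_eq_zero
      intro u _
      by_contra hne
      obtain ⟨h, hh, he⟩ := hz0s _ hne
      induction h with | _ a b =>
      obtain ⟨v1, m1, v2, m2, e1, -⟩ := M.edge a b hh
      rw [e1] at he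
      have : v ∈ s(v1, v2) := by rw [← he]; simp
      rcases Sym2.mem_iff.1 this with rfl | rfl
      · exact hv _ m1
      · exact hv _ m2
  · rw [map_add, map_sum, hp0, Finset.sum_eq_zero (fun w _ => hpx w), add_zero]

/-- MacLane certificate -/
structure ML (G : SimpleGraph V) (c : F → Ch V) : Prop where
  mem : ∀ i, c i ∈ Zc G
  span : ∀ z ∈ Zc G, ∃ φ : F → ZMod 2, z = ∑ i, φ i • c i
  two : ∀ e i j k, c i e ≠ 0 → c j e ≠ 0 → c k e ≠ 0 → i = j ∨ i = k ∨ j = k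
  even : ∀ e, ∑ i, c i e = 0

lemma ml_minor {c : F → Ch V} (L : ML G c) (M : Mdl G H f ε) : ∃ T : Set (Ch W), T ⊆ Zc H ∧
    Zc H ≤ Submodule.span (ZMod 2) T ∧ ∀ e, ∀ z1 ∈ T, ∀ z2 ∈ T, ∀ z3 ∈ T, z1 e ≠ 0 → z2 e ≠ 0 →
      z3 e ≠ 0 → z1 ≠ z2 → z1 ≠ z3 → z2 ≠ z3 → False := by
  classical
  set r : F → F → Prop := fun i j => ∃ e, ¬ InT H f ε e ∧ c i e ≠ 0 ∧ c j e ≠ 0 with hr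
  set S : Setoid F := Relation.EqvGen.setoid r with hS
  set mk : F → Quotient S := fun i => Quotient.mk S i with hmk
  have hrel : ∀ i j, r i j → mk i = mk j := fun i j h => Quotient.sound (Relation.EqvGen.rel i j h)
  set b : Quotient S → Ch V := fun q => ∑ i ∈ Finset.univ.filter (fun i => mk i = q), c i with hb
  have hbZ : ∀ q, b q ∈ Zc G := fun q => Submodule.sum_mem _ fun i _ => L.mem i
  have hbT : ∀ q e, b q e ≠ 0 → InT H f ε e := by
    intro q e he
    by_contra hT
    apply he
    simp only [hb]
    rw [Finset.sum_apply, Finset.sum_filter]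
    by_cases hex : ∃ i, mk i = q ∧ c i e ≠ 0
    · obtain ⟨i, hi, hie⟩ := hex
      refine Eq.trans ?_ (L.even e)
      apply Finset.sum_congr rfl
      intro j _
      by_cases hj : c j e = 0
      · simp [hj]
      · rw [if_pos]
        rw [← hi]
        exact hrel _ _ ⟨e, hT, hj, hie⟩
    · push Not at hex
      apply Finset.sum_eq_zero
      intro i _
      by_cases hi : mk i = q
      · rw [if_pos hi, hex i hi]
      · rw [if_neg hi]
  refine ⟨Set.range fun q => psh H ε (b q), ?_, ?_, ?_⟩
  · rintro _ ⟨q, rfl⟩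
    exact psh_mem M (hbZ q) (hbT q)
  · intro y hy
    obtain ⟨z, hz, hzT, rfl⟩ := psh_lift M hy
    obtain ⟨φ, hφ⟩ := L.span z hz
    have hcl : ∀ i j, r i j → φ i = φ j := by
      rintro i j ⟨e, hT, hi, hj⟩
      by_cases hij : i = j
      · rw [hij]
      have hze : z e = 0 := by
        by_contra h
        exact hT (hzT e h)
      rw [hφ, Finset.sum_apply, Finset.sum_eq_add_of_mem i j (Finset.mem_univ _) (Finset.mem_univ _) hij] at hze
      · simp only [Pi.smul_apply, z2_ne hi, z2_ne hj, smul_eq_mul, mul_one] at hze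
        exact CharTwo.add_eq_zero.1 hze
      · intro k _ hk
        by_cases hke : c k e = 0
        · simp [hke]
        · rcases L.two e i j k hi hj hke with h | h | h
          · exact absurd h hij
          · exact absurd h.symm hk.1
          · exact absurd h.symm hk.2
    have hcl' : ∀ i j, Relation.EqvGen r i j → φ i = φ j := by
      intro i j h
      induction h with
      | rel i j h => exact hcl i j h
      | refl => rfl
      | symm _ _ _ ih => exact ih.symm
      | trans _ _ _ _ _ ih1 ih2 => exact ih1.trans ih2
    set φ' : Quotient S → ZMod 2 := Quotient.lift φ hcl' with hφ'
    have hz' : z = ∑ q, φ' q • b q := by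
      rw [hφ, ← Finset.sum_fiberwise Finset.univ mk]
      apply Finset.sum_congr rfl
      intro q _
      simp only [hb]
      rw [Finset.smul_sum]
      apply Finset.sum_congr rfl
      intro i hi
      simp only [Finset.mem_filter, Finset.mem_univ, true_and] at hi
      rw [← hi]
      rfl
    rw [hz', map_sum]
    apply Submodule.sum_mem
    intro q _
    rw [map_smul]
    exact Submodule.smul_mem _ _ (Submodule.subset_span ⟨q, rfl⟩)
  · rintro h _ ⟨q1, rfl⟩ _ ⟨q2, rfl⟩ _ ⟨q3, rfl⟩ h1 h2 h3 n1 n2 n3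
    simp only at h1 h2 h3 n1 n2 n3
    have hh : h ∈ H.edgeSet := by
      by_contra hne
      exact h1 (psh_not hne _)
    rw [psh_of hh] at h1 h2 h3
    have get : ∀ q, b q (ε h) ≠ 0 → ∃ i, mk i = q ∧ c i (ε h) ≠ 0 := by
      intro q hq
      simp only [hb] at hq
      rw [Finset.sum_apply] at hq
      obtain ⟨i, hi, hi'⟩ := Finset.exists_ne_zero_of_sum_ne_zero hq
      exact ⟨i, by simpa using hi, hi'⟩
    obtain ⟨i1, e1, c1⟩ := get q1 h1
    obtain ⟨i2, e2, c2⟩ := get q2 h2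
    obtain ⟨i3, e3, c3⟩ := get q3 h3
    rcases L.two _ i1 i2 i3 c1 c2 c3 with h | h | h
    · exact n1 (by rw [← e1, ← e2, h])
    · exact n2 (by rw [← e1, ← e3, h])
    · exact n3 (by rw [← e2, ← e3, h])

lemma wt_one {z : Ch V} : wt (fun _ => 1) z = (Finset.univ.filter fun e => z e ≠ 0).card := by
  unfold wt
  rw [← Finset.sum_filter, Finset.sum_const, smul_eq_mul, mul_one]

lemma ml_ineq {c : F → Ch V} (L : ML G c) (h : H.IsMinorOf G) [Nonempty W] {g : ℕ}
    (hg : g ≤ H.girth) (hn : Fintype.card W ≤ H.edgeSet.ncard) :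
    g * (H.edgeSet.ncard + 2) ≤ 2 * H.edgeSet.ncard + g * Fintype.card W := by
  obtain ⟨f, ε, M⟩ := exists_mdl h
  obtain ⟨T, h1, h2, h3⟩ := ml_minor L M
  have := euler_span (G := H) (g := g) (s := Finset.univ) (w := fun _ => 1) (fun _ _ _ => Finset.mem_univ _)
    (fun z hz hz0 => by rw [wt_one]; exact hg.trans (girth_le_supp hz hz0)) hn
    (by rw [Finset.card_univ]; exact Fintype.card_pos) h1 h2 h3
  rw [ew_one, Finset.card_univ] at this
  exact this

lemma k5_edges : (completeGraph (Fin 5)).edgeSet.ncard = 10 := by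
  classical
  rw [← SimpleGraph.coe_edgeFinset, Set.ncard_coe_finset]
  decide

instance k33dec : DecidableRel (completeBipartiteGraph (Fin 3) (Fin 3)).Adj := fun a b =>
  inferInstanceAs (Decidable ((a.isLeft ∧ b.isRight) ∨ (a.isRight ∧ b.isLeft)))

lemma k33_edges : (completeBipartiteGraph (Fin 3) (Fin 3)).edgeSet.ncard = 9 := by
  rw [← SimpleGraph.coe_edgeFinset, Set.ncard_coe_finset]
  decide

lemma k33_girth : 4 ≤ (completeBipartiteGraph (Fin 3) (Fin 3)).girth := by
  set H := completeBipartiteGraph (Fin 3) (Fin 3) with hH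
  have hac : ¬ H.IsAcyclic := by
    intro h
    have hd := dim_Zc (G := H) Finset.univ (fun _ _ _ => Finset.mem_univ _) Finset.univ_nonempty
    rw [k33_edges] at hd
    have hpos : 0 < Module.finrank (ZMod 2) (Zc H) := by
      simp at hd
      omega
    have : Nontrivial (Zc H) := Module.nontrivial_of_finrank_pos hpos
    obtain ⟨z, hz⟩ := exists_ne (0 : Zc H)
    obtain ⟨l, hl⟩ := exists_cyc z.2 (fun h => hz (Subtype.ext h))
    obtain ⟨a, p, hp⟩ := hl.walk
    exact h _ (hp.mapLe (spt_le z.2.1))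
  obtain ⟨a, w, hw, hlen⟩ := SimpleGraph.exists_girth_eq_length.2 hac
  rw [hlen]
  have h3 := hw.three_le_length
  have heven : Even w.length :=
    ((CompleteBipartiteGraph.bicoloring (Fin 3) (Fin 3)).even_length_iff_congr w).2 Iff.rfl
  rcases Nat.lt_or_ge w.length 4 with h | h
  · have : w.length = 3 := by omega
    rw [this] at heven
    exact absurd heven (by decide)
  · exact h

theorem ml_planar {c : F → Ch V} (L : ML G c) : G.IsPlanar := by
  constructor
  · intro h
    have := ml_ineq (g := 3) L h (by
      show 3 ≤ (⊤ : SimpleGraph (Fin 5)).girth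
      rw [SimpleGraph.girth_top]
      simp
      norm_num) (by rw [k5_edges]; simp)
    rw [k5_edges] at this
    simp at this
  · intro h
    have := ml_ineq (g := 4) L h k33_girth (by rw [k33_edges]; simp)
    rw [k33_edges] at this
    simp at this

end
end PB


namespace PB
section
variable {V E F : Type} [Fintype V] [DecidableEq V] [Fintype E] [DecidableEq E] [Fintype F] [DecidableEq F]
  {G : SimpleGraph V}

/-- coboundary of a face function -/
def dlt (ed : E → Sym2 V) (l r : E → F) (φ : F → ZMod 2) : Ch V :=
  fun e => ∑ x, if ed x = e then φ (l x) + φ (r x) else 0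

lemma dlt_ed {ed : E → Sym2 V} (hi : Function.Injective ed) (l r : E → F) (φ : F → ZMod 2) (x : E) :
    dlt ed l r φ (ed x) = φ (l x) + φ (r x) := by
  unfold dlt
  rw [Finset.sum_eq_single x]
  · simp
  · intro y _ hy
    rw [if_neg]
    exact fun h => hy (hi h)
  · simp

lemma dlt_not {ed : E → Sym2 V} (l r : E → F) (φ : F → ZMod 2) {e : Sym2 V} (he : ∀ x, ed x ≠ e) :
    dlt ed l r φ e = 0 := by
  unfold dlt
  apply Finset.sum_eq_zero
  intro x _
  rw [if_neg (he x)]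

theorem faces_planar {ed : E → Sym2 V} (hi : Function.Injective ed) (hE : ∀ e, e ∈ G.edgeSet ↔ ∃ x, ed x = e)
    (l r : E → F) (h1 : ∀ φ v, bd (dlt ed l r φ) v = 0)
    (h2 : ∀ z ∈ Zc G, ∃ φ : F → ZMod 2, ∀ x, z (ed x) = φ (l x) + φ (r x)) : G.IsPlanar := by
  have hmem : ∀ φ, dlt ed l r φ ∈ Zc G := by
    intro φ
    refine ⟨fun e he => ?_, h1 φ⟩
    rw [hE]
    by_contra hne
    push Not at hne
    exact he (dlt_not l r φ hne)
  refine ml_planar (c := fun i => dlt ed l r (pt i)) ⟨fun i => hmem _, ?_, ?_, ?_⟩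
  · intro z hz
    obtain ⟨φ, hφ⟩ := h2 z hz
    refine ⟨φ, ?_⟩
    funext e
    rw [Finset.sum_apply]
    by_cases he : ∃ x, ed x = e
    · obtain ⟨x, rfl⟩ := he
      rw [hφ]
      simp only [Pi.smul_apply, dlt_ed hi, smul_eq_mul, mul_add, Finset.sum_add_distrib]
      simp [pt]
    · have h0 : z e = 0 := by
        by_contra hne
        exact he ((hE e).1 (hz.1 e hne))
      push Not at he
      rw [h0]
      symm
      apply Finset.sum_eq_zero
      intro i _
      rw [Pi.smul_apply, dlt_not l r _ he, smul_zero]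
  · intro e i j k hi' hj hk
    by_cases he : ∃ x, ed x = e
    · obtain ⟨x, rfl⟩ := he
      simp only [dlt_ed hi] at hi' hj hk
      have key : ∀ i, pt i (l x) + pt i (r x) ≠ 0 → i = l x ∨ i = r x := by
        intro i h
        by_contra hne
        push Not at hne
        simp [pt, hne.1.symm, hne.2.symm] at h
      rcases key i hi' with rfl | rfl <;> rcases key j hj with rfl | rfl <;> rcases key k hk with rfl | rfl <;> simp
    · push Not at he
      exact absurd (dlt_not l r _ he) hi'
  · intro e
    by_cases he : ∃ x, ed x = e
    · obtain ⟨x, rfl⟩ := he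
      simp only [dlt_ed hi, Finset.sum_add_distrib]
      simp only [pt, Finset.sum_ite_eq, Finset.mem_univ, if_true]
      exact z2_self 1
    · push Not at he
      apply Finset.sum_eq_zero
      intro i _
      exact dlt_not l r _ he

lemma bd_three {z : Ch V} (hz : ∀ e, z e ≠ 0 → e ∈ G.edgeSet) {v p q r : V} (h : ∀ x, G.Adj v x ↔ x = p ∨ x = q ∨ x = r)
    (h1 : p ≠ q) (h2 : p ≠ r) (h3 : q ≠ r) : bd z v = z s(v, p) + z s(v, q) + z s(v, r) := by
  have : ∑ x ∈ ({p, q, r} : Finset V), z s(v, x) = bd z v := by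
    apply Finset.sum_subset (Finset.subset_univ _)
    intro x _ hx
    by_contra hne
    have := (h x).1 (hz _ hne)
    apply hx
    simpa using this
  rw [← this, Finset.sum_insert (by simp [h1, h2]), Finset.sum_insert (by simp [h3]), Finset.sum_singleton, add_assoc]

lemma deg_three {v p q r : V} (h : ∀ x, G.Adj v x ↔ x = p ∨ x = q ∨ x = r)
    (h1 : p ≠ q) (h2 : p ≠ r) (h3 : q ≠ r) : G.degN v = 3 := by
  unfold SimpleGraph.degN
  have : G.neighborSet v = {p, q, r} := by
    ext x
    rw [SimpleGraph.mem_neighborSet, h]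
    simp
  rw [this, Set.ncard_eq_three]
  exact ⟨p, q, r, h1, h2, h3, rfl⟩

end

section
variable {m : ℕ} [NeZero m]

/-- vertices -/
abbrev Vm (m : ℕ) : Type := (ZMod m × Fin 6) ⊕ Fin 2

/-- voltage table -/
def vol : Fin 6 → Fin 6 → Option ℤ
  | 0, 1 => some 0
  | 1, 0 => some 0
  | 1, 2 => some 0
  | 2, 1 => some 0
  | 3, 4 => some 0
  | 4, 3 => some 0
  | 4, 5 => some 0
  | 5, 4 => some 0
  | 2, 4 => some 0
  | 4, 2 => some 0
  | 2, 0 => some 1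
  | 0, 2 => some (-1)
  | 5, 3 => some 1
  | 3, 5 => some (-1)
  | 5, 1 => some 1
  | 1, 5 => some (-1)
  | _, _ => none

/-- adjacency -/
def adjm (m : ℕ) : Vm m → Vm m → Prop
  | Sum.inl (i, s), Sum.inl (j, t) => ∃ d, vol s t = some d ∧ j = i + (d : ZMod m)
  | Sum.inl (_, s), Sum.inr k => (k = 0 ∧ s = 0) ∨ (k = 1 ∧ s = 3)
  | Sum.inr k, Sum.inl (_, s) => (k = 0 ∧ s = 0) ∨ (k = 1 ∧ s = 3)
  | Sum.inr _, Sum.inr _ => False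

lemma vol_symm : ∀ s t, vol t s = (vol s t).map (fun d => -d) := by decide

lemma vol_self : ∀ s, vol s s = none := by decide

/-- the graph -/
def Gm (m : ℕ) : SimpleGraph (Vm m) where
  Adj := adjm m
  symm := ⟨by
    rintro (⟨i, s⟩ | k) (⟨j, t⟩ | k') h
    · obtain ⟨d, hd, rfl⟩ := h
      exact ⟨-d, by rw [vol_symm, hd]; rfl, by push_cast; ring⟩
    · exact h
    · exact h
    · exact h⟩
  loopless := ⟨by
    rintro (⟨i, s⟩ | k) h
    · obtain ⟨d, hd, _⟩ := h
      rw [vol_self] at hd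
      exact absurd hd (by simp)
    · exact h⟩

/-- ring vertex -/
abbrev rv (i : ZMod m) (t : Fin 6) : Vm m := Sum.inl (i, t)

lemma adj_ll {i j : ZMod m} {s t : Fin 6} : (Gm m).Adj (rv i s) (rv j t) ↔ ∃ d, vol s t = some d ∧ j = i + (d : ZMod m) := Iff.rfl

lemma adj_lr {i : ZMod m} {s : Fin 6} {k : Fin 2} : (Gm m).Adj (rv i s) (Sum.inr k) ↔ (k = 0 ∧ s = 0) ∨ (k = 1 ∧ s = 3) := Iff.rfl

lemma adj_rl {i : ZMod m} {s : Fin 6} {k : Fin 2} : (Gm m).Adj (Sum.inr k) (rv i s) ↔ (k = 0 ∧ s = 0) ∨ (k = 1 ∧ s = 3) := Iff.rfl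

lemma adj_rr {k k' : Fin 2} : ¬ (Gm m).Adj (Sum.inr k) (Sum.inr k') := fun h => h

lemma nb0 (i : ZMod m) (x : Vm m) : (Gm m).Adj (rv i 0) x ↔ x = Sum.inr 0 ∨ x = rv i 1 ∨ x = rv (i - 1) 2 := by
  rcases x with ⟨j, t⟩ | k
  · rw [adj_ll]; fin_cases t <;> simp [vol, sub_eq_add_neg]
  · rw [adj_lr]; fin_cases k <;> simp

lemma nb1 (i : ZMod m) (x : Vm m) : (Gm m).Adj (rv i 1) x ↔ x = rv i 0 ∨ x = rv i 2 ∨ x = rv (i - 1) 5 := by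
  rcases x with ⟨j, t⟩ | k
  · rw [adj_ll]; fin_cases t <;> simp [vol, sub_eq_add_neg]
  · rw [adj_lr]; fin_cases k <;> simp

lemma nb2 (i : ZMod m) (x : Vm m) : (Gm m).Adj (rv i 2) x ↔ x = rv i 1 ∨ x = rv (i + 1) 0 ∨ x = rv i 4 := by
  rcases x with ⟨j, t⟩ | k
  · rw [adj_ll]; fin_cases t <;> simp [vol, sub_eq_add_neg]
  · rw [adj_lr]; fin_cases k <;> simp

lemma nb3 (i : ZMod m) (x : Vm m) : (Gm m).Adj (rv i 3) x ↔ x = Sum.inr 1 ∨ x = rv i 4 ∨ x = rv (i - 1) 5 := by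
  rcases x with ⟨j, t⟩ | k
  · rw [adj_ll]; fin_cases t <;> simp [vol, sub_eq_add_neg]
  · rw [adj_lr]; fin_cases k <;> simp

lemma nb4 (i : ZMod m) (x : Vm m) : (Gm m).Adj (rv i 4) x ↔ x = rv i 3 ∨ x = rv i 5 ∨ x = rv i 2 := by
  rcases x with ⟨j, t⟩ | k
  · rw [adj_ll]; fin_cases t <;> simp [vol, sub_eq_add_neg]
  · rw [adj_lr]; fin_cases k <;> simp

lemma nb5 (i : ZMod m) (x : Vm m) : (Gm m).Adj (rv i 5) x ↔ x = rv i 4 ∨ x = rv (i + 1) 3 ∨ x = rv (i + 1) 1 := by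
  rcases x with ⟨j, t⟩ | k
  · rw [adj_ll]; fin_cases t <;> simp [vol, sub_eq_add_neg]
  · rw [adj_lr]; fin_cases k <;> simp

lemma nbu (x : Vm m) : (Gm m).Adj (Sum.inr 0) x ↔ ∃ i, x = rv i 0 := by
  rcases x with ⟨j, t⟩ | k
  · rw [adj_rl]; simp [eq_comm]
  · simp [adj_rr]

lemma nbu' (x : Vm m) : (Gm m).Adj (Sum.inr 1) x ↔ ∃ i, x = rv i 3 := by
  rcases x with ⟨j, t⟩ | k
  · rw [adj_rl]; simp [eq_comm]
  · simp [adj_rr]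

lemma deg_rv (i : ZMod m) (t : Fin 6) : (Gm m).degN (rv i t) = 3 := by
  fin_cases t
  · exact deg_three (nb0 i) (by simp) (by simp) (by simp)
  · exact deg_three (nb1 i) (by simp) (by simp) (by simp)
  · exact deg_three (nb2 i) (by simp) (by simp) (by simp)
  · exact deg_three (nb3 i) (by simp) (by simp) (by simp)
  · exact deg_three (nb4 i) (by simp) (by simp) (by simp)
  · exact deg_three (nb5 i) (by simp) (by simp) (by simp)

lemma deg_hub (k : Fin 2) : (Gm m).degN (Sum.inr k) = m := by
  have key : ∀ t : Fin 6, (Set.range fun i : ZMod m => rv i t).ncard = m := by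
    intro t
    rw [← Set.image_univ, Set.ncard_image_of_injective]
    · rw [Set.ncard_univ, Nat.card_zmod]
    · intro i j h
      simpa using h
  unfold SimpleGraph.degN
  fin_cases k
  · convert key 0 using 2
    ext x
    rw [SimpleGraph.mem_neighborSet]
    simp only [Fin.zero_eta]
    rw [nbu]
    simp [eq_comm]
  · convert key 3 using 2
    ext x
    rw [SimpleGraph.mem_neighborSet]
    simp only [Fin.mk_one]
    rw [nbu']
    simp [eq_comm]

/-- edges -/
def edm (x : ZMod m × Fin 10) : Sym2 (Vm m) :=
  match x with
  | (i, 0) => s(Sum.inr 0, rv i 0)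
  | (i, 1) => s(rv i 0, rv i 1)
  | (i, 2) => s(rv i 1, rv i 2)
  | (i, 3) => s(rv i 2, rv (i + 1) 0)
  | (i, 4) => s(Sum.inr 1, rv i 3)
  | (i, 5) => s(rv i 3, rv i 4)
  | (i, 6) => s(rv i 4, rv i 5)
  | (i, 7) => s(rv i 5, rv (i + 1) 3)
  | (i, 8) => s(rv i 2, rv i 4)
  | (i, 9) => s(rv (i + 1) 1, rv i 5)

/-- left faces -/
def lf (x : ZMod m × Fin 10) : ZMod m × Fin 4 :=
  match x with
  | (i, 0) => (i, 0)
  | (i, 1) => (i, 0)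
  | (i, 2) => (i, 0)
  | (i, 3) => (i, 0)
  | (i, 4) => (i, 3)
  | (i, 5) => (i, 3)
  | (i, 6) => (i, 3)
  | (i, 7) => (i, 3)
  | (i, 8) => (i, 1)
  | (i, 9) => (i + 1, 1)

/-- right faces -/
def rf (x : ZMod m × Fin 10) : ZMod m × Fin 4 :=
  match x with
  | (i, 0) => (i - 1, 0)
  | (i, 1) => (i - 1, 2)
  | (i, 2) => (i, 1)
  | (i, 3) => (i, 2)
  | (i, 4) => (i - 1, 3)
  | (i, 5) => (i, 1)
  | (i, 6) => (i, 2)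
  | (i, 7) => (i + 1, 1)
  | (i, 8) => (i, 2)
  | (i, 9) => (i, 2)

lemma edm_inj : Function.Injective (edm (m := m)) := by
  rintro ⟨i, k⟩ ⟨j, k'⟩ h
  fin_cases k <;> fin_cases k' <;> simp [edm, Sym2.eq_iff] at h <;> simp [h]

lemma edm_edge (e : Sym2 (Vm m)) : e ∈ (Gm m).edgeSet ↔ ∃ x, edm x = e := by
  constructor
  · induction e with | _ u v =>
    intro h
    have h : (Gm m).Adj u v := h
    rcases u with ⟨i, t⟩ | k
    · fin_cases t
      · rcases (nb0 i v).1 h with rfl | rfl | rfl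
        · exact ⟨(i, 0), Sym2.eq_swap⟩
        · exact ⟨(i, 1), rfl⟩
        · exact ⟨(i - 1, 3), by simp [edm]⟩
      · rcases (nb1 i v).1 h with rfl | rfl | rfl
        · exact ⟨(i, 1), Sym2.eq_swap⟩
        · exact ⟨(i, 2), rfl⟩
        · exact ⟨(i - 1, 9), by simp [edm]⟩
      · rcases (nb2 i v).1 h with rfl | rfl | rfl
        · exact ⟨(i, 2), Sym2.eq_swap⟩
        · exact ⟨(i, 3), rfl⟩
        · exact ⟨(i, 8), rfl⟩
      · rcases (nb3 i v).1 h with rfl | rfl | rfl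
        · exact ⟨(i, 4), Sym2.eq_swap⟩
        · exact ⟨(i, 5), rfl⟩
        · exact ⟨(i - 1, 7), by simp [edm]⟩
      · rcases (nb4 i v).1 h with rfl | rfl | rfl
        · exact ⟨(i, 5), Sym2.eq_swap⟩
        · exact ⟨(i, 6), rfl⟩
        · exact ⟨(i, 8), Sym2.eq_swap⟩
      · rcases (nb5 i v).1 h with rfl | rfl | rfl
        · exact ⟨(i, 6), Sym2.eq_swap⟩
        · exact ⟨(i, 7), rfl⟩
        · exact ⟨(i, 9), Sym2.eq_swap⟩
    · fin_cases k
      · obtain ⟨i, rfl⟩ := (nbu v).1 h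
        exact ⟨(i, 0), rfl⟩
      · obtain ⟨i, rfl⟩ := (nbu' v).1 h
        exact ⟨(i, 4), rfl⟩
  · rintro ⟨⟨i, k⟩, rfl⟩
    fin_cases k
    · exact (nbu _).2 ⟨i, rfl⟩
    · exact (nb0 i (rv i 1)).2 (Or.inr (Or.inl rfl))
    · exact (nb1 i (rv i 2)).2 (Or.inr (Or.inl rfl))
    · exact (nb2 i (rv (i+1) 0)).2 (Or.inr (Or.inl rfl))
    · exact (nbu' _).2 ⟨i, rfl⟩
    · exact (nb3 i (rv i 4)).2 (Or.inr (Or.inl rfl))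
    · exact (nb4 i (rv i 5)).2 (Or.inr (Or.inl rfl))
    · exact (nb5 i (rv (i+1) 3)).2 (Or.inr (Or.inl rfl))
    · exact (nb2 i (rv i 4)).2 (Or.inr (Or.inr rfl))
    · exact (nb1 (i+1) (rv i 5)).2 (Or.inr (Or.inr (by simp)))

end
end PB


namespace PB
section
variable {m : ℕ} [NeZero m]

lemma bva {z : Ch (Vm m)} (hz : ∀ e, z e ≠ 0 → e ∈ (Gm m).edgeSet) (i : ZMod m) :
    bd z (rv i 0) = z (edm (i, 0)) + z (edm (i, 1)) + z (edm (i - 1, 3)) := by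
  rw [bd_three hz (nb0 i) (by simp) (by simp) (by simp)]
  simp only [edm, sub_add_cancel]
  rw [Sym2.eq_swap (a := rv i 0) (b := Sum.inr 0), Sym2.eq_swap (a := rv i 0) (b := rv (i - 1) 2)]

lemma bvb {z : Ch (Vm m)} (hz : ∀ e, z e ≠ 0 → e ∈ (Gm m).edgeSet) (i : ZMod m) :
    bd z (rv i 1) = z (edm (i, 1)) + z (edm (i, 2)) + z (edm (i - 1, 9)) := by
  rw [bd_three hz (nb1 i) (by simp) (by simp) (by simp)]
  simp only [edm, sub_add_cancel]
  rw [Sym2.eq_swap (a := rv i 1) (b := rv i 0)]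

lemma bvc {z : Ch (Vm m)} (hz : ∀ e, z e ≠ 0 → e ∈ (Gm m).edgeSet) (i : ZMod m) :
    bd z (rv i 2) = z (edm (i, 2)) + z (edm (i, 3)) + z (edm (i, 8)) := by
  rw [bd_three hz (nb2 i) (by simp) (by simp) (by simp)]
  simp only [edm]
  rw [Sym2.eq_swap (a := rv i 2) (b := rv i 1)]

lemma bva' {z : Ch (Vm m)} (hz : ∀ e, z e ≠ 0 → e ∈ (Gm m).edgeSet) (i : ZMod m) :
    bd z (rv i 3) = z (edm (i, 4)) + z (edm (i, 5)) + z (edm (i - 1, 7)) := by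
  rw [bd_three hz (nb3 i) (by simp) (by simp) (by simp)]
  simp only [edm, sub_add_cancel]
  rw [Sym2.eq_swap (a := rv i 3) (b := Sum.inr 1), Sym2.eq_swap (a := rv i 3) (b := rv (i - 1) 5)]

lemma bvb' {z : Ch (Vm m)} (hz : ∀ e, z e ≠ 0 → e ∈ (Gm m).edgeSet) (i : ZMod m) :
    bd z (rv i 4) = z (edm (i, 5)) + z (edm (i, 6)) + z (edm (i, 8)) := by
  rw [bd_three hz (nb4 i) (by simp) (by simp) (by simp)]
  simp only [edm]
  rw [Sym2.eq_swap (a := rv i 4) (b := rv i 3), Sym2.eq_swap (a := rv i 4) (b := rv i 2)]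

lemma bvc' {z : Ch (Vm m)} (hz : ∀ e, z e ≠ 0 → e ∈ (Gm m).edgeSet) (i : ZMod m) :
    bd z (rv i 5) = z (edm (i, 6)) + z (edm (i, 7)) + z (edm (i, 9)) := by
  rw [bd_three hz (nb5 i) (by simp) (by simp) (by simp)]
  simp only [edm]
  rw [Sym2.eq_swap (a := rv i 5) (b := rv i 4), Sym2.eq_swap (a := rv i 5) (b := rv (i + 1) 1)]

lemma bvh {z : Ch (Vm m)} (hz : ∀ e, z e ≠ 0 → e ∈ (Gm m).edgeSet) {k : Fin 2} {t : Fin 6}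
    (h : ∀ x, (Gm m).Adj (Sum.inr k) x ↔ ∃ i, x = rv i t) :
    bd z (Sum.inr k) = ∑ i : ZMod m, z s(Sum.inr k, rv i t) := by
  have hinj : Function.Injective (fun i : ZMod m => (rv i t : Vm m)) := by
    intro i j h
    simpa using h
  have : ∑ x ∈ Finset.univ.map ⟨fun i : ZMod m => (rv i t : Vm m), hinj⟩, z s(Sum.inr k, x) = bd z (Sum.inr k) := by
    apply Finset.sum_subset (Finset.subset_univ _)
    intro x _ hx
    by_contra hne
    obtain ⟨i, rfl⟩ := (h x).1 (hz _ hne)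
    apply hx
    simp
  rw [← this, Finset.sum_map]
  rfl

lemma bvu {z : Ch (Vm m)} (hz : ∀ e, z e ≠ 0 → e ∈ (Gm m).edgeSet) :
    bd z (Sum.inr 0) = ∑ i : ZMod m, z (edm (i, 0)) := bvh hz nbu

lemma bvu' {z : Ch (Vm m)} (hz : ∀ e, z e ≠ 0 → e ∈ (Gm m).edgeSet) :
    bd z (Sum.inr 1) = ∑ i : ZMod m, z (edm (i, 4)) := bvh hz nbu'

lemma sum_shift (f : ZMod m → ZMod 2) : ∑ i, (f i + f (i - 1)) = 0 := by
  have h : ∑ i, f (i - 1) = ∑ i, f i := (Equiv.subRight (1 : ZMod m)).sum_comp f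
  rw [Finset.sum_add_distrib, h]
  exact z2_self _

lemma dlt_supp (φ : ZMod m × Fin 4 → ZMod 2) : ∀ e, dlt (edm (m := m)) lf rf φ e ≠ 0 → e ∈ (Gm m).edgeSet := by
  intro e he
  rw [edm_edge]
  by_contra hne
  push Not at hne
  exact he (dlt_not lf rf φ hne)

lemma dlt_bd (φ : ZMod m × Fin 4 → ZMod 2) (v : Vm m) : bd (dlt (edm (m := m)) lf rf φ) v = 0 := by
  have hs := dlt_supp (m := m) φ
  have two : ∀ x y w : ZMod 2, (x + y) + (x + w) + (y + w) = 0 := by decide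
  have two1 : ∀ x y w : ZMod 2, (x + y) + (x + w) + (w + y) = 0 := by decide
  rcases v with ⟨i, t⟩ | k
  · fin_cases t
    · refine (bva hs i).trans ?_
      simp only [dlt_ed edm_inj, lf, rf]
      exact two _ _ _
    · refine (bvb hs i).trans ?_
      simp only [dlt_ed edm_inj, lf, rf, sub_add_cancel]
      exact two1 _ _ _
    · refine (bvc hs i).trans ?_
      simp only [dlt_ed edm_inj, lf, rf, sub_add_cancel]
      exact two _ _ _
    · refine (bva' hs i).trans ?_
      simp only [dlt_ed edm_inj, lf, rf, sub_add_cancel]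
      exact two _ _ _
    · refine (bvb' hs i).trans ?_
      simp only [dlt_ed edm_inj, lf, rf, sub_add_cancel]
      exact two _ _ _
    · refine (bvc' hs i).trans ?_
      simp only [dlt_ed edm_inj, lf, rf, sub_add_cancel]
      exact two1 _ _ _
  · fin_cases k
    · refine (bvu hs).trans ?_
      simp only [dlt_ed edm_inj, lf, rf]
      exact sum_shift fun i => φ (i, 0)
    · refine (bvu' hs).trans ?_
      simp only [dlt_ed edm_inj, lf, rf]
      exact sum_shift fun i => φ (i, 3)

lemma cyc_sol (hm : 1 < m) (f : ZMod m → ZMod 2) (hf : ∑ i, f i = 0) : ∃ τ : ZMod m → ZMod 2, ∀ i, f i = τ i + τ (i - 1) := by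
  have hr : ∑ k ∈ Finset.range m, f (k : ZMod m) = 0 := by
    rw [← hf]
    apply Finset.sum_bij (fun (k : ℕ) _ => (k : ZMod m))
    · simp
    · intro a ha b hb h
      rw [ZMod.natCast_eq_natCast_iff'] at h
      rwa [Nat.mod_eq_of_lt (Finset.mem_range.1 ha), Nat.mod_eq_of_lt (Finset.mem_range.1 hb)] at h
    · intro b _
      exact ⟨b.val, Finset.mem_range.2 (ZMod.val_lt b), by simp⟩
    · simp
  refine ⟨fun i => ∑ k ∈ Finset.range (i.val + 1), f (k : ZMod m), fun i => ?_⟩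
  have add4 : ∀ x y : ZMod 2, x = y + x + y := by decide
  by_cases hi : i = 0
  · subst hi
    have h1 : (0 - 1 : ZMod m).val + 1 = m := by
      obtain ⟨n, rfl⟩ : ∃ n, m = n + 1 := ⟨m - 1, by omega⟩
      rw [zero_sub, ZMod.val_neg_one]
    simp only
    rw [h1, hr]
    simp
  · have h1 : (i - 1).val + 1 = i.val := by
      have hv : 0 < i.val := by
        rw [Nat.pos_iff_ne_zero]
        simpa using hi
      have : Fact (1 < m) := ⟨hm⟩
      rw [ZMod.val_sub (by rw [ZMod.val_one]; omega), ZMod.val_one]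
      omega
    simp only
    rw [h1, Finset.sum_range_succ]
    simp only [ZMod.natCast_val, ZMod.cast_id', id]
    exact add4 _ _

lemma Gm_planar (hm : 1 < m) : (Gm m).IsPlanar := by
  refine faces_planar edm_inj edm_edge lf rf dlt_bd ?_
  intro z hz
  have hs := hz.1
  have hb := hz.2
  obtain ⟨τ, hτ⟩ := cyc_sol hm (fun i => z (edm (i, 0))) (by rw [← bvu hs]; exact hb _)
  have ea := fun i => (bva hs i).symm.trans (hb _)
  have eb := fun i => (bvb hs i).symm.trans (hb _)
  have ec := fun i => (bvc hs i).symm.trans (hb _)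
  have ea' := fun i => (bva' hs i).symm.trans (hb _)
  have eb' := fun i => (bvb' hs i).symm.trans (hb _)
  have ec' := fun i => (bvc' hs i).symm.trans (hb _)
  have fix : ∀ i (g : ZMod m → ZMod 2), g (i + 1 - 1) = g i := by intro i g; rw [add_sub_cancel_right]
  have q3 : ∀ x y w : ZMod 2, x + y + w = 0 → x = y + w := by decide
  have q2 : ∀ x y w : ZMod 2, x + y + w = 0 → y = x + w := by decide
  have q1 : ∀ x y w : ZMod 2, x + y + w = 0 → w = x + y := by decide
  have k1 : ∀ i, z (edm (i, 1)) = τ i + τ (i - 1) + z (edm (i - 1, 3)) := fun i => by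
    rw [q2 _ _ _ (ea i), ← hτ]
  have k8 : ∀ i, z (edm (i, 8)) = z (edm (i, 2)) + z (edm (i, 3)) := fun i => q1 _ _ _ (ec i)
  have k9' : ∀ i, z (edm (i - 1, 9)) = τ i + τ (i - 1) + z (edm (i - 1, 3)) + z (edm (i, 2)) := fun i => by
    rw [q1 _ _ _ (eb i), k1]
  have k9 : ∀ i, z (edm (i, 9)) = τ (i + 1) + τ i + z (edm (i, 3)) + z (edm (i + 1, 2)) := fun i => by
    have := k9' (i + 1)
    rwa [add_sub_cancel_right] at this
  have k5 : ∀ i, z (edm (i, 5)) = z (edm (i, 6)) + (z (edm (i, 2)) + z (edm (i, 3))) := fun i => by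
    rw [q3 _ _ _ (eb' i), k8]
  have k7 : ∀ i, z (edm (i, 7)) = z (edm (i, 6)) + (τ (i + 1) + τ i + z (edm (i, 3)) + z (edm (i + 1, 2))) := fun i => by
    rw [q2 _ _ _ (ec' i), k9]
  have k4 : ∀ i, z (edm (i, 4)) = z (edm (i, 6)) + (z (edm (i, 2)) + z (edm (i, 3))) +
      (z (edm (i - 1, 6)) + (τ i + τ (i - 1) + z (edm (i - 1, 3)) + z (edm (i, 2)))) := fun i => by
    rw [q3 _ _ _ (ea' i), k5, k7, sub_add_cancel]
  refine ⟨fun x => match x with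
    | (i, 0) => τ i
    | (i, 1) => τ i + z (edm (i, 2))
    | (i, 2) => τ i + z (edm (i, 3))
    | (i, 3) => τ i + z (edm (i, 3)) + z (edm (i, 6)), ?_⟩
  have two : (2 : ZMod 2) = 0 := rfl
  rintro ⟨i, k⟩
  fin_cases k
  · exact hτ i
  · refine (k1 i).trans ?_
    simp only [lf, rf]
    ring
  · simp only [lf, rf]
    change z (edm (i, 2)) = _
    linear_combination (- τ i) * two
  · change z (edm (i, 3)) = _
    simp only [lf, rf]
    linear_combination (- τ i) * two
  · refine (k4 i).trans ?_
    simp only [lf, rf]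
    linear_combination (z (edm (i, 2))) * two
  · refine (k5 i).trans ?_
    simp only [lf, rf]
    linear_combination (- τ i) * two
  · change z (edm (i, 6)) = _
    simp only [lf, rf]
    linear_combination (- τ i - z (edm (i, 3))) * two
  · refine (k7 i).trans ?_
    simp only [lf, rf]
    ring
  · refine (k8 i).trans ?_
    simp only [lf, rf]
    linear_combination (- τ i) * two
  · refine (k9 i).trans ?_
    simp only [lf, rf]
    ring

end
end PB


namespace PB
section
variable {m : ℕ} [NeZero m]

lemma cast_zero_of_lt (d : ℤ) (h : |d| < m) (h0 : (d : ZMod m) = 0) : d = 0 := by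
  rw [ZMod.intCast_zmod_eq_zero_iff_dvd] at h0
  exact Int.eq_zero_of_abs_lt_dvd h0 h

lemma vol_tri : ∀ s t p : Fin 6, ∀ d1 ∈ vol s t, ∀ d2 ∈ vol t p, ∀ d3 ∈ vol p s,
    |d1 + d2 + d3| < 4 ∧ d1 + d2 + d3 ≠ 0 := by decide

lemma vol_quad : ∀ s t p : Fin 6, ∀ d1 ∈ vol s t, ∀ d2 ∈ vol t p, ∀ q : Fin 6, ∀ d3 ∈ vol p q, ∀ d4 ∈ vol q s,
    |d1 + d2 + d3 + d4| < 4 ∧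
    (d1 + d2 + d3 + d4 = 0 → (s = p ∧ d1 + d2 = 0) ∨ (t = q ∧ d2 + d3 = 0)) := by decide

lemma hub_common {k : Fin 2} {y z w : Vm m} (h1 : (Gm m).Adj (Sum.inr k) y) (h2 : (Gm m).Adj (Sum.inr k) w)
    (h3 : (Gm m).Adj y z) (h4 : (Gm m).Adj w z) (hz : Sum.inr k ≠ z) (hyw : y ≠ w) : False := by
  fin_cases k
  · obtain ⟨i, rfl⟩ := (nbu y).1 h1
    obtain ⟨j, rfl⟩ := (nbu w).1 h2
    rcases (nb0 i z).1 h3 with rfl | rfl | rfl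
    · exact hz rfl
    · rcases (nb0 j _).1 h4 with h | h | h <;> simp_all
    · rcases (nb0 j _).1 h4 with h | h | h <;> simp_all
  · obtain ⟨i, rfl⟩ := (nbu' y).1 h1
    obtain ⟨j, rfl⟩ := (nbu' w).1 h2
    rcases (nb3 i z).1 h3 with rfl | rfl | rfl
    · exact hz rfl
    · rcases (nb3 j _).1 h4 with h | h | h <;> simp_all
    · rcases (nb3 j _).1 h4 with h | h | h <;> simp_all

lemma hub_tri {k : Fin 2} {y z : Vm m} (h1 : (Gm m).Adj (Sum.inr k) y) (h2 : (Gm m).Adj (Sum.inr k) z)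
    (h3 : (Gm m).Adj y z) : False := by
  fin_cases k
  · obtain ⟨i, rfl⟩ := (nbu y).1 h1
    obtain ⟨j, rfl⟩ := (nbu z).1 h2
    simpa using (nb0 i _).1 h3
  · obtain ⟨i, rfl⟩ := (nbu' y).1 h1
    obtain ⟨j, rfl⟩ := (nbu' z).1 h2
    simpa using (nb3 i _).1 h3

lemma no_tri (hm : 4 ≤ m) {x y z : Vm m} (h1 : (Gm m).Adj x y) (h2 : (Gm m).Adj y z) (h3 : (Gm m).Adj z x) : False := by
  rcases x with ⟨i, s⟩ | k
  · rcases y with ⟨j, t⟩ | k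
    · rcases z with ⟨l, p⟩ | k
      · obtain ⟨d1, e1, rfl⟩ := h1
        obtain ⟨d2, e2, rfl⟩ := h2
        obtain ⟨d3, e3, h⟩ := h3
        obtain ⟨a, b⟩ := vol_tri s t p d1 e1 d2 e2 d3 e3
        apply b
        apply cast_zero_of_lt (m := m) _ (by omega)
        push_cast
        linear_combination -h
      · exact hub_tri h3 h2.symm h1
    · exact hub_tri h2 h1.symm h3
  · exact hub_tri h1 h3.symm h2

lemma no_quad (hm : 4 ≤ m) {x y z w : Vm m} (h1 : (Gm m).Adj x y) (h2 : (Gm m).Adj y z) (h3 : (Gm m).Adj z w)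
    (h4 : (Gm m).Adj w x) (hxz : x ≠ z) (hyw : y ≠ w) : False := by
  rcases x with ⟨i, s⟩ | k
  · rcases y with ⟨j, t⟩ | k
    · rcases z with ⟨l, p⟩ | k
      · rcases w with ⟨n, q⟩ | k
        · obtain ⟨d1, e1, rfl⟩ := h1
          obtain ⟨d2, e2, rfl⟩ := h2
          obtain ⟨d3, e3, rfl⟩ := h3
          obtain ⟨d4, e4, h⟩ := h4
          obtain ⟨a, b⟩ := vol_quad s t p d1 e1 d2 e2 q d3 e3 d4 e4
          have h0 : d1 + d2 + d3 + d4 = 0 := by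
            apply cast_zero_of_lt (m := m) _ (by omega)
            push_cast
            linear_combination -h
          rcases b h0 with ⟨rfl, h5⟩ | ⟨rfl, h5⟩
          · apply hxz
            have : (d1 : ZMod m) + d2 = 0 := by exact_mod_cast congrArg (Int.cast : ℤ → ZMod m) h5
            rw [add_assoc, this, add_zero]
          · apply hyw
            have : (d2 : ZMod m) + d3 = 0 := by exact_mod_cast congrArg (Int.cast : ℤ → ZMod m) h5
            rw [add_assoc (i + (d1 : ZMod m)), this, add_zero]
        · exact hub_common h4 h3.symm h1 h2.symm hyw.symm hxz
      · exact hub_common h3 h2.symm h4 h1.symm hxz.symm hyw.symm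
    · exact hub_common h2 h1.symm h3 h4.symm hyw hxz.symm
  · exact hub_common h1 h4.symm h2 h3.symm hxz hyw

lemma Gm_girth (hm : 4 ≤ m) : (Gm m).girth = 5 := by
  set z := dlt (edm (m := m)) lf rf (pt ((0 : ZMod m), (0 : Fin 4))) with hzdef
  have hz : z ∈ Zc (Gm m) := ⟨dlt_supp _, dlt_bd _⟩
  have hne : z ≠ 0 := by
    intro h
    have h1 := congrFun h (edm (0, 2))
    rw [hzdef, dlt_ed edm_inj] at h1
    simp [lf, rf, pt] at h1
  have hle : (Gm m).girth ≤ 5 := by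
    refine (girth_le_supp hz hne).trans ?_
    refine (Finset.card_le_card (t := ({edm (0, 0), edm (0, 1), edm (0, 2), edm (0, 3), edm (1, 0)} : Finset _)) ?_).trans
      Finset.card_le_five
    intro e he
    have he := (Finset.mem_filter.1 he).2
    obtain ⟨⟨i, k⟩, rfl⟩ := (edm_edge e).1 (hz.1 e he)
    rw [hzdef, dlt_ed edm_inj] at he
    have key : (i = 0 ∧ k.val ≤ 3) ∨ (i = 1 ∧ k = 0) := by
      by_contra hcon
      apply he
      push Not at hcon
      obtain ⟨c1, c2⟩ := hcon
      fin_cases k <;> simp [lf, rf, pt, sub_eq_zero] at c1 c2 ⊢ <;> simp [c1, c2]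
    rcases key with ⟨rfl, hk⟩ | ⟨rfl, rfl⟩
    · have : k = 0 ∨ k = 1 ∨ k = 2 ∨ k = 3 := by omega
      rcases this with rfl | rfl | rfl | rfl <;> simp
    · simp
  have hac : ¬ (Gm m).IsAcyclic := by
    intro h
    obtain ⟨l, hl⟩ := exists_cyc hz hne
    obtain ⟨a, p, hp⟩ := hl.walk
    exact h _ (hp.mapLe (spt_le hz.1))
  obtain ⟨a, w, hw, hlen⟩ := SimpleGraph.exists_girth_eq_length.2 hac
  have h3 := hw.three_le_length
  refine le_antisymm hle ?_
  rw [hlen]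
  by_contra hlt
  have hnd := hw.support_nodup
  have hcase : w.length = 3 ∨ w.length = 4 := by omega
  cases w with
  | nil => simp at h3
  | cons h1 w =>
    cases w with
    | nil => simp at h3
    | cons h2 w =>
      cases w with
      | nil => simp at h3
      | cons h3' w =>
        cases w with
        | nil => exact no_tri hm h1 h2 h3'
        | cons h4 w =>
          cases w with
          | nil =>
            simp at hnd
            refine no_quad hm h1 h2 h3' h4 ?_ ?_
            · grind
            · grind
          | cons h5 w => 
            simp at hcase

end
end PB


/-- For `m ≥ 4` there exists a finite planar `({3,m};5)`-graph on
`6m+2` vertices, and every finite planar `({3,m};5)`-graph has at least `3m+11`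
vertices; hence `3m+11 ≤ n_p({3,m};5) ≤ 6m+2`. -/
theorem planar_three_m_five_bounds (m : ℕ) (hm : 4 ≤ m) :
    (6 * m + 2) ∈ bicageOrders 3 m 5 ∧
      ∀ n ∈ bicageOrders 3 m 5, 3 * m + 11 ≤ n := by
  have : NeZero m := ⟨by omega⟩
  refine ⟨⟨PB.Vm m, inferInstance, PB.Gm m, PB.Gm_planar (by omega), ⟨PB.Gm_girth hm, ?_,
    ⟨PB.rv 0 0, PB.deg_rv _ _⟩, ⟨Sum.inr 0, PB.deg_hub _⟩⟩, ?_⟩, ?_⟩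
  · rintro (⟨i, t⟩ | k)
    · exact Or.inl (PB.deg_rv i t)
    · exact Or.inr (PB.deg_hub k)
  · simp [ZMod.card]
    ring
  · rintro n ⟨V, _, G, hP, hB, hc⟩
    classical
    rw [← hc]
    exact PB.lower hm hP hB
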